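/- arXiv:2505.00166 — 2 statements merged into one kernel-verified Lean document; each statement's English description precedes it below -/
import Mathlib

section
/- Let {f_t}_{t∈[0,1]} be a family of germs of C^∞ functions (ℝ^n,0) → (ℝ,0) that is R-bi-Lipschitz trivial, and suppose that for every t ∈ [0,1] the germ f_t has finite order and μ(in(f_t)) < +∞. Then μ(f_t) = μ(f_0) for all t ∈ [0,1]. -/
open Filter Set Metric Topology Asymptotics

noncomputable section

set_option synthInstance.maxHeartbeats 1000000

/-- `ℝ^n` with the Euclidean structure. -/
abbrev Eucl (n : ℕ) : Type := EuclideanSpace ℝ (Fin n)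

variable {V W : Type*} [NormedAddCommGroup V] [NormedSpace ℝ V]
  [NormedAddCommGroup W] [NormedSpace ℝ W]

/-- `F` admits the `α`-derivative `H` at `x`:  `H` is continuous and for every direction `v`,
`F (x + t v) - F x = t ^ α • H v + o(t ^ α)` as `t → 0⁺`. -/
def HasAlphaDerivAt (F : V → W) (x : V) (α : ℝ) (H : V → W) : Prop :=
  Continuous H ∧ ∀ v : V,
    Tendsto (fun t : ℝ => (t ^ α)⁻¹ • (F (x + t • v) - F x - t ^ α • H v))
      (𝓝[>] (0 : ℝ)) (𝓝 0)

/-- `F` has order `α` at `x`: for every nonzero direction `v` the limit of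
`F (x + t v) / t ^ α` as `t → 0⁺` exists, and for at least one `v` it is nonzero. -/
def HasOrderAt (F : V → W) (x : V) (α : ℝ) : Prop :=
  (∀ v : V, v ≠ 0 → ∃ L : W,
      Tendsto (fun t : ℝ => (t ^ α)⁻¹ • F (x + t • v)) (𝓝[>] (0 : ℝ)) (𝓝 L)) ∧
  ∃ v : V, v ≠ 0 ∧ ∃ L : W, L ≠ 0 ∧
      Tendsto (fun t : ℝ => (t ^ α)⁻¹ • F (x + t • v)) (𝓝[>] (0 : ℝ)) (𝓝 L)

/-- `φ` is a lipeomorphism from `U` onto `V'`. -/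
def IsLipeoOn (φ : V → W) (U : Set V) (V' : Set W) : Prop :=
  Set.BijOn φ U V' ∧ ∃ c : ℝ, 1 ≤ c ∧ ∀ x ∈ U, ∀ y ∈ U,
    (1 / c) * ‖x - y‖ ≤ ‖φ x - φ y‖ ∧ ‖φ x - φ y‖ ≤ c * ‖x - y‖

/-- `d` is a pseudo-Lipschitz derivative of `φ` at `x`: along some sequence `t_j → 0⁺`,
`(φ (x + t_j v) - φ x) / t_j → d v` uniformly on compact sets. -/
def IsPseudoLipDerivAt (φ : V → V) (x : V) (d : V → V) : Prop :=
  ∃ t : ℕ → ℝ, (∀ j, 0 < t j) ∧ Tendsto t atTop (𝓝 (0 : ℝ)) ∧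
    ∀ K : Set V, IsCompact K →
      TendstoUniformlyOn (fun j v => (t j)⁻¹ • (φ (x + t j • v) - φ x)) d atTop K

/-- `F ∼ G` at `x₀`: asymptotic equivalence of `F` and `G` at `x₀`. -/
def AsympEquivAt (F G : V → W) (x₀ : V) : Prop :=
  ∃ c₁ c₂ : ℝ, 0 < c₁ ∧ 0 < c₂ ∧
    ∀ᶠ x in 𝓝 x₀, c₂ * ‖F x‖ ≤ ‖G x‖ ∧ ‖G x‖ ≤ c₁ * ‖F x‖

/-- `F ≈ G` at `x₀` via the lipeomorphism `φ`. -/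
def AsympLipEquivAtVia {V' : Type*} [NormedAddCommGroup V'] [NormedSpace ℝ V']
    (F : V → W) (G : V' → W) (φ : V → V') (x₀ : V) : Prop :=
  ∃ c : ℝ, 1 ≤ c ∧ ∀ᶠ x in 𝓝 x₀,
    (1 / c) * ‖F x - F x₀‖ ≤ ‖G (φ x) - G (φ x₀)‖ ∧
      ‖G (φ x) - G (φ x₀)‖ ≤ c * ‖F x - F x₀‖

/-- The degree-`m` term of the Taylor series of `F` at `0`; for a `C^∞` germ of
finite order `m` this is its initial part `in(F)`. -/
def inPart (F : V → ℝ) (m : ℕ) : V → ℝ :=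
  fun x => (m.factorial : ℝ)⁻¹ • iteratedFDeriv ℝ m F 0 (fun _ => x)

instance {α : Type*} (l : Filter α) {R : Type*} [CommSemiring R] :
    Algebra R (Filter.Germ l R) :=
  Algebra.ofModule
    (fun r x y => Filter.Germ.inductionOn₂ x y fun f g => by
      rw [← Filter.Germ.coe_smul, ← Filter.Germ.coe_mul, ← Filter.Germ.coe_mul,
        ← Filter.Germ.coe_smul, smul_mul_assoc])
    (fun r x y => Filter.Germ.inductionOn₂ x y fun f g => by
      rw [← Filter.Germ.coe_smul, ← Filter.Germ.coe_mul, ← Filter.Germ.coe_mul,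
        ← Filter.Germ.coe_smul, mul_smul_comm])

/-- `E_n`: the ℝ-algebra of germs at `0` of `C^∞` functions `ℝ^n → ℝ`, realized as a
subalgebra of the algebra of germs at `0` of functions `ℝ^n → ℝ`. -/
def smoothGerms (n : ℕ) : Subalgebra ℝ (Filter.Germ (𝓝 (0 : Eucl n)) ℝ) where
  carrier := {γ | ∃ f : Eucl n → ℝ, ContDiff ℝ (⊤ : ℕ∞) f ∧ γ = ↑f}
  add_mem' := by
    rintro a b ⟨f, hf, rfl⟩ ⟨g, hg, rfl⟩
    exact ⟨f + g, hf.add hg, rfl⟩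
  mul_mem' := by
    rintro a b ⟨f, hf, rfl⟩ ⟨g, hg, rfl⟩
    exact ⟨f * g, hf.mul hg, rfl⟩
  algebraMap_mem' := fun r => ⟨fun _ => r, contDiff_const, by
    rw [Algebra.algebraMap_eq_smul_one, ← Filter.Germ.coe_one, ← Filter.Germ.coe_smul]
    congr 1
    funext x
    simp⟩

/-- The Jacobian ideal `J(f) ⊆ E_n`, generated by the germs at `0` of the partial
derivatives `∂f/∂x_1, …, ∂f/∂x_n`. -/
def jacobianIdeal (n : ℕ) (f : Eucl n → ℝ) : Ideal (smoothGerms n) :=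
  Ideal.span {γ | ∃ i : Fin n,
    (γ : Filter.Germ (𝓝 (0 : Eucl n)) ℝ) =
      ↑(fun x => fderiv ℝ f x (EuclideanSpace.single i 1))}

/-- The real Milnor number `μ(f) = dim_ℝ E_n / J(f)`, as a cardinal. -/
def milnor (n : ℕ) (f : Eucl n → ℝ) : Cardinal :=
  Module.rank ℝ (smoothGerms n ⧸ jacobianIdeal n f)

/-- `φ` is a germ at `0` of a lipeomorphism `(ℝ^n, 0) → (ℝ^n, 0)`. -/
def IsLipeoGermAt {n : ℕ} (φ : Eucl n → Eucl n) : Prop :=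
  φ 0 = 0 ∧ ∃ U V : Set (Eucl n), U ∈ 𝓝 (0 : Eucl n) ∧ V ∈ 𝓝 (0 : Eucl n) ∧
    IsLipeoOn φ U V

section HelperPartC
open MvPolynomial

/-- `z` is a nonzerodivisor modulo `I`. -/
def RegMod {R : Type*} [CommRing R] (I : Ideal R) (z : R) : Prop := ∀ a, z * a ∈ I → a ∈ I

/-- `zs` is a weakly regular sequence modulo `I`. -/
def RegSeq {R : Type*} [CommRing R] : Ideal R → List R → Prop
  | _, [] => True
  | I, z :: zs => RegMod I z ∧ RegSeq (I ⊔ Ideal.span {z}) zs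

/-- `y` is regular modulo each of the partial ideals of `zs` (including the full one). -/
def RegAll {R : Type*} [CommRing R] (y : R) : Ideal R → List R → Prop
  | I, [] => RegMod I y
  | I, z :: zs => RegMod I y ∧ RegAll y (I ⊔ Ideal.span {z}) zs

/-- The ideal generated by `I` and `zs`. -/
def listIdeal {R : Type*} [CommRing R] : Ideal R → List R → Ideal R
  | I, [] => I
  | I, z :: zs => listIdeal (I ⊔ Ideal.span {z}) zs

theorem listIdeal_le {R : Type*} [CommRing R] {J : Ideal R} (zs : List R) :
    ∀ I : Ideal R, I ≤ J → (∀ z ∈ zs, z ∈ J) → listIdeal I zs ≤ J := by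
  induction zs with
  | nil => intro I h _; exact h
  | cons z zs ih =>
    intro I h hz
    refine ih _ (sup_le h ?_) (fun w hw => hz w (by simp [hw]))
    rw [Ideal.span_singleton_le_iff_mem]
    exact hz z (by simp)

theorem regMod_swap {R : Type*} [CommRing R] {I : Ideal R} {y z : R} (hz : RegMod I z)
    (hy : RegMod (I ⊔ Ideal.span {z}) y) : RegMod (I ⊔ Ideal.span {y}) z := by
  intro a ha
  rw [sup_comm, Ideal.mem_span_singleton_sup] at ha
  obtain ⟨b, i, hi, h⟩ := ha
  have h1 : y * b ∈ I ⊔ Ideal.span {z} := by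
    rw [sup_comm, Ideal.mem_span_singleton_sup]
    exact ⟨a, -i, I.neg_mem hi, by linear_combination -h⟩
  have h2 := hy _ h1
  rw [sup_comm, Ideal.mem_span_singleton_sup] at h2
  obtain ⟨c, j, hj, h3⟩ := h2
  have h4 : z * (a - y * c) ∈ I := by
    have : z * (a - y * c) = i + y * j := by
      subst h3; linear_combination -h
    rw [this]
    exact I.add_mem hi (I.mul_mem_left _ hj)
  have h5 := hz _ h4
  rw [sup_comm, Ideal.mem_span_singleton_sup]
  exact ⟨c, _, h5, by ring⟩

theorem regSeq_of_regAll {R : Type*} [CommRing R] (y : R) (zs : List R) :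
    ∀ I : Ideal R, RegSeq I zs → RegAll y I zs → RegSeq (I ⊔ Ideal.span {y}) zs := by
  induction zs with
  | nil => intro I _ _; trivial
  | cons z zs ih =>
    intro I h1 h2
    refine ⟨regMod_swap h1.1 ?_, ?_⟩
    · cases zs with
      | nil => exact h2.2
      | cons w ws => exact h2.2.1
    · have := ih _ h1.2 h2.2
      rwa [sup_right_comm] at this

theorem regAll_head {R : Type*} [CommRing R] {y : R} {I : Ideal R} {zs : List R}
    (h : RegAll y I zs) : RegMod I y := by
  cases zs with
  | nil => exact h
  | cons w ws => exact h.1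

theorem regSeq_append_left {R : Type*} [CommRing R] (zs ws : List R) :
    ∀ I : Ideal R, RegSeq I (zs ++ ws) → RegSeq I zs := by
  induction zs with
  | nil => intro I _; trivial
  | cons z zs ih => intro I h; exact ⟨h.1, ih _ h.2⟩

theorem avoid_one {n : ℕ} (p : Fin n → MvPolynomial (Fin n) ℝ) (K : ℕ)
    (m : Ideal (MvPolynomial (Fin n) ℝ))
    (hK : m ^ K ≤ Ideal.span (Set.range p)) (I : Ideal (MvPolynomial (Fin n) ℝ))
    (z : MvPolynomial (Fin n) ℝ) (hz : z ∈ m) (hreg : RegMod I z) :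
    ∃ S : Finset (Subspace ℝ (Fin n → ℝ)), ⊤ ∉ S ∧ ∀ c : Fin n → ℝ,
      c ∉ ⋃ s ∈ S, (s : Set (Fin n → ℝ)) → RegMod I (∑ i, c i • p i) := by
  classical
  let R := MvPolynomial (Fin n) ℝ
  have hfin := associatedPrimes.finite R (R ⧸ I)
  have hU := biUnion_associatedPrimes_eq_zero_divisors R (R ⧸ I)
  let L : (Fin n → ℝ) →ₗ[ℝ] R := Fintype.linearCombination ℝ p
  refine ⟨hfin.toFinset.image (fun P => (P.restrictScalars ℝ).comap L), ?_, ?_⟩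
  · intro h
    simp only [Finset.mem_image, Set.Finite.mem_toFinset] at h
    obtain ⟨P, hP, hPt⟩ := h
    have hprime : P.IsPrime := hP.isPrime
    have hp : ∀ i, p i ∈ P := by
      intro i
      have : (Pi.single i 1 : Fin n → ℝ) ∈ (P.restrictScalars ℝ).comap L := by rw [hPt]; trivial
      simpa [L] using this
    have hle : m ≤ P := by
      refine hprime.le_of_pow_le (n := K) (hK.trans ?_)
      rw [Ideal.span_le]
      rintro _ ⟨i, rfl⟩
      exact hp i
    have hzP : z ∈ ⋃ p ∈ associatedPrimes R (R ⧸ I), (p : Set R) := by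
      simp only [Set.mem_iUnion]
      exact ⟨P, hP, hle hz⟩
    rw [hU] at hzP
    obtain ⟨x, hx, hzx⟩ := hzP
    obtain ⟨x, rfl⟩ := Ideal.Quotient.mk_surjective x
    apply hx
    rw [Ideal.Quotient.eq_zero_iff_mem]
    apply hreg
    rw [← Ideal.Quotient.eq_zero_iff_mem]
    exact hzx
  · intro c hc a ha
    by_contra hna
    apply hc
    have : (∑ i, c i • p i) ∈ ⋃ p ∈ associatedPrimes R (R ⧸ I), (p : Set R) := by
      rw [hU]
      refine ⟨Ideal.Quotient.mk I a, ?_, ?_⟩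
      · rwa [Ne, Ideal.Quotient.eq_zero_iff_mem]
      · rw [← Ideal.Quotient.eq_zero_iff_mem] at ha
        exact ha
    simp only [Set.mem_iUnion] at this ⊢
    obtain ⟨P, hP, h⟩ := this
    refine ⟨(P.restrictScalars ℝ).comap L, ?_, ?_⟩
    · simp only [Finset.mem_image, Set.Finite.mem_toFinset]
      exact ⟨P, hP, rfl⟩
    · simpa [L, Fintype.linearCombination_apply] using h

theorem avoid_all {n : ℕ} (p : Fin n → MvPolynomial (Fin n) ℝ) (K : ℕ)
    (m : Ideal (MvPolynomial (Fin n) ℝ))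
    (hK : m ^ K ≤ Ideal.span (Set.range p)) (w : MvPolynomial (Fin n) ℝ)
    (zs : List (MvPolynomial (Fin n) ℝ)) : ∀ (I : Ideal (MvPolynomial (Fin n) ℝ)),
    (∀ z ∈ zs ++ [w], z ∈ m) → RegSeq I (zs ++ [w]) →
    ∃ S : Finset (Subspace ℝ (Fin n → ℝ)), ⊤ ∉ S ∧ ∀ c : Fin n → ℝ,
      c ∉ ⋃ s ∈ S, (s : Set (Fin n → ℝ)) → RegAll (∑ i, c i • p i) I zs := by
  classical
  induction zs with
  | nil =>
    intro I hm hr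
    exact avoid_one p K m hK I w (hm w (by simp)) hr.1
  | cons z zs ih =>
    intro I hm hr
    obtain ⟨S1, h1, h1'⟩ := avoid_one p K m hK I z (hm z (by simp)) hr.1
    obtain ⟨S2, h2, h2'⟩ := ih (I ⊔ Ideal.span {z}) (fun x hx => hm x (by simp at hx ⊢; tauto)) hr.2
    refine ⟨S1 ∪ S2, by simp [h1, h2], fun c hc => ⟨h1' c ?_, h2' c ?_⟩⟩
    · intro h; apply hc
      simp only [Set.mem_iUnion, Finset.mem_union] at h ⊢
      obtain ⟨s, hs, h⟩ := h
      exact ⟨s, Or.inl hs, h⟩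
    · intro h; apply hc
      simp only [Set.mem_iUnion, Finset.mem_union] at h ⊢
      obtain ⟨s, hs, h⟩ := h
      exact ⟨s, Or.inr hs, h⟩

theorem exchange_step {n : ℕ} (p : Fin n → MvPolynomial (Fin n) ℝ) (K : ℕ)
    (m : Ideal (MvPolynomial (Fin n) ℝ))
    (hK : m ^ K ≤ Ideal.span (Set.range p)) (w : MvPolynomial (Fin n) ℝ)
    (zs : List (MvPolynomial (Fin n) ℝ)) 
    (hm : ∀ z ∈ zs ++ [w], z ∈ m) (hr : RegSeq ⊥ (zs ++ [w])) :
    ∃ c : Fin n → ℝ, RegSeq ⊥ ((∑ i, c i • p i) :: zs) := by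
  obtain ⟨S, hS, h⟩ := avoid_all p K m hK w zs ⊥ hm hr
  have := Subspace.biUnion_ne_univ_of_top_notMem hS
  rw [Set.ne_univ_iff_exists_notMem] at this
  obtain ⟨c, hc⟩ := this
  have h1 := h c hc
  exact ⟨c, regAll_head h1, regSeq_of_regAll _ _ _ (regSeq_append_left _ _ _ hr) h1⟩

theorem exchange {n : ℕ} (p : Fin n → MvPolynomial (Fin n) ℝ) (K : ℕ)
    (m : Ideal (MvPolynomial (Fin n) ℝ)) (hp : ∀ i, p i ∈ m)
    (hK : m ^ K ≤ Ideal.span (Set.range p)) (xs : List (MvPolynomial (Fin n) ℝ))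
    (hm : ∀ z ∈ xs, z ∈ m) (hr : RegSeq ⊥ xs) :
    ∀ r ≤ xs.length, ∃ ys : List (MvPolynomial (Fin n) ℝ), ys.length = r ∧
      (∀ y ∈ ys, ∃ c : Fin n → ℝ, y = ∑ i, c i • p i) ∧
      RegSeq ⊥ (ys ++ xs.take (xs.length - r)) := by
  intro r
  induction r with
  | zero => intro _; exact ⟨[], rfl, by simp, by simpa using hr⟩
  | succ r ih =>
    intro hle
    obtain ⟨ys, hl, hc, hreg⟩ := ih (by omega)
    have hk : xs.length - r = (xs.length - (r+1)) + 1 := by omega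
    rw [hk, List.take_add_one, List.getElem?_eq_getElem (by omega), Option.toList_some,
      ← List.append_assoc] at hreg
    obtain ⟨c, hc'⟩ := exchange_step p K m hK _ _ (by
      intro z hz
      rw [List.mem_append, List.mem_append, List.mem_singleton] at hz
      rcases hz with (hz | hz) | hz
      · obtain ⟨c, rfl⟩ := hc z hz
        exact Ideal.sum_mem _ fun i _ => Submodule.smul_of_tower_mem _ _ (hp i)
      · exact hm z (List.mem_of_mem_take hz)
      · rw [hz]; exact hm _ (List.getElem_mem _)) hreg
    refine ⟨(∑ i, c i • p i) :: ys, by simp [hl], ?_, hc'⟩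
    intro y hy
    rcases List.mem_cons.1 hy with rfl | hy
    · exact ⟨c, rfl⟩
    · exact hc y hy

theorem regSeq_X {n : ℕ} (l : List (Fin n)) : ∀ s : Set (Fin n), l.Nodup → (∀ i ∈ l, i ∉ s) →
    RegSeq (Ideal.span ((X : Fin n → MvPolynomial (Fin n) ℝ) '' s)) (l.map X) := by
  induction l with
  | nil => intro s _ _; trivial
  | cons j l ih =>
    intro s hl hs
    rw [List.nodup_cons] at hl
    refine ⟨?_, ?_⟩
    · intro a ha
      rw [mem_ideal_span_X_image] at ha ⊢
      intro mm hmm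
      obtain ⟨i, hi, h⟩ := ha (mm + Finsupp.single j 1) (by
        rw [mem_support_iff, mul_comm, coeff_mul_X]
        exact mem_support_iff.1 hmm)
      refine ⟨i, hi, ?_⟩
      have : j ≠ i := by rintro rfl; exact hs j (by simp) hi
      simpa [Finsupp.single_apply, this] using h
    · have := ih (insert j s) hl.2 (by
        intro i hi
        simp only [Set.mem_insert_iff, not_or]
        exact ⟨by rintro rfl; exact hl.1 hi, hs i (by simp [hi])⟩)
      rwa [Set.image_insert_eq, Ideal.span_insert, sup_comm] at this

theorem listIdeal_X {n : ℕ} (l : List (Fin n)) : ∀ s : Set (Fin n), 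
    listIdeal (Ideal.span ((X : Fin n → MvPolynomial (Fin n) ℝ) '' s)) (l.map X) =
      Ideal.span (X '' (s ∪ {i | i ∈ l})) := by
  induction l with
  | nil => intro s; simp [listIdeal]
  | cons j l ih =>
    intro s
    have := ih (insert j s)
    rw [Set.image_insert_eq, Ideal.span_insert, sup_comm] at this
    rw [List.map_cons, listIdeal, this]
    congr 2
    ext i; simp; tauto
end HelperPartC

section HelperPartC2
open MvPolynomial

/-- `I` is stable under taking homogeneous components. -/
def HomogIdeal {n : ℕ} (I : Ideal (MvPolynomial (Fin n) ℝ)) : Prop :=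
  ∀ a ∈ I, ∀ t, homogeneousComponent t a ∈ I

theorem homogeneousComponent_mul_hom {n : ℕ} {z : MvPolynomial (Fin n) ℝ} {d : ℕ}
    (hz : z.IsHomogeneous d) (b : MvPolynomial (Fin n) ℝ) (t : ℕ) :
    homogeneousComponent t (z * b) =
      if d ≤ t then z * homogeneousComponent (t - d) b else 0 := by
  let _ := MvPolynomial.gradedAlgebra (σ := Fin n) (R := ℝ)
  have := DirectSum.coe_decompose_mul_of_left_mem (homogeneousSubmodule (Fin n) ℝ) (a := z)
    (b := b) (i := d) t ((mem_homogeneousSubmodule _ _).2 hz)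
  have e : ∀ (q : MvPolynomial (Fin n) ℝ) (i : ℕ),
    ((DirectSum.decompose (homogeneousSubmodule (Fin n) ℝ) q i : MvPolynomial (Fin n) ℝ)) =
      homogeneousComponent i q := fun q i => decomposition.decompose'_apply q i
  rw [e, e] at this
  exact this

theorem homogIdeal_sup {n : ℕ} {I : Ideal (MvPolynomial (Fin n) ℝ)} (hI : HomogIdeal I)
    {z : MvPolynomial (Fin n) ℝ} {d : ℕ} (hz : z.IsHomogeneous d) :
    HomogIdeal (I ⊔ Ideal.span {z}) := by
  intro a ha t
  rw [sup_comm, Ideal.mem_span_singleton_sup] at ha ⊢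
  obtain ⟨b, i, hi, rfl⟩ := ha
  rw [map_add, mul_comm, homogeneousComponent_mul_hom hz]
  by_cases h : d ≤ t
  · exact ⟨homogeneousComponent (t - d) b, _, hI i hi t, by rw [if_pos h, mul_comm]⟩
  · exact ⟨0, _, hI i hi t, by rw [if_neg h, zero_mul]⟩

instance finHomog (n t : ℕ) : Module.Finite ℝ (homogeneousSubmodule (Fin n) ℝ t) :=
  Module.Finite.iff_fg.2 (homogeneousSubmodule_fg (Fin n) ℝ t)

/-- Degree-`t` part of `I`. -/
noncomputable def gradedPart {n : ℕ} (I : Ideal (MvPolynomial (Fin n) ℝ)) (t : ℕ) :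
    Submodule ℝ (MvPolynomial (Fin n) ℝ) :=
  I.restrictScalars ℝ ⊓ homogeneousSubmodule (Fin n) ℝ t

instance finGradedPart {n : ℕ} (I : Ideal (MvPolynomial (Fin n) ℝ)) (t : ℕ) :
    Module.Finite ℝ (gradedPart I t) :=
  Submodule.finiteDimensional_of_le (inf_le_right)

/-- Hilbert function of the quotient by `I`. -/
noncomputable def hilb {n : ℕ} (I : Ideal (MvPolynomial (Fin n) ℝ)) (t : ℕ) : ℤ :=
  (Module.finrank ℝ (homogeneousSubmodule (Fin n) ℝ t) : ℤ) - Module.finrank ℝ (gradedPart I t)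

theorem hilb_anti {n : ℕ} {I J : Ideal (MvPolynomial (Fin n) ℝ)} (h : I ≤ J) (t : ℕ) :
    hilb J t ≤ hilb I t := by
  unfold hilb
  have : Module.finrank ℝ (gradedPart I t) ≤ Module.finrank ℝ (gradedPart J t) :=
    Submodule.finrank_mono (inf_le_inf_right _ h)
  omega

theorem hilb_nonneg {n : ℕ} (I : Ideal (MvPolynomial (Fin n) ℝ)) (t : ℕ) :
    0 ≤ hilb I t := by
  unfold hilb
  have : Module.finrank ℝ (gradedPart I t) ≤ Module.finrank ℝ (homogeneousSubmodule (Fin n) ℝ t) :=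
    Submodule.finrank_mono (inf_le_right)
  omega

theorem hilb_sup_lt {n : ℕ} {I : Ideal (MvPolynomial (Fin n) ℝ)} (hI : HomogIdeal I)
    {z : MvPolynomial (Fin n) ℝ} {d : ℕ} (hz : z.IsHomogeneous d) {t : ℕ} (ht : t < d) :
    hilb (I ⊔ Ideal.span {z}) t = hilb I t := by
  have : gradedPart (I ⊔ Ideal.span {z}) t = gradedPart I t := by
    apply le_antisymm
    · rintro a ⟨ha, hat⟩
      refine ⟨?_, hat⟩
      have ha' : a ∈ I ⊔ Ideal.span {z} := ha
      rw [sup_comm, Ideal.mem_span_singleton_sup] at ha'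
      obtain ⟨b, i, hi, rfl⟩ := ha'
      have h2 := homogeneousComponent_of_mem (m := t) (n := t) hat
      rw [if_pos rfl, map_add, mul_comm, homogeneousComponent_mul_hom hz, if_neg (by omega),
        zero_add] at h2
      change b * z + i ∈ I
      rw [mul_comm, ← h2]
      exact hI i hi t
    · exact inf_le_inf_right _ (fun a ha => Ideal.mem_sup_left ha)
  unfold hilb
  rw [this]

theorem hilb_sup {n : ℕ} {I : Ideal (MvPolynomial (Fin n) ℝ)} (hI : HomogIdeal I)
    {z : MvPolynomial (Fin n) ℝ} {d : ℕ} (hz : z.IsHomogeneous d) (hz0 : z ≠ 0)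
    (hreg : RegMod I z) (t : ℕ) :
    hilb (I ⊔ Ideal.span {z}) (t + d) = hilb I (t + d) - hilb I t := by
  let M : MvPolynomial (Fin n) ℝ →ₗ[ℝ] MvPolynomial (Fin n) ℝ := LinearMap.mulLeft ℝ z
  have hMinj : Function.Injective M := fun a b hab => mul_left_cancel₀ hz0 hab
  have hdeg : ∀ b ∈ homogeneousSubmodule (Fin n) ℝ t,
      z * b ∈ homogeneousSubmodule (Fin n) ℝ (t + d) := by
    intro b hb
    rw [add_comm]
    exact hz.mul hb
  have h1 : gradedPart (I ⊔ Ideal.span {z}) (t + d) =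
      gradedPart I (t + d) ⊔ (homogeneousSubmodule (Fin n) ℝ t).map M := by
    apply le_antisymm
    · rintro a ⟨ha, hat⟩
      have ha' : a ∈ I ⊔ Ideal.span {z} := ha
      rw [sup_comm, Ideal.mem_span_singleton_sup] at ha'
      obtain ⟨b, i, hi, rfl⟩ := ha'
      have h2 := homogeneousComponent_of_mem (m := t + d) (n := t + d) hat
      rw [if_pos rfl, map_add, mul_comm, homogeneousComponent_mul_hom hz, if_pos (by omega),
        Nat.add_sub_cancel, add_comm] at h2
      rw [mul_comm, ← h2]
      refine Submodule.add_mem_sup ⟨hI i hi _, homogeneousComponent_mem _ _⟩ ?_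
      exact Submodule.mem_map_of_mem (f := M) (homogeneousComponent_mem t b)
    · refine sup_le (inf_le_inf_right _ (fun a ha => Ideal.mem_sup_left ha)) ?_
      rintro _ ⟨b, hb, rfl⟩
      refine ⟨?_, hdeg b hb⟩
      change z * b ∈ I ⊔ Ideal.span {z}
      exact Ideal.mul_mem_right _ _ (Ideal.mem_sup_right (Ideal.mem_span_singleton_self z))
  have h2 : gradedPart I (t + d) ⊓ (homogeneousSubmodule (Fin n) ℝ t).map M =
      (gradedPart I t).map M := by
    apply le_antisymm
    · rintro _ ⟨⟨ha, _⟩, b, hb, rfl⟩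
      exact ⟨b, ⟨hreg _ ha, hb⟩, rfl⟩
    · rintro _ ⟨b, ⟨hb, hbt⟩, rfl⟩
      exact ⟨⟨Ideal.mul_mem_left I _ hb, hdeg b hbt⟩, b, hbt, rfl⟩
  have h3 := Submodule.finrank_sup_add_finrank_inf_eq (gradedPart I (t + d))
    ((homogeneousSubmodule (Fin n) ℝ t).map M)
  have h4 := (Submodule.equivMapOfInjective M hMinj (gradedPart I t)).finrank_eq
  have h5 := (Submodule.equivMapOfInjective M hMinj (homogeneousSubmodule (Fin n) ℝ t)).finrank_eq
  rw [← h1, h2, ← h4, ← h5] at h3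
  unfold hilb
  omega

/-- Hilbert series. -/
noncomputable def hilbSeries {n : ℕ} (I : Ideal (MvPolynomial (Fin n) ℝ)) : PowerSeries ℤ :=
  PowerSeries.mk (hilb I)

theorem hilbSeries_sup {n : ℕ} {I : Ideal (MvPolynomial (Fin n) ℝ)} (hI : HomogIdeal I)
    {z : MvPolynomial (Fin n) ℝ} {d : ℕ} (hz : z.IsHomogeneous d) (hz0 : z ≠ 0)
    (hreg : RegMod I z) :
    hilbSeries (I ⊔ Ideal.span {z}) = (1 - PowerSeries.X ^ d) * hilbSeries I := by
  ext t
  rw [sub_mul, one_mul, map_sub, PowerSeries.coeff_X_pow_mul']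
  simp only [hilbSeries, PowerSeries.coeff_mk]
  by_cases h : d ≤ t
  · obtain ⟨s, rfl⟩ := Nat.exists_eq_add_of_le h
    rw [if_pos h, add_comm d s, Nat.add_sub_cancel]
    exact hilb_sup hI hz hz0 hreg s
  · rw [if_neg h, sub_zero]
    exact hilb_sup_lt hI hz (by omega)

theorem hilbSeries_list {n : ℕ} {d : ℕ} (zs : List (MvPolynomial (Fin n) ℝ)) :
    ∀ {I : Ideal (MvPolynomial (Fin n) ℝ)}, HomogIdeal I → (∀ z ∈ zs, z.IsHomogeneous d) →
    (∀ z ∈ zs, z ∈ homogeneousSubmodule (Fin n) ℝ d) → listIdeal I zs ≠ ⊤ →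
    RegSeq I zs →
    hilbSeries (listIdeal I zs) = (1 - PowerSeries.X ^ d) ^ zs.length * hilbSeries I := by
  induction zs with
  | nil => intro I _ _ _ _ _; simp [listIdeal]
  | cons z zs ih =>
    intro I hI hz hz' hne hr
    rw [listIdeal, ih (homogIdeal_sup hI (hz z (by simp))) (fun w hw => hz w (by simp [hw]))
      (fun w hw => hz' w (by simp [hw])) hne hr.2, hilbSeries_sup hI (hz z (by simp)) ?_ hr.1]
    · rw [List.length_cons, pow_succ, mul_assoc]
    · rintro rfl
      apply hne
      have h1 : (1 : MvPolynomial (Fin n) ℝ) ∈ I := hr.1 1 (by simp)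
      rw [Ideal.eq_top_iff_one, listIdeal]
      have : ∀ (ws : List (MvPolynomial (Fin n) ℝ)) (J : Ideal (MvPolynomial (Fin n) ℝ)),
          J ≤ listIdeal J ws := by
        intro ws
        induction ws with
        | nil => intro J; exact le_rfl
        | cons w ws ih => intro J; exact le_sup_left.trans (ih _)
      exact this _ _ (Ideal.mem_sup_left h1)

theorem gradedPart_X {n : ℕ} (t : ℕ) : 
    hilb (Ideal.span (Set.range (X : Fin n → MvPolynomial (Fin n) ℝ))) t = if t = 0 then 1 else 0 := by
  have key : ∀ x : MvPolynomial (Fin n) ℝ, x ∈ Ideal.span (Set.range (X : Fin n → MvPolynomial (Fin n) ℝ)) ↔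
      ∀ m ∈ x.support, ∃ i, m i ≠ 0 := by
    intro x
    rw [← Set.image_univ, mem_ideal_span_X_image]
    simp
  split_ifs with h
  · subst h
    have h1 : gradedPart (Ideal.span (Set.range (X : Fin n → MvPolynomial (Fin n) ℝ))) 0 = ⊥ := by
      rw [eq_bot_iff]
      rintro a ⟨ha, h0⟩
      replace ha := (key a).1 ha
      rw [Submodule.mem_bot]
      ext mm
      rw [coeff_zero]
      by_contra hmm
      obtain ⟨i, hi⟩ := ha mm (mem_support_iff.2 hmm)
      have : mm.degree = 0 := by
        by_contra hne
        exact hmm (IsHomogeneous.coeff_eq_zero h0 hne)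
      rw [Finsupp.degree_eq_zero_iff] at this
      simp [this] at hi
    unfold hilb
    rw [h1, finrank_bot, homogeneousSubmodule_zero, Submodule.one_eq_range]
    rw [LinearMap.finrank_range_of_inj]
    · simp
    · intro a b hab
      exact C_injective _ _ hab
  · have h1 : gradedPart (Ideal.span (Set.range (X : Fin n → MvPolynomial (Fin n) ℝ))) t =
      homogeneousSubmodule (Fin n) ℝ t := by
      apply le_antisymm inf_le_right
      intro a ha
      refine ⟨(key a).2 ?_, ha⟩
      intro mm hmm
      by_contra hcon
      push Not at hcon
      have h2 : mm = 0 := by ext i; simp [hcon i]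
      apply h
      have := IsHomogeneous.degree_eq_sum_deg_support ha hmm
      rw [h2] at this
      simpa using this
    unfold hilb
    rw [h1, sub_self]

theorem hilbSeries_X {n : ℕ} :
    hilbSeries (Ideal.span (Set.range (X : Fin n → MvPolynomial (Fin n) ℝ))) = 1 := by
  ext t
  simp only [hilbSeries, PowerSeries.coeff_mk, gradedPart_X, PowerSeries.coeff_one]

theorem X_span_ne_top {n : ℕ} :
    Ideal.span (Set.range (X : Fin n → MvPolynomial (Fin n) ℝ)) ≠ ⊤ := by
  intro h
  have h1 := gradedPart_X (n := n) 0
  have h2 := (hilb_anti (n := n) (le_of_eq h.symm) 0)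
  rw [h] at h1
  have : gradedPart (⊤ : Ideal (MvPolynomial (Fin n) ℝ)) 0 = homogeneousSubmodule (Fin n) ℝ 0 := by
    apply le_antisymm inf_le_right
    exact fun a ha => ⟨trivial, ha⟩
  unfold hilb at h1
  rw [this] at h1
  simp at h1

theorem homogIdeal_bot {n : ℕ} : HomogIdeal (⊥ : Ideal (MvPolynomial (Fin n) ℝ)) := by
  intro a ha t
  rw [Ideal.mem_bot] at ha
  subst ha
  simp

theorem sum_hilb_le {n d : ℕ} (hd : 1 ≤ d) (p : Fin n → MvPolynomial (Fin n) ℝ)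
    (hp : ∀ i, (p i).IsHomogeneous d) (K : ℕ)
    (hK : Ideal.span (Set.range (X : Fin n → MvPolynomial (Fin n) ℝ)) ^ K ≤
      Ideal.span (Set.range p)) (N : ℕ) :
    ∑ t ∈ Finset.range N, hilb (Ideal.span (Set.range p)) t ≤ d ^ n := by
  set m := Ideal.span (Set.range (X : Fin n → MvPolynomial (Fin n) ℝ)) with hm
  set xs : List (MvPolynomial (Fin n) ℝ) := (List.finRange n).map X with hxs
  have hxl : xs.length = n := by simp [hxs]
  have hxm : ∀ z ∈ xs, z ∈ m := by
    intro z hz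
    simp only [hxs, List.mem_map] at hz
    obtain ⟨i, _, rfl⟩ := hz
    exact Ideal.subset_span ⟨i, rfl⟩
  have hpm : ∀ i, p i ∈ m := by
    intro i
    rw [hm, ← Set.image_univ, mem_ideal_span_X_image]
    intro mm hmm
    by_contra hcon
    push Not at hcon
    have h2 : mm = 0 := by ext i; simp [hcon i]
    have := IsHomogeneous.degree_eq_sum_deg_support (hp i) hmm
    rw [h2] at this
    simp at this
    omega
  have hreg : RegSeq ⊥ xs := by
    have := regSeq_X (List.finRange n) ∅ (List.nodup_finRange n) (by simp)
    simpa using this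
  have hlx : listIdeal ⊥ xs = m := by
    have := listIdeal_X (List.finRange n) ∅
    simpa [hm] using this
  obtain ⟨ys, hyl, hyc, hyr⟩ := exchange p K m hpm hK xs hxm hreg n hxl.ge
  rw [hxl, Nat.sub_self, List.take_zero, List.append_nil] at hyr
  have hI : listIdeal ⊥ ys ≤ Ideal.span (Set.range p) := by
    refine listIdeal_le ys ⊥ bot_le ?_
    intro y hy
    obtain ⟨c, rfl⟩ := hyc y hy
    exact Ideal.sum_mem _ fun i _ => Submodule.smul_of_tower_mem _ _ (Ideal.subset_span ⟨i, rfl⟩)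
  have hpm' : Ideal.span (Set.range p) ≤ m := by
    rw [Ideal.span_le]; rintro _ ⟨i, rfl⟩; exact hpm i
  have hyh : ∀ y ∈ ys, y.IsHomogeneous d := by
    intro y hy
    obtain ⟨c, rfl⟩ := hyc y hy
    exact Submodule.sum_mem (homogeneousSubmodule (Fin n) ℝ d) fun i _ =>
      Submodule.smul_mem _ _ (hp i)
  have hxh : ∀ y ∈ xs, y.IsHomogeneous 1 := by
    intro z hz
    simp only [hxs, List.mem_map] at hz
    obtain ⟨i, _, rfl⟩ := hz
    exact isHomogeneous_X _ _
  have e1 := hilbSeries_list xs homogIdeal_bot hxh hxh (by rw [hlx]; exact X_span_ne_top) hreg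
  have e2 := hilbSeries_list ys homogIdeal_bot hyh hyh (by
    intro h
    rw [h] at hI
    exact X_span_ne_top (top_le_iff.1 (hI.trans hpm'))) hyr
  rw [hlx, hilbSeries_X, hxl, pow_one] at e1
  rw [hyl] at e2
  have e3 : (1 - (PowerSeries.X : PowerSeries ℤ) ^ d) =
      (1 - PowerSeries.X) * ∑ i ∈ Finset.range d, PowerSeries.X ^ i := by
    rw [mul_comm, ← neg_sub, ← geom_sum_mul]; ring
  have e4 : hilbSeries (listIdeal ⊥ ys) =
      (((∑ i ∈ Finset.range d, Polynomial.X ^ i) ^ n : Polynomial ℤ) : PowerSeries ℤ) := by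
    rw [e2, e3, mul_pow, mul_right_comm, ← e1, one_mul]
    push_cast
    congr 1
    rw [← Polynomial.coeToPowerSeries.ringHom_apply, map_sum]
    simp [Polynomial.coeToPowerSeries.ringHom_apply]
  set Q : Polynomial ℤ := (∑ i ∈ Finset.range d, Polynomial.X ^ i) ^ n with hQ
  have e5 : ∀ t, hilb (listIdeal ⊥ ys) t = Q.coeff t := by
    intro t
    have := congrArg (PowerSeries.coeff t) e4
    simpa [hilbSeries] using this
  have e6 : Q.eval 1 = d ^ n := by
    simp [hQ, Polynomial.eval_finsetSum]
  calc ∑ t ∈ Finset.range N, hilb (Ideal.span (Set.range p)) t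
      ≤ ∑ t ∈ Finset.range N, hilb (listIdeal ⊥ ys) t :=
        Finset.sum_le_sum fun t _ => hilb_anti hI t
    _ ≤ ∑ t ∈ Finset.range (max N (Q.natDegree + 1)), hilb (listIdeal ⊥ ys) t :=
        Finset.sum_le_sum_of_subset_of_nonneg
          (Finset.range_mono (le_max_left _ _)) (fun t _ _ => hilb_nonneg _ t)
    _ = Q.eval 1 := by
        rw [Polynomial.eval_eq_sum_range' (n := max N (Q.natDegree + 1)) (by omega)]
        simp [e5]
    _ = d ^ n := e6
end HelperPartC2

section HelperPartB
open MvPolynomial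

/-- exponents of degree `< j` -/
abbrev Mons (n j : ℕ) : Type := {α : Fin n →₀ ℕ // α.degree < j}

theorem mons_inj (n j : ℕ) : Function.Injective
    (fun (α : Mons n j) (i : Fin n) => (⟨α.1 i, (Finsupp.le_degree i α.1).trans_lt α.2⟩ : Fin j)) := by
  intro α β h
  apply Subtype.ext
  ext i
  have := congrFun h i
  simpa using this

instance monsFinite (n j : ℕ) : Finite (Mons n j) := Finite.of_injective _ (mons_inj n j)

theorem card_mons_le (n j : ℕ) : Nat.card (Mons n j) ≤ j ^ n := by
  have := Nat.card_le_card_of_injective _ (mons_inj n j)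
  simpa using this

theorem card_mons_mul (n j d : ℕ) (hd : 0 < d) : d ^ n * Nat.card (Mons n j) ≤ Nat.card (Mons n (d * (j + n))) := by
  have : Nat.card ((Fin n → Fin d) × Mons n j) = d ^ n * Nat.card (Mons n j) := by
    simp [Nat.card_prod]
  rw [← this]
  let F : (Fin n → Fin d) × Mons n j → Mons n (d * (j + n)) := fun x =>
    ⟨d • x.2.1 + Finsupp.equivFunOnFinite.symm (fun i => (x.1 i : ℕ)), by
      have h1 := x.2.2
      have h2 : (Finsupp.equivFunOnFinite.symm (fun i => (x.1 i : ℕ))).degree ≤ n * d := by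
        rw [Finsupp.degree_eq_sum]
        refine (Finset.sum_le_card_nsmul _ _ d ?_).trans ?_
        · intro i _; simp [(x.1 i).2.le]
        · simp
      rw [map_add, map_nsmul, smul_eq_mul]
      nlinarith⟩
  apply Nat.card_le_card_of_injective F
  rintro ⟨γ, β⟩ ⟨γ', β'⟩ h
  have h' : ∀ i, d * β.1 i + γ i = d * β'.1 i + γ' i := by
    intro i
    have := DFunLike.congr_fun (congrArg Subtype.val h) i
    simpa [F] using this
  have hγ : ∀ i, (γ i : ℕ) = γ' i := by
    intro i
    have := congrArg (· % d) (h' i)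
    simpa [Nat.mul_add_mod, Nat.mod_eq_of_lt] using this
  have hβ : ∀ i, β.1 i = β'.1 i := by
    intro i
    have := h' i
    rw [hγ i] at this
    exact Nat.eq_of_mul_eq_mul_left hd (by omega)
  ext i
  · exact hγ i
  · exact hβ i

theorem growth {n d e : ℕ} (hd : 1 ≤ d)
    (h : ∀ j, Nat.card (Mons n (d * j)) ≤ e * Nat.card (Mons n j)) : d ^ n ≤ e := by
  by_contra hlt
  push Not at hlt
  have step : ∀ j, (e + 1) * Nat.card (Mons n j) ≤ e * Nat.card (Mons n (j + n)) := by
    intro j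
    calc (e + 1) * Nat.card (Mons n j) ≤ d ^ n * Nat.card (Mons n j) := Nat.mul_le_mul_right _ hlt
      _ ≤ _ := card_mons_mul n j d hd
      _ ≤ _ := h _
  have h1 : 1 ≤ Nat.card (Mons n 1) := by
    have : Nonempty (Mons n 1) := ⟨⟨0, by simp⟩⟩
    exact Nat.card_pos
  have it : ∀ i, (e + 1) ^ i ≤ e ^ i * Nat.card (Mons n (1 + i * n)) := by
    intro i
    induction i with
    | zero => simpa using h1
    | succ i ih =>
      calc (e + 1) ^ (i + 1) = (e + 1) * (e + 1) ^ i := by ring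
        _ ≤ (e + 1) * (e ^ i * Nat.card (Mons n (1 + i * n))) := Nat.mul_le_mul_left _ ih
        _ = e ^ i * ((e + 1) * Nat.card (Mons n (1 + i * n))) := by ring
        _ ≤ e ^ i * (e * Nat.card (Mons n (1 + i * n + n))) := Nat.mul_le_mul_left _ (step _)
        _ = _ := by rw [add_assoc, ← Nat.succ_mul, pow_succ, mul_assoc]
  have it2 : ∀ i : ℕ, ((e + 1 : ℝ)) ^ i ≤ e ^ i * (1 + i * n) ^ n := by
    intro i
    have := (it i).trans (Nat.mul_le_mul_left _ (card_mons_le n (1 + i * n)))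
    exact_mod_cast this
  have he : (0 : ℝ) ≤ e / (e + 1) := by positivity
  have he1 : (e / (e + 1) : ℝ) < 1 := by
    rw [div_lt_one (by positivity)]; linarith
  have lim := tendsto_pow_const_mul_const_pow_of_lt_one n he he1
  have lim2 := (lim.const_mul ((n + 1 : ℝ) ^ n)).eventually (gt_mem_nhds (a := 1) (by simp))
  obtain ⟨i, hi, hi1⟩ := (lim2.and (Filter.eventually_ge_atTop 1)).exists
  have h2 := it2 i
  have h3 : ((1 : ℝ) + i * n) ^ n ≤ (n + 1) ^ n * i ^ n := by
    rw [← mul_pow]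
    apply pow_le_pow_left₀ (by positivity)
    have : (1 : ℝ) ≤ i := by exact_mod_cast hi1
    nlinarith
  rw [div_pow] at hi
  have hpos : (0 : ℝ) < (e + 1) ^ i := by positivity
  have h4 : (n + 1 : ℝ) ^ n * (i ^ n * (e ^ i / (e + 1) ^ i)) * (e + 1) ^ i < 1 * (e + 1) ^ i :=
    mul_lt_mul_of_pos_right hi hpos
  have h5 : (n + 1 : ℝ) ^ n * (i ^ n * (e ^ i / (e + 1) ^ i)) * (e + 1) ^ i =
      e ^ i * ((n + 1) ^ n * i ^ n) := by
    field_simp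
  have h6 : (e : ℝ) ^ i * (1 + i * n) ^ n ≤ e ^ i * ((n + 1) ^ n * i ^ n) :=
    mul_le_mul_of_nonneg_left h3 (by positivity)
  linarith
end HelperPartB

section HelperPartA
open MvPolynomial

section abstractAlg
variable {n : ℕ} {E : Type*} [CommRing E] [Algebra ℝ E] (x : Fin n → E)

theorem aeval_mem_pow {q : MvPolynomial (Fin n) ℝ} {t : ℕ} (hq : q.IsHomogeneous t) :
    aeval x q ∈ Ideal.span (Set.range x) ^ t := by
  rw [Ideal.mem_span_pow_iff_exists_isHomogeneous]
  exact ⟨map (algebraMap ℝ E) q, hq.map _, by rw [eval_map, aeval_def]⟩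

theorem exists_hom_approx (h1 : ∀ a : E, ∃ c : ℝ, a - algebraMap ℝ E c ∈ Ideal.span (Set.range x))
    {N : ℕ} {a : E} (ha : a ∈ Ideal.span (Set.range x) ^ N) :
    ∃ q : MvPolynomial (Fin n) ℝ, q.IsHomogeneous N ∧
      a - aeval x q ∈ Ideal.span (Set.range x) ^ (N + 1) := by
  rw [Ideal.mem_span_pow_iff_exists_isHomogeneous] at ha
  obtain ⟨P, hP, rfl⟩ := ha
  choose c hc using h1
  refine ⟨∑ α ∈ P.support, monomial α (c (P.coeff α)), ?_, ?_⟩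
  · apply IsHomogeneous.sum
    intro α hα
    exact isHomogeneous_monomial _ (by
      by_contra hne
      exact (mem_support_iff.1 hα) (hP.coeff_eq_zero hne))
  · rw [eval_eq', map_sum, ← Finset.sum_sub_distrib]
    apply Ideal.sum_mem
    intro α hα
    have e : aeval x (monomial α (1 : ℝ)) = ∏ i, x i ^ α i := by
      rw [aeval_monomial, map_one, one_mul, Finsupp.prod_fintype _ _ (by simp)]
    have e2 : aeval x (monomial α (c (P.coeff α))) =
        algebraMap ℝ E (c (P.coeff α)) * ∏ i, x i ^ α i := by
      rw [aeval_monomial, Finsupp.prod_fintype _ _ (by simp)]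
    rw [e2, ← sub_mul, pow_succ', ← e]
    refine Ideal.mul_mem_mul (hc _) (aeval_mem_pow x (isHomogeneous_monomial _ ?_))
    by_contra hne
    exact (mem_support_iff.1 hα) (hP.coeff_eq_zero hne)

theorem exists_approx (h1 : ∀ a : E, ∃ c : ℝ, a - algebraMap ℝ E c ∈ Ideal.span (Set.range x))
    (N : ℕ) (a : E) : ∃ q : MvPolynomial (Fin n) ℝ,
      a - aeval x q ∈ Ideal.span (Set.range x) ^ N := by
  induction N with
  | zero => exact ⟨0, by simp⟩
  | succ N ih =>
    obtain ⟨q, hq⟩ := ih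
    obtain ⟨r, _, hr⟩ := exists_hom_approx x h1 hq
    exact ⟨q + r, by rw [map_add, ← sub_sub]; exact hr⟩

theorem exists_compl_part (I : Ideal (MvPolynomial (Fin n) ℝ)) (t : ℕ) :
    ∃ U : Submodule ℝ (MvPolynomial (Fin n) ℝ), U ≤ homogeneousSubmodule (Fin n) ℝ t ∧
      U ⊔ gradedPart I t = homogeneousSubmodule (Fin n) ℝ t ∧
      (Module.finrank ℝ U : ℤ) = hilb I t := by
  obtain ⟨C, hC⟩ := Submodule.exists_isCompl (gradedPart I t)
  have hle : gradedPart I t ≤ homogeneousSubmodule (Fin n) ℝ t := inf_le_right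
  have hs : C ⊓ homogeneousSubmodule (Fin n) ℝ t ⊔ gradedPart I t =
      homogeneousSubmodule (Fin n) ℝ t := by
    rw [sup_comm, ← sup_inf_assoc_of_le _ hle, hC.sup_eq_top, top_inf_eq]
  refine ⟨C ⊓ homogeneousSubmodule (Fin n) ℝ t, inf_le_right, hs, ?_⟩
  have : FiniteDimensional ℝ (C ⊓ homogeneousSubmodule (Fin n) ℝ t : Submodule ℝ _) :=
    Submodule.finiteDimensional_of_le inf_le_right
  have h := Submodule.finrank_sup_add_finrank_inf_eq (C ⊓ homogeneousSubmodule (Fin n) ℝ t)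
    (gradedPart I t)
  have hb : C ⊓ homogeneousSubmodule (Fin n) ℝ t ⊓ gradedPart I t = ⊥ := by
    rw [eq_bot_iff, ← hC.inf_eq_bot]
    exact le_inf inf_le_right (inf_le_left.trans inf_le_left)
  rw [hs, hb, finrank_bot] at h
  unfold hilb
  omega

theorem gradedPart_span {d : ℕ} {p : Fin n → MvPolynomial (Fin n) ℝ}
    (hp : ∀ i, (p i).IsHomogeneous d) {t : ℕ} {q : MvPolynomial (Fin n) ℝ}
    (hq : q ∈ Ideal.span (Set.range p)) :
    homogeneousComponent t q = 0 ∧ t < d ∨ d ≤ t ∧ ∃ a : Fin n → MvPolynomial (Fin n) ℝ,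
      (∀ i, (a i).IsHomogeneous (t - d)) ∧ homogeneousComponent t q = ∑ i, a i * p i := by
  rw [Ideal.mem_span_range_iff_exists_fun] at hq
  obtain ⟨b, rfl⟩ := hq
  rw [map_sum]
  by_cases h : d ≤ t
  · right
    refine ⟨h, fun i => homogeneousComponent (t - d) (b i),
      fun i => homogeneousComponent_isHomogeneous _ _, ?_⟩
    refine Finset.sum_congr rfl fun i _ => ?_
    rw [mul_comm, homogeneousComponent_mul_hom (hp i), if_pos h, mul_comm]
  · left
    refine ⟨Finset.sum_eq_zero fun i _ => ?_, by omega⟩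
    rw [mul_comm, homogeneousComponent_mul_hom (hp i), if_neg h]

theorem aeval_gradedPart_mem {d : ℕ} {p : Fin n → MvPolynomial (Fin n) ℝ}
    (hp : ∀ i, (p i).IsHomogeneous d) {g : Fin n → E}
    (hg : ∀ i, g i - aeval x (p i) ∈ Ideal.span (Set.range x) ^ (d + 1)) {t : ℕ}
    {q : MvPolynomial (Fin n) ℝ} (hq : q ∈ gradedPart (Ideal.span (Set.range p)) t) :
    aeval x q ∈ Ideal.span (Set.range g) ⊔ Ideal.span (Set.range x) ^ (t + 1) := by
  have h := gradedPart_span hp (t := t) hq.1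
  have hs : homogeneousComponent t q = q := by
    rw [homogeneousComponent_of_mem hq.2, if_pos rfl]
  rw [hs] at h
  rcases h with ⟨rfl, _⟩ | ⟨hdt, a, ha, rfl⟩
  · simp
  · rw [map_sum]
    apply Ideal.sum_mem
    intro i _
    rw [map_mul]
    have : aeval x (a i) * aeval x (p i) =
      aeval x (a i) * g i - aeval x (a i) * (g i - aeval x (p i)) := by ring
    rw [this]
    apply Ideal.sub_mem
    · exact Ideal.mem_sup_left (Ideal.mul_mem_left _ _ (Ideal.subset_span ⟨i, rfl⟩))
    · apply Ideal.mem_sup_right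
      have e : t + 1 = (t - d) + (d + 1) := by omega
      rw [e, pow_add]
      exact Ideal.mul_mem_mul (aeval_mem_pow x (ha i)) (hg i)

theorem pow_le_J (h1 : ∀ a : E, ∃ c : ℝ, a - algebraMap ℝ E c ∈ Ideal.span (Set.range x))
    (h2 : Ideal.span (Set.range x) ≤ Ideal.jacobson ⊥)
    {d K : ℕ} {p : Fin n → MvPolynomial (Fin n) ℝ}
    (hp : ∀ i, (p i).IsHomogeneous d) {g : Fin n → E}
    (hg : ∀ i, g i - aeval x (p i) ∈ Ideal.span (Set.range x) ^ (d + 1))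
    (hK : Ideal.span (Set.range (X : Fin n → MvPolynomial (Fin n) ℝ)) ^ K ≤
      Ideal.span (Set.range p)) :
    Ideal.span (Set.range x) ^ K ≤ Ideal.span (Set.range g) := by
  refine Submodule.le_of_le_smul_of_le_jacobson_bot (I := Ideal.span (Set.range x)) ?_ h2 ?_
  · exact Submodule.FG.pow (Submodule.fg_span (Set.finite_range x)) K
  · intro a ha
    obtain ⟨q, hq, hqa⟩ := exists_hom_approx x h1 ha
    have hqp : q ∈ Ideal.span (Set.range p) := by
      apply hK
      have := aeval_mem_pow (X : Fin n → MvPolynomial (Fin n) ℝ) hq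
      simpa using this
    have := aeval_gradedPart_mem x hp hg (t := K) (q := q) ⟨hqp, hq⟩
    have e : a = (a - aeval x q) + aeval x q := by ring
    rw [smul_eq_mul, ← pow_succ', e]
    exact Ideal.add_mem _ (Ideal.mem_sup_right hqa) this

theorem exists_U (h1 : ∀ a : E, ∃ c : ℝ, a - algebraMap ℝ E c ∈ Ideal.span (Set.range x))
    {d : ℕ} {p : Fin n → MvPolynomial (Fin n) ℝ}
    (hp : ∀ i, (p i).IsHomogeneous d) {g : Fin n → E}
    (hg : ∀ i, g i - aeval x (p i) ∈ Ideal.span (Set.range x) ^ (d + 1)) (N : ℕ) :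
    ∃ U : Submodule ℝ E, FiniteDimensional ℝ U ∧
      (Module.finrank ℝ U : ℤ) ≤ ∑ t ∈ Finset.range N, hilb (Ideal.span (Set.range p)) t ∧
      ∀ a : E, ∃ u ∈ U, a - u ∈ Ideal.span (Set.range g) ⊔ Ideal.span (Set.range x) ^ N := by
  induction N with
  | zero => exact ⟨⊥, inferInstance, by simp, fun a => ⟨0, by simp, by simp⟩⟩
  | succ N ih =>
    obtain ⟨U, hU, hfr, h⟩ := ih
    obtain ⟨T, hT, hTs, hTf⟩ := exists_compl_part (Ideal.span (Set.range p)) N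
    have : FiniteDimensional ℝ T := Submodule.finiteDimensional_of_le hT
    refine ⟨U ⊔ T.map (aeval x).toLinearMap, inferInstance, ?_, ?_⟩
    · rw [Finset.sum_range_succ, ← hTf]
      have e1 := Submodule.finrank_add_le_finrank_add_finrank U (T.map (aeval x).toLinearMap)
      have e2 := Submodule.finrank_map_le (aeval x).toLinearMap T
      omega
    · intro a
      obtain ⟨u, hu, hau⟩ := h a
      obtain ⟨j, hj, b, hb, hjb⟩ := Submodule.mem_sup.1 hau
      obtain ⟨q, hq, hqb⟩ := exists_hom_approx x h1 hb
      have hq' : q ∈ T ⊔ gradedPart (Ideal.span (Set.range p)) N := by rw [hTs]; exact hq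
      obtain ⟨v, hv, w, hw, rfl⟩ := Submodule.mem_sup.1 hq'
      refine ⟨u + aeval x v, Submodule.add_mem_sup hu (Submodule.mem_map_of_mem hv), ?_⟩
      have := aeval_gradedPart_mem x hp hg hw
      have e : a - (u + aeval x v) = j + ((b - aeval x (v + w)) + aeval x w) := by
        rw [map_add, ← sub_sub, ← hjb]; ring
      rw [e]
      exact Ideal.add_mem _ (Ideal.mem_sup_left hj) (Ideal.add_mem _ (Ideal.mem_sup_right hqb) this)

theorem finrank_quot_le (J : Ideal E) (U : Submodule ℝ E) [FiniteDimensional ℝ U]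
    (h : ∀ a : E, ∃ u ∈ U, a - u ∈ J) :
    Module.Finite ℝ (E ⧸ J) ∧ Module.finrank ℝ (E ⧸ J) ≤ Module.finrank ℝ U := by
  let F : U →ₗ[ℝ] (E ⧸ J) := (Ideal.Quotient.mkₐ ℝ J).toLinearMap ∘ₗ U.subtype
  have hF : Function.Surjective F := by
    intro y
    obtain ⟨a, rfl⟩ := Ideal.Quotient.mk_surjective y
    obtain ⟨u, hu, hau⟩ := h a
    refine ⟨⟨u, hu⟩, ?_⟩
    exact (Ideal.Quotient.eq.2 hau).symm
  exact ⟨Module.Finite.of_surjective F hF, LinearMap.finrank_le_finrank_of_surjective hF⟩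

theorem upper_bound (h1 : ∀ a : E, ∃ c : ℝ, a - algebraMap ℝ E c ∈ Ideal.span (Set.range x))
    (h2 : Ideal.span (Set.range x) ≤ Ideal.jacobson ⊥)
    {d K : ℕ} (hd : 1 ≤ d) {p : Fin n → MvPolynomial (Fin n) ℝ}
    (hp : ∀ i, (p i).IsHomogeneous d) {g : Fin n → E}
    (hg : ∀ i, g i - aeval x (p i) ∈ Ideal.span (Set.range x) ^ (d + 1))
    (hK : Ideal.span (Set.range (X : Fin n → MvPolynomial (Fin n) ℝ)) ^ K ≤
      Ideal.span (Set.range p)) :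
    Module.Finite ℝ (E ⧸ Ideal.span (Set.range g)) ∧
      Module.finrank ℝ (E ⧸ Ideal.span (Set.range g)) ≤ d ^ n := by
  obtain ⟨U, hU, hfr, h⟩ := exists_U x h1 hp hg K
  have hJ := pow_le_J x h1 h2 hp hg hK
  have h' : ∀ a : E, ∃ u ∈ U, a - u ∈ Ideal.span (Set.range g) := by
    intro a
    obtain ⟨u, hu, hau⟩ := h a
    exact ⟨u, hu, by rwa [sup_eq_left.2 hJ] at hau⟩
  obtain ⟨hf, hle⟩ := finrank_quot_le _ U h'
  refine ⟨hf, hle.trans ?_⟩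
  have := hfr.trans (sum_hilb_le hd p hp K hK K)
  exact_mod_cast this

theorem exists_S {g : Fin n → E} {e : ℕ} (u : Fin e → E)
    (hu : ∀ a : E, ∃ c : Fin e → ℝ, a - ∑ i, c i • u i ∈ Ideal.span (Set.range g)) (j : ℕ) :
    ∀ a : E, ∃ s ∈ Submodule.span ℝ (Set.range (fun k : Fin e × Mons n j =>
      u k.1 * aeval g (monomial k.2.1 (1 : ℝ)))), a - s ∈ Ideal.span (Set.range g) ^ j := by
  induction j with
  | zero => intro a; exact ⟨0, Submodule.zero_mem _, by simp⟩
  | succ j ih =>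
    have hmono : ∀ α : Fin n →₀ ℕ, aeval g (monomial α (1 : ℝ)) = ∏ i, g i ^ α i := by
      intro α
      rw [aeval_monomial, map_one, one_mul, Finsupp.prod_fintype _ _ (by simp)]
    have key : ∀ b ∈ Ideal.span (Set.range g) ^ j, ∃ s ∈ Submodule.span ℝ (Set.range
        (fun k : Fin e × Mons n (j+1) => u k.1 * aeval g (monomial k.2.1 (1 : ℝ)))),
        b - s ∈ Ideal.span (Set.range g) ^ (j + 1) := by
      intro b hb
      rw [Ideal.mem_span_pow_iff_exists_isHomogeneous] at hb
      obtain ⟨P, hP, rfl⟩ := hb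
      choose c hc using hu
      have hdeg : ∀ α ∈ P.support, α.degree = j := by
        intro α hα
        by_contra hne
        exact (mem_support_iff.1 hα) (hP.coeff_eq_zero hne)
      refine ⟨∑ α ∈ P.support, (∑ i, c (P.coeff α) i • u i) * aeval g (monomial α (1 : ℝ)), ?_, ?_⟩
      · apply Submodule.sum_mem
        intro α hα
        rw [Finset.sum_mul]
        apply Submodule.sum_mem
        intro i _
        rw [smul_mul_assoc]
        apply Submodule.smul_mem
        exact Submodule.subset_span ⟨(i, ⟨α, by rw [hdeg α hα]; omega⟩), rfl⟩
      · rw [eval_eq', ← Finset.sum_sub_distrib]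
        apply Ideal.sum_mem
        intro α hα
        rw [← hmono, ← sub_mul, pow_succ']
        exact Ideal.mul_mem_mul (hc _) (aeval_mem_pow g (isHomogeneous_monomial _ (hdeg α hα)))
    intro a
    obtain ⟨s, hs, has⟩ := ih a
    obtain ⟨s', hs', has'⟩ := key _ has
    refine ⟨s + s', Submodule.add_mem _ ?_ hs', by rwa [← sub_sub]⟩
    refine Submodule.span_mono ?_ hs
    rintro _ ⟨⟨i, α⟩, rfl⟩
    exact ⟨(i, ⟨α.1, α.2.trans (Nat.lt_succ_self j)⟩), rfl⟩

theorem lower_bound 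
    (h3 : ∀ (q : MvPolynomial (Fin n) ℝ) (N : ℕ), aeval x q ∈ Ideal.span (Set.range x) ^ N →
      ∀ k < N, homogeneousComponent k q = 0)
    {d : ℕ} (hd : 1 ≤ d) {g : Fin n → E}
    (hg : ∀ i, g i ∈ Ideal.span (Set.range x) ^ d)
    (hfin : Module.Finite ℝ (E ⧸ Ideal.span (Set.range g))) :
    d ^ n ≤ Module.finrank ℝ (E ⧸ Ideal.span (Set.range g)) := by
  set J := Ideal.span (Set.range g) with hJ
  set e := Module.finrank ℝ (E ⧸ J) with he
  apply growth hd
  intro j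
  let B := Module.finBasis ℝ (E ⧸ J)
  choose u hu using fun i => Ideal.Quotient.mk_surjective (B i)
  have hu' : ∀ a : E, ∃ c : Fin e → ℝ, a - ∑ i, c i • u i ∈ J := by
    intro a
    refine ⟨B.repr (Ideal.Quotient.mk J a), ?_⟩
    rw [← Ideal.Quotient.eq_zero_iff_mem, map_sub, sub_eq_zero, map_sum]
    conv_lhs => rw [← B.sum_repr (Ideal.Quotient.mk J a)]
    refine Finset.sum_congr rfl fun i _ => ?_
    rw [← hu i]
    rfl
  have hle : J ^ j ≤ Ideal.span (Set.range x) ^ (d * j) := by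
    rw [pow_mul]
    apply Ideal.pow_right_mono
    rw [hJ, Ideal.span_le]
    rintro _ ⟨i, rfl⟩
    exact hg i
  have _ := Fintype.ofFinite (Mons n j)
  have _ := Fintype.ofFinite (Mons n (d * j))
  let S := Submodule.span ℝ (Set.range (fun k : Fin e × Mons n j =>
      u k.1 * aeval g (monomial k.2.1 (1 : ℝ))))
  have hSf : FiniteDimensional ℝ S := FiniteDimensional.span_of_finite ℝ (Set.finite_range _)
  obtain ⟨hf, hfr⟩ := finrank_quot_le (Ideal.span (Set.range x) ^ (d * j)) S (by
    intro a
    obtain ⟨s, hs, h⟩ := exists_S u hu' j a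
    exact ⟨s, hs, hle h⟩)
  have hS : Module.finrank ℝ S ≤ e * Nat.card (Mons n j) := by
    refine (finrank_range_le_card _).trans ?_
    simp [Nat.card_eq_fintype_card]
  refine le_trans ?_ (hfr.trans hS)
  have hli : LinearIndependent ℝ (fun α : Mons n (d * j) =>
      Ideal.Quotient.mkₐ ℝ (Ideal.span (Set.range x) ^ (d * j)) (aeval x (monomial α.1 (1 : ℝ)))) := by
    rw [Fintype.linearIndependent_iff]
    intro c hc α
    have h5 : aeval x (∑ β : Mons n (d * j), monomial β.1 (c β)) ∈
        Ideal.span (Set.range x) ^ (d * j) := by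
      rw [← Ideal.Quotient.eq_zero_iff_mem, ← Ideal.Quotient.mkₐ_eq_mk ℝ, ← hc, map_sum, map_sum]
      refine Finset.sum_congr rfl fun β _ => ?_
      rw [← map_smul, ← map_smul, smul_monomial, smul_eq_mul, mul_one]
    have h6 := h3 _ _ h5 α.1.degree α.2
    have h7 := congrArg (coeff α.1) h6
    rw [coeff_homogeneousComponent, if_pos rfl, coeff_sum, coeff_zero, Finset.sum_eq_single α] at h7
    · simpa using h7
    · intro β _ hβ
      rw [coeff_monomial, if_neg (fun h => hβ (Subtype.ext h))]
    · simp
  have := hli.fintype_card_le_finrank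
  rwa [← Nat.card_eq_fintype_card] at this

theorem exists_K (h1 : ∀ a : E, ∃ c : ℝ, a - algebraMap ℝ E c ∈ Ideal.span (Set.range x))
    (h2 : Ideal.span (Set.range x) ≤ Ideal.jacobson ⊥)
    (h3 : ∀ (q : MvPolynomial (Fin n) ℝ) (N : ℕ), aeval x q ∈ Ideal.span (Set.range x) ^ N →
      ∀ k < N, homogeneousComponent k q = 0)
    {d : ℕ} {p : Fin n → MvPolynomial (Fin n) ℝ}
    (hp : ∀ i, (p i).IsHomogeneous d)
    (hfin : Module.Finite ℝ (E ⧸ Ideal.span (Set.range fun i => aeval x (p i)))) :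
    ∃ K, Ideal.span (Set.range (X : Fin n → MvPolynomial (Fin n) ℝ)) ^ K ≤
      Ideal.span (Set.range p) := by
  set J := Ideal.span (Set.range fun i => aeval x (p i)) with hJ
  have hunit : ∀ a ∈ Ideal.span (Set.range x), ∀ c : ℝ, c ≠ 0 → IsUnit (a + algebraMap ℝ E c) := by
    intro a ha c hc
    have h4 := Ideal.mem_jacobson_bot.1 (h2 ha) (algebraMap ℝ E c⁻¹)
    have h5 : a + algebraMap ℝ E c = (a * algebraMap ℝ E c⁻¹ + 1) * algebraMap ℝ E c := by
      rw [add_mul, mul_assoc, ← map_mul, inv_mul_cancel₀ hc]; simp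
    rw [h5]
    exact h4.mul ((IsUnit.mk0 c hc).map (algebraMap ℝ E))
  have hnil : ∀ i, ∃ k, x i ^ k ∈ J := by
    intro i
    have hintg : IsIntegral ℝ (Ideal.Quotient.mkₐ ℝ J (x i)) := IsIntegral.of_finite ℝ _
    obtain ⟨f, hf, hf0⟩ := hintg
    have hfne : f ≠ 0 := hf.ne_zero
    obtain ⟨k, f', hff, hndvd⟩ : ∃ k f', f = Polynomial.X ^ k * f' ∧ ¬ Polynomial.X ∣ f' := by
      obtain ⟨f', hff, hnd⟩ := Polynomial.exists_eq_pow_rootMultiplicity_mul_and_not_dvd f hfne 0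
      exact ⟨_, f', by simpa using hff, by simpa using hnd⟩
    refine ⟨k, ?_⟩
    rw [Polynomial.X_dvd_iff] at hndvd
    have h6 : Polynomial.aeval (x i) f ∈ J := by
      rw [← Ideal.Quotient.eq_zero_iff_mem, ← Ideal.Quotient.mkₐ_eq_mk ℝ, ← Polynomial.aeval_algHom_apply]
      exact hf0
    rw [hff, map_mul, map_pow, Polynomial.aeval_X] at h6
    have h7 : IsUnit (Polynomial.aeval (x i) f') := by
      have e := Polynomial.divX_mul_X_add f'
      rw [← e, map_add, map_mul, Polynomial.aeval_X, Polynomial.aeval_C]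
      exact hunit _ (Ideal.mul_mem_left _ _ (Ideal.subset_span ⟨i, rfl⟩)) _ hndvd
    exact (Ideal.mul_unit_mem_iff_mem J h7).1 h6
  choose k hk using hnil
  obtain ⟨K, hK⟩ : ∃ K, Ideal.span (Set.range x) ^ K ≤ J := by
    have : Ideal.span (Set.range x) ≤ J.radical := by
      rw [Ideal.span_le]
      rintro _ ⟨i, rfl⟩
      exact ⟨k i, hk i⟩
    exact Ideal.exists_pow_le_of_le_radical_of_fg this (Submodule.fg_span (Set.finite_range x))
  refine ⟨K, ?_⟩
  have hhom : ∀ q0 : MvPolynomial (Fin n) ℝ, q0.IsHomogeneous K → q0 ∈ Ideal.span (Set.range p) := by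
    intro q0 hq0
    have h8 : aeval x q0 ∈ J := hK (aeval_mem_pow x hq0)
    rw [hJ, Ideal.mem_span_range_iff_exists_fun] at h8
    obtain ⟨a, ha⟩ := h8
    choose a' ha' using fun i => exists_approx x h1 (K + 1) (a i)
    have h9 : aeval x (q0 - ∑ i, a' i * p i) ∈ Ideal.span (Set.range x) ^ (K + 1) := by
      rw [map_sub, map_sum, ← ha, ← Finset.sum_sub_distrib]
      refine Ideal.sum_mem _ fun i _ => ?_
      rw [map_mul, ← sub_mul]
      exact Ideal.mul_mem_right _ _ (ha' i)
    have h10 := h3 _ _ h9 K (Nat.lt_succ_self K)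
    rw [map_sub, homogeneousComponent_of_mem hq0, if_pos rfl, sub_eq_zero] at h10
    have hmem : ∑ i, a' i * p i ∈ Ideal.span (Set.range p) :=
      Ideal.sum_mem _ fun i _ => Ideal.mul_mem_left _ _ (Ideal.subset_span ⟨i, rfl⟩)
    rw [h10]
    rcases gradedPart_span hp (t := K) hmem with ⟨h, _⟩ | ⟨_, b, _, h⟩
    · rw [h]; exact Ideal.zero_mem _
    · rw [h]
      exact Ideal.sum_mem _ fun i _ => Ideal.mul_mem_left _ _ (Ideal.subset_span ⟨i, rfl⟩)
  intro q hq
  rw [Ideal.mem_span_pow_iff_exists_isHomogeneous] at hq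
  obtain ⟨P, hP, rfl⟩ := hq
  rw [eval_eq']
  refine Ideal.sum_mem _ fun α hα => Ideal.mul_mem_left _ _ (hhom _ ?_)
  have h11 : α.degree = K := by
    have := hP (mem_support_iff.1 hα)
    rwa [Finsupp.degree_eq_weight_one]
  have h12 := isHomogeneous_monomial (R := ℝ) (σ := Fin n) (d := α) (n := K) 1 h11
  rw [monomial_eq] at h12
  simpa [Finsupp.prod_fintype] using h12

theorem main_alg (h1 : ∀ a : E, ∃ c : ℝ, a - algebraMap ℝ E c ∈ Ideal.span (Set.range x))
    (h2 : Ideal.span (Set.range x) ≤ Ideal.jacobson ⊥)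
    (h3 : ∀ (q : MvPolynomial (Fin n) ℝ) (N : ℕ), aeval x q ∈ Ideal.span (Set.range x) ^ N →
      ∀ k < N, homogeneousComponent k q = 0)
    (hn : n ≠ 0)
    {d : ℕ} {p : Fin n → MvPolynomial (Fin n) ℝ}
    (hp : ∀ i, (p i).IsHomogeneous d) (hp0 : ∃ i, p i ≠ 0) {g : Fin n → E}
    (hg : ∀ i, g i - aeval x (p i) ∈ Ideal.span (Set.range x) ^ (d + 1))
    (hfin : Module.Finite ℝ (E ⧸ Ideal.span (Set.range fun i => aeval x (p i)))) :
    Module.rank ℝ (E ⧸ Ideal.span (Set.range g)) = ((d ^ n : ℕ) : Cardinal) := by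
  rcases Nat.eq_zero_or_pos d with rfl | hd
  · obtain ⟨i, hi⟩ := hp0
    have hc : p i = C (coeff 0 (p i)) :=
      totalDegree_eq_zero_iff_eq_C.1 ((totalDegree_zero_iff_isHomogeneous _).2 (hp i))
    have hc0 : coeff 0 (p i) ≠ 0 := fun h => hi (by rw [hc, h, C_0])
    have hgi := hg i
    rw [hc, aeval_C, zero_add, pow_one] at hgi
    have hu : IsUnit (g i) := by
      have h4 := Ideal.mem_jacobson_bot.1 (h2 hgi) (algebraMap ℝ E (coeff 0 (p i))⁻¹)
      have h5 : g i = ((g i - algebraMap ℝ E (coeff 0 (p i))) *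
          algebraMap ℝ E (coeff 0 (p i))⁻¹ + 1) * algebraMap ℝ E (coeff 0 (p i)) := by
        rw [add_mul, mul_assoc, ← map_mul, inv_mul_cancel₀ hc0]; simp
      rw [h5]
      exact h4.mul ((IsUnit.mk0 _ hc0).map (algebraMap ℝ E))
    have htop : Ideal.span (Set.range g) = ⊤ :=
      Ideal.eq_top_of_isUnit_mem _ (Ideal.subset_span ⟨i, rfl⟩) hu
    have : Subsingleton (E ⧸ Ideal.span (Set.range g)) := by
      rw [htop]; exact Ideal.Quotient.subsingleton_iff.2 rfl
    rw [rank_subsingleton', zero_pow hn]; simp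
  · obtain ⟨K, hK⟩ := exists_K x h1 h2 h3 hp hfin
    obtain ⟨hf, hle⟩ := upper_bound x h1 h2 hd hp hg hK
    have hge := lower_bound x h3 hd (g := g) (fun i => by
      have := add_mem (Ideal.pow_le_pow_right (Nat.le_succ d) (hg i)) (aeval_mem_pow x (hp i))
      simpa using this) hf
    rw [← Module.finrank_eq_rank, le_antisymm hle hge]

end abstractAlg
end HelperPartA

section HelperAn1
open MvPolynomial
open scoped ContDiff

theorem hasFDerivAt_param {H F : Type} [NormedAddCommGroup H] [NormedSpace ℝ H]
    [FiniteDimensional ℝ H] [NormedAddCommGroup F] [NormedSpace ℝ F] [CompleteSpace F]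
    {G : H × ℝ → F} (hG : ContDiff ℝ (⊤ : ℕ∞) G) (x₀ : H) :
    HasFDerivAt (fun x => ∫ s in (0:ℝ)..1, G (x, s))
      (∫ s in (0:ℝ)..1, (fderiv ℝ G (x₀, s)).comp (ContinuousLinearMap.inl ℝ H ℝ)) x₀ := by
  have hG' : Continuous (fun y : H × ℝ => (fderiv ℝ G y).comp (ContinuousLinearMap.inl ℝ H ℝ)) :=
    (hG.continuous_fderiv (by simp)).clm_comp continuous_const
  have : ProperSpace H := FiniteDimensional.proper ℝ H
  obtain ⟨C, hC⟩ := ((isCompact_closedBall x₀ 1).prod (isCompact_Icc (a := (0:ℝ)) (b := 1))).exists_bound_of_continuousOn hG'.continuousOn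
  refine intervalIntegral.hasFDerivAt_integral_of_dominated_of_fderiv_le
    (F' := fun x s => (fderiv ℝ G (x, s)).comp (ContinuousLinearMap.inl ℝ H ℝ))
    (bound := fun _ => C) (s := Metric.closedBall x₀ 1)
    (Metric.closedBall_mem_nhds _ one_pos) ?_ ?_ ?_ ?_ ?_ ?_
  · exact Filter.Eventually.of_forall fun x =>
      (hG.continuous.comp (Continuous.prodMk_right x)).aestronglyMeasurable
  · exact (hG.continuous.comp (Continuous.prodMk_right x₀)).intervalIntegrable _ _
  · exact (hG'.comp (Continuous.prodMk_right x₀)).aestronglyMeasurable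
  · refine Filter.Eventually.of_forall fun t ht x hx => hC (x, t) ⟨hx, ?_⟩
    rw [Set.uIoc_of_le zero_le_one] at ht
    exact ⟨ht.1.le, ht.2⟩
  · exact intervalIntegrable_const
  · refine Filter.Eventually.of_forall fun t ht x hx => ?_
    have h1 : HasFDerivAt G (fderiv ℝ G (x, t)) (x, t) :=
      (hG.differentiable (by simp)).differentiableAt.hasFDerivAt
    exact h1.comp x (hasFDerivAt_prodMk_left x t)

theorem contDiff_param_nat (k : ℕ) : ∀ {H F : Type} [NormedAddCommGroup H] [NormedSpace ℝ H]
    [FiniteDimensional ℝ H] [NormedAddCommGroup F] [NormedSpace ℝ F] [CompleteSpace F]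
    {G : H × ℝ → F} (_ : ContDiff ℝ (⊤ : ℕ∞) G),
    ContDiff ℝ k (fun x => ∫ s in (0:ℝ)..1, G (x, s)) := by
  induction k with
  | zero =>
    intro H F _ _ _ _ _ _ G hG
    exact contDiff_zero.2 (continuous_iff_continuousAt.2 fun x => (hasFDerivAt_param hG x).continuousAt)
  | succ k ih =>
    intro H F _ _ _ _ _ _ G hG
    rw [Nat.cast_succ, contDiff_succ_iff_fderiv]
    refine ⟨fun x => (hasFDerivAt_param hG x).differentiableAt, by simp, ?_⟩
    have : fderiv ℝ (fun x => ∫ s in (0:ℝ)..1, G (x, s)) = fun x =>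
      ∫ s in (0:ℝ)..1, (fderiv ℝ G (x, s)).comp (ContinuousLinearMap.inl ℝ H ℝ) :=
      funext fun x => (hasFDerivAt_param hG x).fderiv
    rw [this]
    exact ih (G := fun y => (fderiv ℝ G y).comp (ContinuousLinearMap.inl ℝ H ℝ))
      ((hG.fderiv_right (m := (⊤ : ℕ∞)) (by simp)).clm_comp contDiff_const)

theorem contDiff_param {H F : Type} [NormedAddCommGroup H] [NormedSpace ℝ H]
    [FiniteDimensional ℝ H] [NormedAddCommGroup F] [NormedSpace ℝ F] [CompleteSpace F]
    {G : H × ℝ → F} (hG : ContDiff ℝ (⊤ : ℕ∞) G) :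
    ContDiff ℝ (⊤ : ℕ∞) (fun x => ∫ s in (0:ℝ)..1, G (x, s)) :=
  contDiff_infty.2 fun k => contDiff_param_nat k hG

/-- Hadamard lemma. -/
theorem hadamard {n : ℕ} {f : EuclideanSpace ℝ (Fin n) → ℝ} (hf : ContDiff ℝ (⊤ : ℕ∞) f) :
    ∃ h : Fin n → EuclideanSpace ℝ (Fin n) → ℝ, (∀ i, ContDiff ℝ (⊤ : ℕ∞) (h i)) ∧
      ∀ x, f x - f 0 = ∑ i, x i * h i x := by
  have hf' : ContDiff ℝ (⊤ : ℕ∞) (fderiv ℝ f) := hf.fderiv_right (m := (⊤ : ℕ∞)) (by simp)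
  have hs : ContDiff ℝ (⊤ : ℕ∞) (fun y : EuclideanSpace ℝ (Fin n) × ℝ => fderiv ℝ f (y.2 • y.1)) :=
    hf'.comp (contDiff_snd.smul contDiff_fst)
  refine ⟨fun i x => ∫ s in (0:ℝ)..1, fderiv ℝ f (s • x) (EuclideanSpace.single i 1), fun i =>
    contDiff_param (G := fun y : EuclideanSpace ℝ (Fin n) × ℝ => fderiv ℝ f (y.2 • y.1) (EuclideanSpace.single i 1))
      (hs.clm_apply contDiff_const), fun x => ?_⟩
  have hder : ∀ s ∈ Set.uIcc (0:ℝ) 1, HasDerivAt (fun s : ℝ => f (s • x)) (fderiv ℝ f (s • x) x) s := by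
    intro s _
    have h1 : HasFDerivAt f (fderiv ℝ f (s • x)) (s • x) :=
      (hf.differentiable (by simp)).differentiableAt.hasFDerivAt
    have h2 : HasDerivAt (fun s : ℝ => s • x) ((1:ℝ) • x) s := (hasDerivAt_id s).smul_const x
    rw [one_smul] at h2
    exact h1.comp_hasDerivAt s h2
  have hc : ∀ v, Continuous fun s : ℝ => fderiv ℝ f (s • x) v := fun v =>
    ((hf.continuous_fderiv (by simp)).comp (continuous_id.smul continuous_const)).clm_apply continuous_const
  have := intervalIntegral.integral_eq_sub_of_hasDerivAt hder ((hc x).intervalIntegrable _ _)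
  rw [one_smul, zero_smul] at this
  rw [← this]
  have hx : ∀ s : ℝ, fderiv ℝ f (s • x) x = ∑ i, x i * fderiv ℝ f (s • x) (EuclideanSpace.single i 1) := by
    intro s
    generalize fderiv ℝ f (s • x) = A
    conv_lhs => rw [← (EuclideanSpace.basisFun (Fin n) ℝ).sum_repr x]
    simp
  simp_rw [hx]
  rw [intervalIntegral.integral_finsetSum]
  · simp_rw [intervalIntegral.integral_const_mul]
  · intro i _
    exact ((hc _).const_mul _).intervalIntegrable _ _
end HelperAn1

section HelperAn2
open MvPolynomial Filter Topology Asymptotics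

noncomputable section

/-- The smooth germ of a smooth function. -/
def sg {n : ℕ} (f : Eucl n → ℝ) (hf : ContDiff ℝ (⊤ : ℕ∞) f) : smoothGerms n := ⟨↑f, f, hf, rfl⟩

theorem exists_sg {n : ℕ} (a : smoothGerms n) : ∃ f hf, a = sg f hf := by
  obtain ⟨_, f, hf, rfl⟩ := a
  exact ⟨f, hf, rfl⟩

theorem sg_eq_iff {n : ℕ} {f g : Eucl n → ℝ} {hf : ContDiff ℝ (⊤ : ℕ∞) f} {hg : ContDiff ℝ (⊤ : ℕ∞) g} :
    sg f hf = sg g hg ↔ f =ᶠ[𝓝 0] g := by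
  constructor
  · intro h
    exact Germ.coe_eq.1 (congrArg Subtype.val h)
  · intro h
    exact Subtype.ext (Germ.coe_eq.2 h)

theorem sg_add {n : ℕ} {f g : Eucl n → ℝ} (hf : ContDiff ℝ (⊤ : ℕ∞) f) (hg : ContDiff ℝ (⊤ : ℕ∞) g) :
    sg f hf + sg g hg = sg (fun x => f x + g x) (hf.add hg) := rfl

theorem sg_sub {n : ℕ} {f g : Eucl n → ℝ} (hf : ContDiff ℝ (⊤ : ℕ∞) f) (hg : ContDiff ℝ (⊤ : ℕ∞) g) :
    sg f hf - sg g hg = sg (fun x => f x - g x) (hf.sub hg) := rfl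

theorem sg_mul {n : ℕ} {f g : Eucl n → ℝ} (hf : ContDiff ℝ (⊤ : ℕ∞) f) (hg : ContDiff ℝ (⊤ : ℕ∞) g) :
    sg f hf * sg g hg = sg (fun x => f x * g x) (hf.mul hg) := rfl

theorem sg_one {n : ℕ} : (1 : smoothGerms n) = sg (fun _ => 1) contDiff_const := rfl

theorem sg_const {n : ℕ} (c : ℝ) :
    algebraMap ℝ (smoothGerms n) c = sg (fun _ => c) contDiff_const := by
  rw [Algebra.algebraMap_eq_smul_one]
  apply Subtype.ext
  change c • (1 : Germ (𝓝 (0 : Eucl n)) ℝ) = _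
  rw [← Filter.Germ.coe_one, ← Filter.Germ.coe_smul]
  simp only [sg]
  congr 1
  funext x
  simp

theorem sg_sum {n : ℕ} {ι : Type*} (s : Finset ι) {f : ι → Eucl n → ℝ}
    (hf : ∀ i, ContDiff ℝ (⊤ : ℕ∞) (f i)) :
    ∑ i ∈ s, sg (f i) (hf i) = sg (fun x => ∑ i ∈ s, f i x) (ContDiff.sum fun i _ => hf i) := by
  classical
  induction s using Finset.induction_on with
  | empty => simp; rfl
  | insert a s ha ih =>
    rw [Finset.sum_insert ha, ih, sg_add, sg_eq_iff]
    exact Eventually.of_forall fun x => by simp [Finset.sum_insert ha]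

theorem contDiff_coord {n : ℕ} (i : Fin n) : ContDiff ℝ (⊤ : ℕ∞) (fun x : Eucl n => x i) :=
  (EuclideanSpace.proj (𝕜 := ℝ) i).contDiff

/-- coordinate germs -/
def coord {n : ℕ} (i : Fin n) : smoothGerms n := sg (fun x => x i) (contDiff_coord i)

/-- polynomial function -/
def polyFun {n : ℕ} (q : MvPolynomial (Fin n) ℝ) (x : Eucl n) : ℝ := eval (fun i => x i) q

theorem contDiff_polyFun {n : ℕ} (q : MvPolynomial (Fin n) ℝ) : ContDiff ℝ (⊤ : ℕ∞) (polyFun q) := by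
  induction q using MvPolynomial.induction_on with
  | C a =>
    have : polyFun (C a) = fun _ : Eucl n => a := by funext x; simp [polyFun]
    rw [this]; exact contDiff_const
  | add p q hp hq => 
    have : polyFun (p + q) = fun x => polyFun p x + polyFun q x := by funext x; simp [polyFun]
    rw [this]; exact hp.add hq
  | mul_X p i hp => 
    have : polyFun (p * X i) = fun x => polyFun p x * x i := by funext x; simp [polyFun]
    rw [this]; exact hp.mul (contDiff_coord i)

theorem aeval_coord {n : ℕ} (q : MvPolynomial (Fin n) ℝ) :
    aeval (coord (n := n)) q = sg (polyFun q) (contDiff_polyFun q) := by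
  induction q using MvPolynomial.induction_on with
  | C a => rw [aeval_C, sg_const, sg_eq_iff]; exact Eventually.of_forall fun x => by simp [polyFun]
  | add p q hp hq => rw [map_add, hp, hq, sg_add, sg_eq_iff]; exact Eventually.of_forall fun x => by simp [polyFun]
  | mul_X p i hp => rw [map_mul, hp, aeval_X, coord, sg_mul, sg_eq_iff]; exact Eventually.of_forall fun x => by simp [polyFun]

/-- the maximal ideal -/
abbrev mm (n : ℕ) : Ideal (smoothGerms n) := Ideal.span (Set.range (coord (n := n)))

theorem germ_h1 {n : ℕ} (a : smoothGerms n) : ∃ c : ℝ, a - algebraMap ℝ _ c ∈ mm n := by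
  obtain ⟨f, hf, rfl⟩ := exists_sg a
  obtain ⟨h, hh, he⟩ := hadamard hf
  refine ⟨f 0, ?_⟩
  have : sg f hf - algebraMap ℝ _ (f 0) = ∑ i, coord i * sg (h i) (hh i) := by
    simp only [coord, sg_mul]
    rw [sg_const, sg_sub, sg_sum Finset.univ (fun i => (contDiff_coord i).mul (hh i)), sg_eq_iff]
    exact Eventually.of_forall he
  rw [this]
  exact Ideal.sum_mem _ fun i _ => Ideal.mul_mem_right _ _ (Ideal.subset_span ⟨i, rfl⟩)

/-- Germs that are `O(‖x‖^N)`. -/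
def growthIdeal (n N : ℕ) : Ideal (smoothGerms n) where
  carrier := {a | ∃ f hf, a = sg f hf ∧ f =O[𝓝 0] fun x => ‖x‖ ^ N}
  zero_mem' := ⟨fun _ => 0, contDiff_const, rfl, isBigO_zero _ _⟩
  add_mem' := by
    rintro _ _ ⟨f, hf, rfl, h⟩ ⟨g, hg, rfl, h'⟩
    exact ⟨_, _, sg_add hf hg, h.add h'⟩
  smul_mem' := by
    rintro c _ ⟨f, hf, rfl, h⟩
    obtain ⟨g, hg, rfl⟩ := exists_sg c
    refine ⟨_, _, sg_mul hg hf, ?_⟩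
    have h1 : g =O[𝓝 0] fun _ => (1 : ℝ) := hg.continuous.continuousAt.isBigO_one ℝ
    simpa using h1.mul h

theorem mm_pow_le {n N : ℕ} : mm n ^ N ≤ growthIdeal n N := by
  induction N with
  | zero =>
    intro a _
    obtain ⟨f, hf, rfl⟩ := exists_sg a
    exact ⟨f, hf, rfl, by simpa using hf.continuous.continuousAt.isBigO_one ℝ⟩
  | succ N ih =>
    rw [pow_succ]
    refine Ideal.mul_le.2 fun a ha b hb => ?_
    have hm : mm n ≤ growthIdeal n 1 := by
      rw [Ideal.span_le]
      rintro _ ⟨i, rfl⟩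
      refine ⟨_, _, rfl, ?_⟩
      refine IsBigO.of_bound 1 (Eventually.of_forall fun x => ?_)
      simpa using PiLp.norm_apply_le x i
    obtain ⟨f, hf, rfl, h⟩ := ih ha
    obtain ⟨g, hg, rfl, h'⟩ := hm hb
    refine ⟨_, _, sg_mul hf hg, ?_⟩
    simpa [pow_succ] using h.mul h'

theorem growth_of_mem {n N : ℕ} {f : Eucl n → ℝ} {hf : ContDiff ℝ (⊤ : ℕ∞) f}
    (h : sg f hf ∈ mm n ^ N) : f =O[𝓝 0] fun x => ‖x‖ ^ N := by
  obtain ⟨g, hg, he, hO⟩ := mm_pow_le h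
  rw [sg_eq_iff] at he
  exact he.trans_isBigO hO

theorem germ_unit {n : ℕ} {f : Eucl n → ℝ} (hf : ContDiff ℝ (⊤ : ℕ∞) f) (h0 : f 0 = 1) :
    IsUnit (sg f hf) := by
  have hev : ∀ᶠ x in 𝓝 (0 : Eucl n), 0 < f x :=
    hf.continuous.continuousAt.eventually (lt_mem_nhds (by rw [h0]; exact one_pos))
  obtain ⟨r, hr, hball⟩ := Metric.eventually_nhds_iff_ball.1 hev
  let ρ : ContDiffBump (0 : Eucl n) := ⟨r / 2, r, by positivity, by linarith⟩
  have hρ : ContDiff ℝ (⊤ : ℕ∞) ρ := ρ.contDiff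
  let F : Eucl n → ℝ := fun x => 1 + ρ x * (f x - 1)
  have hF : ContDiff ℝ (⊤ : ℕ∞) F := contDiff_const.add (hρ.mul (hf.sub contDiff_const))
  have hpos : ∀ x, F x ≠ 0 := by
    intro x
    by_cases hx : x ∈ Metric.ball (0 : Eucl n) r
    · have h1 := hball x hx
      have h2 := ρ.nonneg' x
      have h3 := ρ.le_one (x := x)
      have : 0 < 1 + ρ x * (f x - 1) := by
        rcases h3.lt_or_eq with h | h
        · nlinarith [mul_nonneg h2 h1.le]
        · rw [h]; linarith
      exact this.ne'
    · have : ρ x = 0 := ρ.zero_of_le_dist (by simpa [ρ] using hx)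
      simp [F, this]
  refine IsUnit.of_mul_eq_one (sg (fun x => (F x)⁻¹) (hF.inv hpos)) ?_
  rw [sg_mul, sg_one, sg_eq_iff]
  filter_upwards [ρ.eventuallyEq_one] with x hx
  have : F x = f x := by simp [F, hx]
  rw [← this]
  exact mul_inv_cancel₀ (hpos x)

theorem germ_h2 {n : ℕ} : mm n ≤ Ideal.jacobson ⊥ := by
  intro a ha
  rw [Ideal.mem_jacobson_bot]
  intro b
  obtain ⟨f, hf, h⟩ := exists_sg (a * b + 1)
  rw [h]
  apply germ_unit
  obtain ⟨f1, hf1, rfl⟩ := exists_sg a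
  obtain ⟨f2, hf2, rfl⟩ := exists_sg b
  rw [sg_mul, sg_one, sg_add, sg_eq_iff] at h
  have h0 := h.self_of_nhds
  have hm : sg f1 hf1 ∈ mm n ^ 1 := by rwa [pow_one]
  have hz : f1 0 = 0 := by
    have h5 := (growth_of_mem hm).eq_zero_imp.self_of_nhds
    exact h5 (by simp)
  rw [← h0]; simp [hz]

end
end HelperAn2

section HelperAn3
open MvPolynomial Filter Topology Asymptotics

noncomputable section

theorem poly_coeff_zero {r : Polynomial ℝ} {N : ℕ}
    (h : (fun t : ℝ => r.eval t) =O[𝓝[>] 0] fun t => t ^ N) : ∀ k < N, r.coeff k = 0 := by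
  rw [← Polynomial.X_pow_dvd_iff]
  induction N with
  | zero => simp
  | succ N ih =>
    have h' : (fun t : ℝ => r.eval t) =O[𝓝[>] 0] fun t => t ^ N := by
      refine h.trans ?_
      have h1 : (fun t : ℝ => t) =O[𝓝[>] 0] fun _ => (1 : ℝ) :=
        (continuous_id.continuousAt.isBigO_one ℝ).mono nhdsWithin_le_nhds
      simpa [pow_succ] using (isBigO_refl (fun t : ℝ => t ^ N) (𝓝[>] 0)).mul h1
    obtain ⟨s, rfl⟩ := ih h'
    rw [pow_succ]
    refine mul_dvd_mul_left _ ?_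
    rw [Polynomial.X_dvd_iff]
    obtain ⟨C, hC⟩ := h.bound
    have h2 : ∀ᶠ t in 𝓝[>] (0 : ℝ), ‖s.eval t‖ ≤ C * t := by
      filter_upwards [hC, self_mem_nhdsWithin] with t ht (ht0 : 0 < t)
      simp only [Polynomial.eval_mul, Polynomial.eval_pow, Polynomial.eval_X, norm_mul, norm_pow,
        Real.norm_of_nonneg ht0.le] at ht ⊢
      have : t ^ N * ‖s.eval t‖ ≤ t ^ N * (C * t) := by rw [pow_succ] at ht; linarith
      exact le_of_mul_le_mul_left this (by positivity)
    have h3 : Tendsto (fun t : ℝ => s.eval t) (𝓝[>] 0) (𝓝 0) := by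
      refine squeeze_zero_norm' h2 ?_
      have : Tendsto (fun t : ℝ => C * t) (𝓝 0) (𝓝 (C * 0)) := (continuous_const.mul continuous_id).tendsto 0
      rw [mul_zero] at this
      exact this.mono_left nhdsWithin_le_nhds
    have h4 : Tendsto (fun t : ℝ => s.eval t) (𝓝[>] 0) (𝓝 (s.eval 0)) :=
      (s.continuous.tendsto 0).mono_left nhdsWithin_le_nhds
    rw [Polynomial.coeff_zero_eq_eval_zero]
    exact tendsto_nhds_unique h4 h3

theorem polyFun_hom_smul {n d : ℕ} {q : MvPolynomial (Fin n) ℝ} (hq : q.IsHomogeneous d) (t : ℝ)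
    (v : Eucl n) : polyFun q (t • v) = t ^ d * polyFun q v := by
  unfold polyFun
  rw [eval_eq', eval_eq', Finset.mul_sum]
  refine Finset.sum_congr rfl fun α hα => ?_
  have h11 : ∑ i, α i = d := by
    have := hq (mem_support_iff.1 hα)
    have h12 : α.degree = d := by rwa [Finsupp.degree_eq_weight_one]
    rwa [Finsupp.degree_eq_sum] at h12
  simp only [PiLp.smul_apply, smul_eq_mul, mul_pow, Finset.prod_mul_distrib, Finset.prod_pow_eq_pow_sum, h11]
  ring

theorem polyFun_comp {n : ℕ} (q : MvPolynomial (Fin n) ℝ) (v : Eucl n) : ∃ r : Polynomial ℝ,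
    (∀ t : ℝ, r.eval t = polyFun q (t • v)) ∧
      ∀ k, r.coeff k = polyFun (homogeneousComponent k q) v := by
  refine ⟨∑ k ∈ Finset.range (q.totalDegree + 1), Polynomial.monomial k (polyFun (homogeneousComponent k q) v), ?_, ?_⟩
  · intro t
    conv_rhs => rw [← sum_homogeneousComponent q]
    rw [Polynomial.eval_finsetSum]
    simp only [polyFun, map_sum]
    refine Finset.sum_congr rfl fun k _ => ?_
    have := polyFun_hom_smul (homogeneousComponent_isHomogeneous k q) t v
    simp only [polyFun] at this
    rw [this, Polynomial.eval_monomial, mul_comm]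
  · intro k
    rw [Polynomial.finsetSum_coeff]
    simp only [Polynomial.coeff_monomial]
    rw [Finset.sum_ite_eq' ]
    split_ifs with h
    · rfl
    · rw [homogeneousComponent_eq_zero _ _ (by simpa using h)]; simp [polyFun]

theorem polyFun_eq_zero {n : ℕ} {q : MvPolynomial (Fin n) ℝ} (h : ∀ v, polyFun q v = 0) : q = 0 := by
  refine MvPolynomial.funext fun x => ?_
  simpa [polyFun] using h (WithLp.toLp 2 x)

theorem comp_zero_of_growth {n N : ℕ} {q : MvPolynomial (Fin n) ℝ}
    (h : ∀ v : Eucl n, (fun t : ℝ => polyFun q (t • v)) =O[𝓝[>] 0] fun t => t ^ N) :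
    ∀ k < N, homogeneousComponent k q = 0 := by
  intro k hk
  refine polyFun_eq_zero fun v => ?_
  obtain ⟨r, hr, hc⟩ := polyFun_comp q v
  rw [← hc]
  refine poly_coeff_zero (N := N) ?_ k hk
  simpa only [hr] using h v

theorem growth_line {n N : ℕ} {f : Eucl n → ℝ} (h : f =O[𝓝 0] fun x => ‖x‖ ^ N) (v : Eucl n) :
    (fun t : ℝ => f (t • v)) =O[𝓝[>] 0] fun t => t ^ N := by
  have ht : Tendsto (fun t : ℝ => t • v) (𝓝[>] 0) (𝓝 0) := by
    have : Tendsto (fun t : ℝ => t • v) (𝓝 0) (𝓝 ((0:ℝ) • v)) :=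
      (continuous_id.smul continuous_const).tendsto 0
    rw [zero_smul] at this
    exact this.mono_left nhdsWithin_le_nhds
  refine (h.comp_tendsto ht).trans ?_
  refine IsBigO.of_bound (‖v‖ ^ N) (Eventually.of_forall fun t => ?_)
  simp [norm_smul, mul_pow, mul_comm]

theorem germ_h3 {n : ℕ} (q : MvPolynomial (Fin n) ℝ) (N : ℕ) (h : aeval (coord (n := n)) q ∈ mm n ^ N) :
    ∀ k < N, homogeneousComponent k q = 0 := by
  rw [aeval_coord] at h
  exact comp_zero_of_growth fun v => growth_line (growth_of_mem h) v

/-- Leading part. -/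
theorem exists_leading {n m : ℕ} {f : Eucl n → ℝ} (hf : ContDiff ℝ (⊤ : ℕ∞) f) (hf0 : f 0 = 0)
    (ho : HasOrderAt f 0 (m : ℝ)) :
    ∃ P : MvPolynomial (Fin n) ℝ, P.IsHomogeneous m ∧ P ≠ 0 ∧
      sg f hf - aeval coord P ∈ mm n ^ (m + 1) := by
  obtain ⟨q, hq⟩ := exists_approx (coord (n := n)) germ_h1 (m + 1) (sg f hf)
  have hq' := hq
  rw [aeval_coord, sg_sub] at hq'
  have hdiff := growth_of_mem hq'
  have hfO : ∀ v : Eucl n, (fun t : ℝ => f (t • v)) =O[𝓝[>] 0] fun t => t ^ m := by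
    intro v
    by_cases hv : v = 0
    · subst hv; simpa [hf0] using isBigO_zero _ _
    obtain ⟨L, hL⟩ := ho.1 v hv
    have h1 := hL.isBigO_one ℝ
    simp only [zero_add, Real.rpow_natCast, smul_eq_mul] at h1
    have h2 := (isBigO_refl (fun t : ℝ => t ^ m) (𝓝[>] 0)).mul h1
    simp only [mul_one] at h2
    refine EventuallyEq.trans_isBigO ?_ h2
    filter_upwards [self_mem_nhdsWithin] with t (ht : 0 < t)
    rw [mul_inv_cancel_left₀ (by positivity)]
  have hweak : ∀ v : Eucl n, (fun t : ℝ => f (t • v) - polyFun q (t • v)) =O[𝓝[>] 0] fun t => t ^ (m + 1) :=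
    fun v => growth_line hdiff v
  have hpw : (fun t : ℝ => t ^ (m + 1)) =O[𝓝[>] 0] fun t => t ^ m := by
    have h1 : (fun t : ℝ => t) =O[𝓝[>] 0] fun _ => (1 : ℝ) :=
      (continuous_id.continuousAt.isBigO_one ℝ).mono nhdsWithin_le_nhds
    simpa [pow_succ] using (isBigO_refl (fun t : ℝ => t ^ m) (𝓝[>] 0)).mul h1
  have hlow := comp_zero_of_growth (q := q) (N := m) fun v => by
    simpa using (hfO v).sub ((hweak v).trans hpw)
  have hP : sg f hf - aeval coord (homogeneousComponent m q) ∈ mm n ^ (m + 1) := by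
    have : aeval (coord (n := n)) q - aeval coord (homogeneousComponent m q) ∈ mm n ^ (m + 1) := by
      rw [← map_sub]
      have hs := sum_homogeneousComponent q
      have : q - homogeneousComponent m q =
          ∑ k ∈ (Finset.range (q.totalDegree + 1)).filter (fun k => m < k), homogeneousComponent k q := by
        ext α
        rw [coeff_sub, coeff_sum]
        simp only [coeff_homogeneousComponent]
        rw [Finset.sum_ite_eq]
        have h5 := fun h => congrArg (coeff α) (hlow (Finsupp.degree α) h)
        simp only [coeff_homogeneousComponent, if_true, coeff_zero] at h5
        rcases lt_trichotomy α.degree m with h | h | h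
        · simp [h5 h]
        · simp [h]
        · have h6 : α.degree < q.totalDegree + 1 ∨ coeff α q = 0 := by
            by_contra hcon
            push Not at hcon
            have := le_totalDegree (mem_support_iff.2 hcon.2)
            rw [Finsupp.degree_eq_sum] at hcon
            simp [Finsupp.sum_fintype] at this
            omega
          rcases h6 with h6 | h6
          · simp [h6, h, h.ne']
          · simp [h6]
      rw [this, map_sum]
      refine Ideal.sum_mem _ fun k hk => ?_
      exact Ideal.pow_le_pow_right (by have := (Finset.mem_filter.1 hk).2; omega) (aeval_mem_pow coord (homogeneousComponent_isHomogeneous k q))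
    have h7 := add_mem hq this
    simpa using h7
  refine ⟨homogeneousComponent m q, homogeneousComponent_isHomogeneous m q, ?_, hP⟩
  intro hz
  rw [hz, map_zero, sub_zero] at hP
  obtain ⟨v, hv, L, hL0, hL⟩ := ho.2
  have h8 := growth_line (growth_of_mem hP) v
  have h9 : Tendsto (fun t : ℝ => (t ^ (m : ℝ))⁻¹ • f (0 + t • v)) (𝓝[>] 0) (𝓝 0) := by
    have h10 := (isBigO_refl (fun t : ℝ => (t ^ m)⁻¹) (𝓝[>] 0)).mul h8
    simp only [zero_add, Real.rpow_natCast, smul_eq_mul]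
    refine h10.trans_tendsto ?_
    have h11 : Tendsto (fun t : ℝ => t) (𝓝[>] 0) (𝓝 0) := tendsto_id.mono_left nhdsWithin_le_nhds
    refine h11.congr' ?_
    filter_upwards [self_mem_nhdsWithin] with t (ht : 0 < t)
    rw [pow_succ, inv_mul_cancel_left₀ (by positivity)]
  exact hL0 (tendsto_nhds_unique hL h9)

theorem order_pos {n m : ℕ} {f : Eucl n → ℝ} (hf : ContDiff ℝ (⊤ : ℕ∞) f) (hf0 : f 0 = 0)
    (ho : HasOrderAt f 0 (m : ℝ)) : m ≠ 0 := by
  rintro rfl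
  obtain ⟨v, hv, L, hL0, hL⟩ := ho.2
  have : Tendsto (fun t : ℝ => f (t • v)) (𝓝 0) (𝓝 (f ((0:ℝ) • v))) :=
    (hf.continuous.comp (continuous_id.smul continuous_const)).tendsto 0
  rw [zero_smul, hf0] at this
  simp only [zero_add, Nat.cast_zero, Real.rpow_zero, inv_one, one_smul] at hL
  exact hL0 (tendsto_nhds_unique hL (this.mono_left nhdsWithin_le_nhds))

theorem inPart_eq {n m : ℕ} {f : Eucl n → ℝ} (hf : ContDiff ℝ (⊤ : ℕ∞) f)
    {P : MvPolynomial (Fin n) ℝ} (hP : P.IsHomogeneous m)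
    (h : sg f hf - aeval coord P ∈ mm n ^ (m + 1)) : inPart f m = polyFun P := by
  funext v
  rw [aeval_coord, sg_sub] at h
  have h1 := growth_line (growth_of_mem h) v
  let r : Polynomial ℝ := ∑ k ∈ Finset.range (m + 1), Polynomial.monomial k
    ((k.factorial : ℝ)⁻¹ • (iteratedFDeriv ℝ k f 0 (fun _ => v)))
  let R : ℝ → ℝ := fun t => ∫ s in (0:ℝ)..1, (1 - s) ^ m • iteratedFDeriv ℝ (m + 1) f (0 + s • (t • v)) (fun _ => v)
  have hT : ∀ t : ℝ, f (t • v) = r.eval t + t ^ (m + 1) * ((m.factorial : ℝ)⁻¹ * R t) := by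
    intro t
    have hcd : ContDiff ℝ (m + 1) f := hf.of_le (by exact_mod_cast le_top)
    have := map_add_eq_sum_add_integral_iteratedFDeriv (n := m) (f := f) (x := 0) (y := t • v)
      (fun s _ => hcd.contDiffAt)
    rw [zero_add] at this
    rw [this]
    have hk : ∀ (k : ℕ) (y : Eucl n), iteratedFDeriv ℝ k f y (fun _ => t • v) =
        t ^ k * iteratedFDeriv ℝ k f y (fun _ => v) := by
      intro k y
      have := (iteratedFDeriv ℝ k f y).map_smul_univ (fun _ => t) (fun _ => v)
      simpa using this
    congr 1
    · rw [Polynomial.eval_finsetSum]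
      refine Finset.sum_congr rfl fun k _ => ?_
      rw [Polynomial.eval_monomial, hk]; simp only [smul_eq_mul]; ring
    · simp only [hk, R, smul_eq_mul]
      rw [mul_left_comm (t ^ (m+1))]
      congr 1
      rw [← intervalIntegral.integral_const_mul]
      congr 1
      funext s
      ring
  have hR : Continuous R := by
    apply intervalIntegral.continuous_parametric_intervalIntegral_of_continuous'
    have : Continuous (iteratedFDeriv ℝ (m+1) f) := hf.continuous_iteratedFDeriv (by exact_mod_cast le_top)
    have h2 : Continuous fun y : ℝ × ℝ => iteratedFDeriv ℝ (m + 1) f (0 + y.2 • (y.1 • v)) :=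
      this.comp (by fun_prop)
    have h3 : Continuous fun y : ℝ × ℝ => iteratedFDeriv ℝ (m + 1) f (0 + y.2 • (y.1 • v)) (fun _ => v) :=
      h2.eval_const _
    exact (by fun_prop : Continuous fun y : ℝ × ℝ => (1 - y.2) ^ m).smul h3
  have hRO : (fun t : ℝ => t ^ (m + 1) * ((m.factorial : ℝ)⁻¹ * R t)) =O[𝓝[>] 0] fun t => t ^ (m + 1) := by
    have h4 : (fun t => (m.factorial : ℝ)⁻¹ * R t) =O[𝓝[>] 0] fun _ => (1:ℝ) :=
      ((continuous_const.mul hR).continuousAt.isBigO_one ℝ).mono nhdsWithin_le_nhds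
    simpa using (isBigO_refl (fun t : ℝ => t ^ (m+1)) (𝓝[>] 0)).mul h4
  have h5 : (fun t : ℝ => (r - Polynomial.monomial m (polyFun P v)).eval t) =O[𝓝[>] 0] fun t => t ^ (m + 1) := by
    refine (h1.sub hRO).congr_left fun t => ?_
    rw [hT, polyFun_hom_smul hP, Polynomial.eval_sub, Polynomial.eval_monomial]
    ring
  have h6 := poly_coeff_zero h5 m (Nat.lt_succ_self m)
  rw [Polynomial.coeff_sub, Polynomial.coeff_monomial, if_pos rfl, sub_eq_zero] at h6
  rw [← h6, Polynomial.finsetSum_coeff]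
  simp only [Polynomial.coeff_monomial]
  rw [Finset.sum_ite_eq', if_pos (by simp)]
  rfl

end
end HelperAn3

section HelperAn4
open MvPolynomial Filter Topology Asymptotics

noncomputable section

/-- partial derivative as a function -/
def pd {n : ℕ} (i : Fin n) (f : Eucl n → ℝ) : Eucl n → ℝ :=
  fun x => fderiv ℝ f x (EuclideanSpace.single i 1)

theorem contDiff_pd {n : ℕ} (i : Fin n) {f : Eucl n → ℝ} (hf : ContDiff ℝ (⊤ : ℕ∞) f) :
    ContDiff ℝ (⊤ : ℕ∞) (pd i f) :=
  (hf.fderiv_right (m := (⊤ : ℕ∞)) (by simp)).clm_apply contDiff_const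

/-- derivative on germs -/
def Dg {n : ℕ} (i : Fin n) (a : smoothGerms n) : smoothGerms n :=
  sg (pd i (exists_sg a).choose) (contDiff_pd i (exists_sg a).choose_spec.choose)

theorem Dg_sg {n : ℕ} (i : Fin n) {f : Eucl n → ℝ} (hf : ContDiff ℝ (⊤ : ℕ∞) f) :
    Dg i (sg f hf) = sg (pd i f) (contDiff_pd i hf) := by
  have h := (exists_sg (sg f hf)).choose_spec.choose_spec
  rw [sg_eq_iff] at h
  rw [Dg, sg_eq_iff]
  filter_upwards [h.fderiv (𝕜 := ℝ)] with x hx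
  rw [pd, pd, hx]

theorem Dg_add {n : ℕ} (i : Fin n) (a b : smoothGerms n) : Dg i (a + b) = Dg i a + Dg i b := by
  obtain ⟨f, hf, rfl⟩ := exists_sg a
  obtain ⟨g, hg, rfl⟩ := exists_sg b
  rw [sg_add, Dg_sg, Dg_sg, Dg_sg, sg_add, sg_eq_iff]
  refine Eventually.of_forall fun x => ?_
  have h1 : DifferentiableAt ℝ f x := (hf.differentiable (by simp)).differentiableAt
  have h2 : DifferentiableAt ℝ g x := (hg.differentiable (by simp)).differentiableAt
  simp only [pd]
  rw [fderiv_fun_add h1 h2]; rfl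

theorem Dg_mul {n : ℕ} (i : Fin n) (a b : smoothGerms n) :
    Dg i (a * b) = a * Dg i b + b * Dg i a := by
  obtain ⟨f, hf, rfl⟩ := exists_sg a
  obtain ⟨g, hg, rfl⟩ := exists_sg b
  rw [sg_mul, Dg_sg, Dg_sg, Dg_sg, sg_mul, sg_mul, sg_add, sg_eq_iff]
  refine Eventually.of_forall fun x => ?_
  have h1 : DifferentiableAt ℝ f x := (hf.differentiable (by simp)).differentiableAt
  have h2 : DifferentiableAt ℝ g x := (hg.differentiable (by simp)).differentiableAt
  simp only [pd]
  rw [fderiv_fun_mul h1 h2]; rfl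

theorem Dg_const {n : ℕ} (i : Fin n) (c : ℝ) : Dg i (algebraMap ℝ (smoothGerms n) c) = 0 := by
  rw [sg_const, Dg_sg]
  have : (0 : smoothGerms n) = sg (fun _ => 0) contDiff_const := rfl
  rw [this, sg_eq_iff]
  exact Eventually.of_forall fun x => by simp [pd]

theorem Dg_coord {n : ℕ} (i j : Fin n) : Dg i (coord (n := n) j) = if j = i then 1 else 0 := by
  have h : Dg i (coord (n := n) j) = algebraMap ℝ (smoothGerms n) (if j = i then 1 else 0) := by
    rw [coord, Dg_sg, sg_const, sg_eq_iff]
    refine Eventually.of_forall fun x => ?_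
    have : fderiv ℝ (fun x : Eucl n => x j) x = EuclideanSpace.proj (𝕜 := ℝ) j :=
      (EuclideanSpace.proj (𝕜 := ℝ) j).hasFDerivAt.fderiv
    simp only [pd, this]
    simp
  rw [h]; split_ifs <;> simp

theorem Dg_aeval {n : ℕ} (i : Fin n) (q : MvPolynomial (Fin n) ℝ) :
    Dg i (aeval coord q) = aeval coord (pderiv i q) := by
  induction q using MvPolynomial.induction_on with
  | C a => rw [aeval_C, Dg_const]; simp
  | add p q hp hq => rw [map_add, Dg_add, hp, hq, map_add, map_add]
  | mul_X p j hp =>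
    rw [map_mul, Dg_mul, hp, aeval_X, Dg_coord, Derivation.leibniz, pderiv_X, map_add]
    simp only [smul_eq_mul, map_mul, aeval_X, Pi.single_apply]
    split_ifs <;> simp

theorem Dg_sub {n : ℕ} (i : Fin n) (a b : smoothGerms n) : Dg i (a - b) = Dg i a - Dg i b := by
  have := Dg_add i (a - b) b
  rw [sub_add_cancel] at this
  rw [this]; ring

theorem Dg_mem {n N : ℕ} (i : Fin n) {a : smoothGerms n} (ha : a ∈ mm n ^ (N + 1)) :
    Dg i a ∈ mm n ^ N := by
  induction N generalizing a with
  | zero => simp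
  | succ N ih =>
    rw [pow_succ] at ha
    refine Submodule.mul_induction_on ha ?_ ?_
    · intro b hb c hc
      rw [Dg_mul]
      refine add_mem (Ideal.mul_mem_right _ _ hb) ?_
      rw [mul_comm, pow_succ]
      exact Ideal.mul_mem_mul (ih hb) hc
    · intro b c hb hc
      rw [Dg_add]; exact add_mem hb hc

theorem jacobianIdeal_eq {n : ℕ} {f : Eucl n → ℝ} (hf : ContDiff ℝ (⊤ : ℕ∞) f) :
    jacobianIdeal n f = Ideal.span (Set.range fun i => Dg i (sg f hf)) := by
  unfold jacobianIdeal
  congr 1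
  ext a
  simp only [Set.mem_ofPred_eq, Set.mem_range, Dg_sg]
  refine exists_congr fun i => ?_
  constructor
  · intro h; exact Subtype.ext h.symm
  · intro h; rw [← h]; rfl

theorem finite_of_rank_lt {E : Type*} [CommRing E] [Algebra ℝ E] {J : Ideal E}
    (h : Module.rank ℝ (E ⧸ J) < Cardinal.aleph0) : Module.Finite ℝ (E ⧸ J) :=
  Module.rank_lt_aleph0_iff.1 h

theorem milnor_eq {n m : ℕ} {f : Eucl n → ℝ} (hf : ContDiff ℝ (⊤ : ℕ∞) f) (hf0 : f 0 = 0)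
    (ho : HasOrderAt f 0 (m : ℝ)) (hfin : milnor n (inPart f m) < Cardinal.aleph0) :
    milnor n f = (((m - 1) ^ n : ℕ) : Cardinal) := by
  have hm := order_pos hf hf0 ho
  obtain ⟨d, rfl⟩ := Nat.exists_eq_succ_of_ne_zero hm
  have hn : n ≠ 0 := by
    rintro rfl
    obtain ⟨v, hv, _⟩ := ho.2
    exact hv (Subsingleton.elim _ _)
  obtain ⟨P, hP, hP0, hPf⟩ := exists_leading hf hf0 ho
  rw [milnor, inPart_eq hf hP hPf, jacobianIdeal_eq (contDiff_polyFun P), ← aeval_coord] at hfin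
  have hDg : (fun i => Dg i (aeval (coord (n := n)) P)) = fun i => aeval coord (pderiv i P) :=
    funext fun i => Dg_aeval i P
  rw [hDg] at hfin
  replace hfin := finite_of_rank_lt hfin
  rw [milnor, jacobianIdeal_eq hf]
  have hd : d.succ - 1 = d := rfl
  rw [hd]
  refine main_alg (coord (n := n)) germ_h1 germ_h2 germ_h3 hn (d := d) (p := fun i => pderiv i P)
    (fun i => ?_) ?_ (fun i => ?_) hfin
  · exact hP.pderiv
  · by_contra hcon
    push Not at hcon
    have h1 := hP.sum_X_mul_pderiv
    simp only [hcon] at h1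
    simp at h1
    exact hP0 (h1.resolve_left (by exact_mod_cast Nat.succ_ne_zero d))
  · rw [← Dg_aeval, ← Dg_sub]
    exact Dg_mem i hPf

theorem growth_of_order {n m : ℕ} {f : Eucl n → ℝ} (hf : ContDiff ℝ (⊤ : ℕ∞) f) (hf0 : f 0 = 0)
    (ho : HasOrderAt f 0 (m : ℝ)) : f =O[𝓝 0] fun x => ‖x‖ ^ m := by
  obtain ⟨P, hP, hP0, hPf⟩ := exists_leading hf hf0 ho
  have : sg f hf ∈ mm n ^ m := by
    have h1 := add_mem (Ideal.pow_le_pow_right (Nat.le_succ m) hPf) (aeval_mem_pow coord hP)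
    simpa using h1
  exact growth_of_mem this

theorem order_ge {n m k : ℕ} {f : Eucl n → ℝ} 
    (ho : HasOrderAt f 0 (m : ℝ)) (hO : f =O[𝓝 0] fun x => ‖x‖ ^ k) : k ≤ m := by
  by_contra hlt
  push Not at hlt
  obtain ⟨j, rfl⟩ : ∃ j, k = m + (j + 1) := ⟨k - m - 1, by omega⟩
  obtain ⟨v, hv, L, hL0, hL⟩ := ho.2
  have h8 := growth_line hO v
  have h9 : Tendsto (fun t : ℝ => (t ^ (m : ℝ))⁻¹ • f (0 + t • v)) (𝓝[>] 0) (𝓝 0) := by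
    have h10 := (isBigO_refl (fun t : ℝ => (t ^ m)⁻¹) (𝓝[>] 0)).mul h8
    simp only [zero_add, Real.rpow_natCast, smul_eq_mul]
    refine h10.trans_tendsto ?_
    have h11 : Tendsto (fun t : ℝ => t ^ (j + 1)) (𝓝 0) (𝓝 (0 ^ (j + 1))) :=
      (continuous_pow (j + 1)).tendsto 0
    rw [zero_pow (by omega)] at h11
    refine (h11.mono_left nhdsWithin_le_nhds).congr' ?_
    filter_upwards [self_mem_nhdsWithin] with t (ht : 0 < t)
    rw [pow_add t m (j + 1), inv_mul_cancel_left₀ (by positivity)]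
  exact hL0 (tendsto_nhds_unique hL h9)

theorem order_eq {n m k : ℕ} {f g : Eucl n → ℝ} (hf : ContDiff ℝ (⊤ : ℕ∞) f) (hf0 : f 0 = 0)
    (hg : ContDiff ℝ (⊤ : ℕ∞) g) (hg0 : g 0 = 0)
    (hof : HasOrderAt f 0 (m : ℝ)) (hog : HasOrderAt g 0 (k : ℝ))
    {φ : Eucl n → Eucl n} (hφ : IsLipeoGermAt φ) (he : ∀ᶠ x in 𝓝 (0 : Eucl n), f x = g (φ x)) :
    m = k := by
  obtain ⟨hφ0, U, W, hU, hW, hbij, c, hc, hlip⟩ := hφ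
  have h0U : (0 : Eucl n) ∈ U := mem_of_mem_nhds hU
  have hup : ∀ x ∈ U, ‖φ x‖ ≤ c * ‖x‖ := fun x hx => by simpa [hφ0] using (hlip x hx 0 h0U).2
  have hlo : ∀ x ∈ U, ‖x‖ ≤ c * ‖φ x‖ := fun x hx => by
    have h1 : 1 / c * ‖x‖ ≤ ‖φ x‖ := by simpa [hφ0] using (hlip x hx 0 h0U).1
    have hc0 : 0 < c := by linarith
    have h2 := mul_le_mul_of_nonneg_left h1 hc0.le
    rwa [← mul_assoc, mul_one_div_cancel hc0.ne', one_mul] at h2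
  apply le_antisymm
  · -- g = O(‖y‖^m)
    apply order_ge hog
    obtain ⟨C, hCpos, hC⟩ := (growth_of_order hf hf0 hof).exists_pos
    have hC := hC.bound
    obtain ⟨r, hr, hball⟩ := Metric.eventually_nhds_iff_ball.1 (he.and hC)
    refine IsBigO.of_bound (C * c ^ m) ?_
    have hsmall : ∀ᶠ y in 𝓝 (0 : Eucl n), y ∈ Metric.ball (0 : Eucl n) (r / c) :=
      Metric.ball_mem_nhds _ (by positivity)
    filter_upwards [hW, hsmall] with y hy hyr
    obtain ⟨x, hx, rfl⟩ := hbij.surjOn hy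
    have h3 := hlo x hx
    have hxr : x ∈ Metric.ball (0 : Eucl n) r := by
      rw [mem_ball_zero_iff] at hyr ⊢
      rw [lt_div_iff₀ (by linarith)] at hyr
      linarith
    obtain ⟨h4, h5⟩ := hball x hxr
    rw [← h4]
    refine h5.trans ?_
    rw [norm_pow, norm_pow, norm_norm, norm_norm, mul_assoc, ← mul_pow]
    gcongr
  · apply order_ge hof
    obtain ⟨C, hCpos, hC⟩ := (growth_of_order hg hg0 hog).exists_pos
    have hC := hC.bound
    obtain ⟨r, hr, hball⟩ := Metric.eventually_nhds_iff_ball.1 hC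
    refine IsBigO.of_bound (C * c ^ k) ?_
    have hsmall : ∀ᶠ y in 𝓝 (0 : Eucl n), y ∈ Metric.ball (0 : Eucl n) (r / c) :=
      Metric.ball_mem_nhds _ (by positivity)
    filter_upwards [hU, hsmall, he] with x hx hxr hex
    have h3 := hup x hx
    have hyr : φ x ∈ Metric.ball (0 : Eucl n) r := by
      rw [mem_ball_zero_iff] at hxr ⊢
      rw [lt_div_iff₀ (by linarith)] at hxr
      linarith
    rw [hex]
    refine (hball _ hyr).trans ?_
    rw [norm_pow, norm_pow, norm_norm, norm_norm, mul_assoc, ← mul_pow]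
    gcongr

end
end HelperAn4

/-- if `{f_t}` is an `R`-bi-Lipschitz trivial family of `C^∞` germs
`(ℝ^n, 0) → (ℝ, 0)` such that each `f_t` has finite order and `μ(in(f_t)) < ∞`, then
`μ(f_t) = μ(f_0)` for all `t ∈ [0, 1]`. -/
theorem milnor_constant_of_biLipschitz_trivial {n : ℕ} (f : ℝ → Eucl n → ℝ)
    (hsm : ∀ t ∈ Icc (0 : ℝ) 1, ContDiff ℝ (⊤ : ℕ∞) (f t))
    (h0 : ∀ t ∈ Icc (0 : ℝ) 1, f t 0 = 0)
    (htriv : ∀ t ∈ Icc (0 : ℝ) 1, ∃ φ : Eucl n → Eucl n,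
      IsLipeoGermAt φ ∧ ∀ᶠ x in 𝓝 (0 : Eucl n), f t x = f 0 (φ x))
    (hiso : ∀ t ∈ Icc (0 : ℝ) 1, ∃ m : ℕ, HasOrderAt (f t) 0 (m : ℝ) ∧
      milnor n (inPart (f t) m) < Cardinal.aleph0) :
    ∀ t ∈ Icc (0 : ℝ) 1, milnor n (f t) = milnor n (f 0) := by
  intro t ht
  have hz : (0 : ℝ) ∈ Icc (0 : ℝ) 1 := by simp
  obtain ⟨m, hm, hmf⟩ := hiso t ht
  obtain ⟨k, hk, hkf⟩ := hiso 0 hz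
  obtain ⟨φ, hφ, he⟩ := htriv t ht
  have := order_eq (hsm t ht) (h0 t ht) (hsm 0 hz) (h0 0 hz) hm hk hφ he
  rw [milnor_eq (hsm t ht) (h0 t ht) hm hmf, milnor_eq (hsm 0 hz) (h0 0 hz) hk hkf, this]
end
end

section
/- Let f, g : (ℝ^n,0) → (ℝ,0) be germs of C^∞ functions such that f has finite order and its initial part in(f) has an algebraically isolated singularity at the origin, i.e. μ(in(f)) < +∞. If f and g are R-C^1 equivalent, then μ(f) = μ(g). -/
open Filter Set Metric Topology Asymptotics

noncomputable section

set_option synthInstance.maxHeartbeats 1000000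

variable {V W : Type*} [NormedAddCommGroup V] [NormedSpace ℝ V]
  [NormedAddCommGroup W] [NormedSpace ℝ W]

/-- `φ` is a germ at `0` of a `C^k` diffeomorphism `(ℝ^n, 0) → (ℝ^n, 0)`. -/
def IsCkDiffeoGermAt {n : ℕ} (k : ℕ∞) (φ : Eucl n → Eucl n) : Prop :=
  φ 0 = 0 ∧ ∃ U V : Set (Eucl n), IsOpen U ∧ IsOpen V ∧ 0 ∈ U ∧ 0 ∈ V ∧
    Set.BijOn φ U V ∧ ContDiffOn ℝ k φ U ∧ ∃ ψ : Eucl n → Eucl n,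
      ContDiffOn ℝ k ψ V ∧ (∀ x ∈ U, ψ (φ x) = x) ∧ ∀ y ∈ V, φ (ψ y) = y

namespace MilnorAux

lemma alt_split {R : Type*} [CommRing R] {n p : ℕ} (I : Ideal R) (y : R)
    (w : (Fin n → R) [⋀^Fin p]→ₗ[R] R) (hw : ∀ v, w v ∈ I ⊔ Ideal.span {y}) :
    ∃ u : (Fin n → R) [⋀^Fin p]→ₗ[R] R, ∀ v, w v - y * u v ∈ I := by
  let T : R →ₗ[R] (R ⧸ I) := I.mkQ.comp (LinearMap.mulLeft R y)
  have hmem : ∀ v, I.mkQ (w v) ∈ LinearMap.range T := by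
    intro v
    obtain ⟨a, ha, b, hb, hab⟩ := Submodule.mem_sup.1 (hw v)
    obtain ⟨c, rfl⟩ := Ideal.mem_span_singleton.1 hb
    refine ⟨c, ?_⟩
    simp only [T, LinearMap.comp_apply, LinearMap.mulLeft_apply, Submodule.mkQ_apply]
    rw [eq_comm, Submodule.Quotient.eq, ← hab]
    simpa using ha
  let wb : (Fin n → R) [⋀^Fin p]→ₗ[R] LinearMap.range T :=
    (I.mkQ.compAlternatingMap w).codRestrict (LinearMap.range T) hmem
  obtain ⟨h, hh⟩ := Module.projective_lifting_property T.rangeRestrict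
    (exteriorPower.alternatingMapLinearEquiv wb) T.surjective_rangeRestrict
  refine ⟨exteriorPower.alternatingMapLinearEquiv.symm h, fun v => ?_⟩
  have h1 := LinearMap.congr_fun hh (exteriorPower.ιMulti R p v)
  rw [exteriorPower.alternatingMapLinearEquiv_apply_ιMulti] at h1
  have h2 := congrArg Subtype.val h1
  rw [exteriorPower.alternatingMapLinearEquiv_symm_apply]
  have h3 : I.mkQ (y * h (exteriorPower.ιMulti R p v)) = I.mkQ (w v) := h2
  rw [Submodule.mkQ_apply, Submodule.mkQ_apply, eq_comm, Submodule.Quotient.eq] at h3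
  exact h3

lemma alt_zero {R : Type*} [CommRing R] {n : ℕ}
    (w : (Fin n → R) [⋀^Fin (n+1)]→ₗ[R] R) : w = 0 := by
  refine Module.Basis.ext_alternating (Pi.basisFun R (Fin n)) ?_
  intro v hv
  exact absurd (Fintype.card_le_of_injective v hv) (by simp)

/-- wedge with a linear functional, contracted -/
lemma wedge_contract {R : Type*} [CommRing R] {n p : ℕ} (ε : (Fin n → R) →ₗ[R] R)
    (P : Fin n → R) (I : Ideal R) (z : (Fin n → R) [⋀^Fin (p+1)]→ₗ[R] R)
    (hz : ∀ v : Fin p → (Fin n → R), z (Fin.cons P v) ∈ I) :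
    ∃ w : (Fin n → R) [⋀^Fin (p+2)]→ₗ[R] R,
      ∀ v : Fin (p+1) → (Fin n → R), w (Fin.cons P v) - ε P * z v ∈ I := by
  refine ⟨AlternatingMap.alternatizeUncurryFin (ε.smulRight z), fun v => ?_⟩
  rw [AlternatingMap.alternatizeUncurryFin_apply, Fin.sum_univ_succ]
  simp only [Fin.val_zero, pow_zero, one_smul, Fin.cons_zero, LinearMap.smulRight_apply,
    AlternatingMap.smul_apply, smul_eq_mul, Fin.cons_succ, Fin.val_succ]
  rw [Fin.removeNth_zero, Fin.tail_cons, add_sub_cancel_left]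
  refine Ideal.sum_mem _ fun i _ => ?_
  have : Fin.removeNth (i.succ) (Fin.cons P v : Fin (p+2) → (Fin n → R))
      = Fin.cons P (Fin.removeNth i v) := by
    ext1 j
    refine Fin.cases ?_ (fun j => ?_) j
    · simp [Fin.removeNth]
    · simp [Fin.removeNth]
  rw [this]
  exact zsmul_mem (Ideal.mul_mem_left _ _ (hz _)) _

def KI {R : Type*} [CommRing R] {n : ℕ} (y : Fin n → R) (k : ℕ) : Ideal R :=
  Ideal.span (y '' {j | (j : ℕ) < k})

lemma koszul_gen {R : Type*} [CommRing R] {n : ℕ} (P : Fin n → R) (y : Fin n → R)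
    (hy : ∀ i, y i ∈ Ideal.span (range P))
    (hreg : ∀ k : Fin n, ∀ a, y k * a ∈ KI y k → a ∈ KI y k)
    (k : ℕ) (hk : k ≤ n) :
    ∀ z : (Fin n → R) [⋀^Fin (k+1)]→ₗ[R] R,
      (∀ v : Fin k → (Fin n → R), z (Fin.cons P v) ∈ KI y k) →
      ∃ u : (Fin n → R) [⋀^Fin (k+2)]→ₗ[R] R,
        ∀ v : Fin (k+1) → (Fin n → R), z v - u (Fin.cons P v) ∈ KI y k := by
  induction hk using Nat.decreasingInduction with
  | self =>
    intro z _
    refine ⟨0, fun v => ?_⟩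
    rw [alt_zero z]; simp
  | of_succ k hk ih =>
    intro z hz
    have hI : KI y (k+1) = KI y k ⊔ Ideal.span {y ⟨k, hk⟩} := by
      rw [KI, KI, ← Ideal.span_union, ← Set.image_singleton, ← Set.image_union]
      congr 2
      ext j
      simp [Fin.ext_iff]; omega
    obtain ⟨c, hc⟩ := (Ideal.mem_span_range_iff_exists_fun).1 (hy ⟨k, hk⟩)
    let ε : (Fin n → R) →ₗ[R] R := ∑ i, c i • LinearMap.proj i
    have hε : ε P = y ⟨k, hk⟩ := by simp [ε, ← hc]
    obtain ⟨w, hw⟩ := wedge_contract ε P (KI y k) z hz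
    rw [hε] at hw
    obtain ⟨u, hu⟩ := ih w (by
      intro v
      rw [hI]
      rw [← sub_add_cancel (w _) (y ⟨k, hk⟩ * z v)]
      exact add_mem (Ideal.mem_sup_left (hw v)) (Ideal.mem_sup_right
        (Ideal.mul_mem_right _ _ (Ideal.subset_span rfl))))
    obtain ⟨t, ht⟩ := alt_split (KI y k) (y ⟨k, hk⟩) (w - u.curryLeft P) (by
      intro v; rw [← hI]; exact hu v)
    refine ⟨t, fun v => ?_⟩
    apply hreg ⟨k, hk⟩
    have h1 := ht (Fin.cons P v)
    have h2 := hw v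
    have h3 : u.curryLeft P (Fin.cons P v) = 0 := by
      have := u.curryLeft_same P
      exact congrArg (fun f => f v) this
    rw [AlternatingMap.sub_apply, h3] at h1
    have := sub_mem h1 h2
    convert this using 1
    ring

lemma koszul_H1 {R : Type*} [CommRing R] {n : ℕ} (P : Fin n → R) (y : Fin n → R)
    (hy : ∀ i, y i ∈ Ideal.span (range P))
    (hreg : ∀ k : Fin n, ∀ a, y k * a ∈ KI y k → a ∈ KI y k)
    (a : Fin n → R) (ha : ∑ i, a i * P i = 0) :
    ∃ C : Fin n → Fin n → R, (∀ i j, C i j = - C j i) ∧ ∀ i, a i = ∑ j, C i j * P j := by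
  let L : (Fin n → R) →ₗ[R] R := ∑ i, a i • LinearMap.proj i
  let z : (Fin n → R) [⋀^Fin 1]→ₗ[R] R := AlternatingMap.ofSubsingleton R _ _ 0 L
  have hz : ∀ v, z v = L (v 0) := fun v => rfl
  obtain ⟨u, hu⟩ := koszul_gen P y hy hreg 0 (Nat.zero_le _) z (by
    intro v
    rw [hz]
    simp [L, ha])
  have hI : KI y 0 = ⊥ := by simp [KI]
  let b := Pi.basisFun R (Fin n)
  refine ⟨fun i j => u ![b j, b i], fun i j => ?_, fun i => ?_⟩
  · have := u.map_swap ![b i, b j] (show (0 : Fin 2) ≠ 1 by decide)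
    rw [← this]
    refine congrArg u ?_
    funext k
    fin_cases k <;> simp
  · have h := hu ![b i]
    rw [hI, Ideal.mem_bot, sub_eq_zero, hz] at h
    have hL : L (b i) = a i := by simp [L, b, Pi.single_apply]
    simp only [Matrix.cons_val_zero] at h
    rw [hL] at h
    rw [h]
    have hP : P = ∑ j, P j • b j := by
      ext k; simp [b, Pi.single_apply]
    change u.curryLeft P ![b i] = _
    conv_lhs => rw [hP]
    rw [map_sum]
    simp only [map_smul]
    have : ∀ (s : Finset (Fin n)) (F : Fin n → (Fin n → R) [⋀^Fin 1]→ₗ[R] R), (∑ j ∈ s, F j) ![b i] = ∑ j ∈ s, F j ![b i] := by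
      intro s F
      induction s using Finset.cons_induction with
      | empty => rfl
      | cons c s hc ih => rw [Finset.sum_cons, Finset.sum_cons, AlternatingMap.add_apply, ih]
    rw [this]
    refine Finset.sum_congr rfl fun j _ => ?_
    rw [AlternatingMap.smul_apply, smul_eq_mul, mul_comm]
    rfl

end MilnorAux

namespace MilnorAux
open MvPolynomial

section poly
variable {n : ℕ}

lemma hc_mul {d : ℕ} (C P : MvPolynomial (Fin n) ℝ) (hP : P.IsHomogeneous d) (k : ℕ) :
    homogeneousComponent k (C * P) =
      if d ≤ k then homogeneousComponent (k - d) C * P else 0 := by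
  let _ : GradedAlgebra (homogeneousSubmodule (Fin n) ℝ) := MvPolynomial.gradedAlgebra
  have h := DirectSum.coe_decompose_mul_of_right_mem (𝒜 := homogeneousSubmodule (Fin n) ℝ)
    (a := C) (b := P) (i := d) k hP
  have h2 : ∀ (φ : MvPolynomial (Fin n) ℝ) (i : ℕ),
    ((DirectSum.decompose (homogeneousSubmodule (Fin n) ℝ) φ i : _) : MvPolynomial (Fin n) ℝ)
      = homogeneousComponent i φ := fun φ i => decomposition.decompose'_apply φ i
  rw [h2, h2] at h
  exact h

/-- homogeneous of degree `k - d`, or zero -/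
def HD (d k : ℕ) (A : MvPolynomial (Fin n) ℝ) : Prop :=
  A = 0 ∨ ∃ e, e + d = k ∧ A.IsHomogeneous e

def hdc (d k : ℕ) (A : MvPolynomial (Fin n) ℝ) : MvPolynomial (Fin n) ℝ :=
  if d ≤ k then homogeneousComponent (k - d) A else 0

lemma hdc_HD (d k : ℕ) (A : MvPolynomial (Fin n) ℝ) : HD d k (hdc d k A) := by
  unfold hdc HD
  split_ifs with h
  · exact Or.inr ⟨k - d, by omega, homogeneousComponent_isHomogeneous _ _⟩
  · exact Or.inl rfl

lemma hc_mul' {d : ℕ} (C P : MvPolynomial (Fin n) ℝ) (hP : P.IsHomogeneous d) (k : ℕ) :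
    homogeneousComponent k (C * P) = hdc d k C * P := by
  rw [hc_mul C P hP k, hdc]
  split_ifs <;> simp

lemma hc_sum_mul {d : ℕ} (c P : Fin n → MvPolynomial (Fin n) ℝ)
    (hP : ∀ i, (P i).IsHomogeneous d) (k : ℕ) :
    homogeneousComponent k (∑ i, c i * P i) = ∑ i, hdc d k (c i) * P i := by
  rw [map_sum]
  exact Finset.sum_congr rfl fun i _ => hc_mul' _ _ (hP i) k

lemma hc_span {d : ℕ} (P : Fin n → MvPolynomial (Fin n) ℝ)
    (hP : ∀ i, (P i).IsHomogeneous d) {p : MvPolynomial (Fin n) ℝ}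
    (hp : p ∈ Ideal.span (range P)) (k : ℕ) :
    homogeneousComponent k p ∈ Ideal.span (range P) := by
  obtain ⟨c, rfl⟩ := Ideal.mem_span_range_iff_exists_fun.1 hp
  rw [hc_sum_mul c P hP]
  exact Ideal.mem_span_range_iff_exists_fun.2 ⟨_, rfl⟩

lemma homog_span {d k : ℕ} (P : Fin n → MvPolynomial (Fin n) ℝ)
    (hP : ∀ i, (P i).IsHomogeneous d) {Q : MvPolynomial (Fin n) ℝ} (hQ : Q.IsHomogeneous k)
    (hp : Q ∈ Ideal.span (range P)) :
    ∃ A : Fin n → MvPolynomial (Fin n) ℝ, Q = ∑ i, A i * P i ∧ ∀ i, HD d k (A i) := by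
  obtain ⟨c, rfl⟩ := Ideal.mem_span_range_iff_exists_fun.1 hp
  refine ⟨fun i => hdc d k (c i), ?_, fun i => hdc_HD _ _ _⟩
  rw [← hc_sum_mul c P hP, homogeneousComponent_eq_self hQ]

lemma X_pow_reg (N : ℕ) (k : Fin n) (a : MvPolynomial (Fin n) ℝ)
    (h : (X k ^ N) * a ∈ KI (fun i : Fin n => (X i : MvPolynomial (Fin n) ℝ) ^ N) k) :
    a ∈ KI (fun i : Fin n => (X i : MvPolynomial (Fin n) ℝ) ^ N) k := by
  have hK : KI (fun i : Fin n => (X i : MvPolynomial (Fin n) ℝ) ^ N) k =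
      Ideal.span ((fun s => monomial s (1 : ℝ)) ''
        ((fun i : Fin n => Finsupp.single i N) '' {j | (j : ℕ) < k})) := by
    rw [KI, Set.image_image]
    congr 2
    ext1 i
    rw [X_pow_eq_monomial]
  rw [hK, mem_ideal_span_monomial_image] at h ⊢
  intro s hs
  obtain ⟨_, ⟨j, hj, rfl⟩, hle⟩ := h (Finsupp.single k N + s) (by
    rw [mem_support_iff, X_pow_eq_monomial, coeff_monomial_mul, one_mul]
    exact mem_support_iff.1 hs)
  refine ⟨_, ⟨j, hj, rfl⟩, ?_⟩
  have hjk : k ≠ j := by rintro rfl; exact absurd hj (by simp)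
  simp only [Finsupp.single_le_iff, Finsupp.add_apply] at hle ⊢
  rwa [Finsupp.single_eq_of_ne (Ne.symm hjk), zero_add] at hle

lemma syzygy {d k N : ℕ} (P : Fin n → MvPolynomial (Fin n) ℝ)
    (hP : ∀ i, (P i).IsHomogeneous d)
    (hN : ∀ Q : MvPolynomial (Fin n) ℝ, Q.IsHomogeneous N → Q ∈ Ideal.span (range P))
    (A : Fin n → MvPolynomial (Fin n) ℝ) (hA : ∀ i, (A i).IsHomogeneous k)
    (h0 : ∑ i, A i * P i = 0) :
    ∃ C : Fin n → Fin n → MvPolynomial (Fin n) ℝ, (∀ i j, C i j = - C j i) ∧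
      (∀ i j, HD d k (C i j)) ∧ ∀ i, A i = ∑ j, C i j * P j := by
  obtain ⟨C, hC, hAC⟩ := koszul_H1 P (fun i : Fin n => (X i : MvPolynomial (Fin n) ℝ) ^ N)
    (fun i => hN _ (isHomogeneous_X_pow i N)) (fun k a h => X_pow_reg N k a h) A h0
  refine ⟨fun i j => hdc d k (C i j), fun i j => ?_, fun i j => hdc_HD _ _ _, fun i => ?_⟩
  · simp only [hdc]
    split_ifs
    · rw [hC i j, map_neg]
    · simp
  · rw [← hc_sum_mul _ P hP, ← hAC i, homogeneousComponent_eq_self (hA i)]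

lemma exists_B {d : ℕ} (P : Fin n → MvPolynomial (Fin n) ℝ)
    (hP : ∀ i, (P i).IsHomogeneous d) :
    ∃ B : Submodule ℝ (MvPolynomial (Fin n) ℝ),
      (∀ k, ∀ b ∈ B, homogeneousComponent k b ∈ B) ∧
      (∀ b ∈ B, b ∈ Ideal.span (range P) → b = 0) ∧
      (∀ k, ∀ Q : MvPolynomial (Fin n) ℝ, Q.IsHomogeneous k →
        ∃ b ∈ B, b.IsHomogeneous k ∧ Q - b ∈ Ideal.span (range P)) := by
  let W : ℕ → Submodule ℝ (MvPolynomial (Fin n) ℝ) := fun k =>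
    (Ideal.span (range P)).restrictScalars ℝ ⊓ homogeneousSubmodule (Fin n) ℝ k
  choose C hC using fun k => (W k).exists_isCompl
  let B : Submodule ℝ (MvPolynomial (Fin n) ℝ) := ⨅ k, (C k).comap (homogeneousComponent k)
  have hB : ∀ b, b ∈ B ↔ ∀ k, homogeneousComponent k b ∈ C k := by
    intro b; simp [B]
  have hcomp : ∀ k b, b ∈ C k → b.IsHomogeneous k → b ∈ B := by
    intro k b hb hk
    rw [hB]
    intro j
    rw [homogeneousComponent_of_mem hk]
    split_ifs with h
    · subst h; exact hb
    · exact zero_mem _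
  refine ⟨B, ?_, ?_, ?_⟩
  · intro k b hb
    exact hcomp k _ ((hB b).1 hb k) (homogeneousComponent_isHomogeneous _ _)
  · intro b hb hbP
    rw [← sum_homogeneousComponent b]
    refine Finset.sum_eq_zero fun k _ => ?_
    have := (hC k).disjoint
    rw [Submodule.disjoint_def] at this
    exact this _ ⟨hc_span P hP hbP k, homogeneousComponent_isHomogeneous _ _⟩ ((hB b).1 hb k)
  · intro k Q hQ
    have : Q ∈ W k ⊔ C k := by rw [(hC k).sup_eq_top]; trivial
    obtain ⟨w, hw, c, hc, rfl⟩ := Submodule.mem_sup.1 this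
    have hck : c.IsHomogeneous k := by
      have := hQ.sub hw.2
      rwa [add_sub_cancel_left] at this
    exact ⟨c, hcomp k c hc hck, hck, by simpa using hw.1⟩

end poly

structure Coord {n : ℕ} {E : Type*} [CommRing E] [Algebra ℝ E] (m : Ideal E)
    (y : Fin n → E) : Prop where
  jac : m ≤ Ideal.jacobson ⊥
  span : Ideal.span (range y) = m
  res : ∀ a, ∃ c : ℝ, a - algebraMap ℝ E c ∈ m
  inj : ∀ k (Q : MvPolynomial (Fin n) ℝ), Q.IsHomogeneous k → aeval y Q ∈ m ^ (k+1) → Q = 0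

namespace Coord
variable {n : ℕ} {E : Type} [CommRing E] [Algebra ℝ E] {m : Ideal E} {y : Fin n → E}

lemma aeval_mem (hc : Coord m y) {k : ℕ} {Q : MvPolynomial (Fin n) ℝ} (hQ : Q.IsHomogeneous k) :
    aeval y Q ∈ m ^ k := by
  rw [← hc.span, Ideal.mem_span_pow_iff_exists_isHomogeneous]
  exact ⟨map (algebraMap ℝ E) Q, hQ.map _, by rw [eval_map, aeval_def]⟩

lemma lead (hc : Coord m y) {k : ℕ} {a : E} (ha : a ∈ m ^ k) :
    ∃ Q : MvPolynomial (Fin n) ℝ, Q.IsHomogeneous k ∧ a - aeval y Q ∈ m ^ (k+1) := by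
  have ha' := ha
  rw [← hc.span, Ideal.mem_span_pow_iff_exists_isHomogeneous] at ha'
  obtain ⟨p, hp, rfl⟩ := ha'
  choose c hcc using hc.res
  have hdeg : ∀ s ∈ p.support, s.degree = k := by
    intro s hs
    by_contra h
    exact (mem_support_iff.1 hs) (hp.coeff_eq_zero h)
  refine ⟨∑ s ∈ p.support, monomial s (c (coeff s p)), ?_, ?_⟩
  · exact IsHomogeneous.sum _ _ _ fun s hs => isHomogeneous_monomial _ (hdeg s hs)
  · rw [map_sum]
    nth_rewrite 1 [p.as_sum]
    rw [map_sum, ← Finset.sum_sub_distrib]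
    refine Ideal.sum_mem _ fun s hs => ?_
    have h1 : aeval y (monomial s (1:ℝ)) ∈ m ^ k :=
      hc.aeval_mem (isHomogeneous_monomial _ (hdeg s hs))
    rw [aeval_monomial, map_one, one_mul] at h1
    rw [aeval_monomial, eval_monomial, ← sub_mul, pow_succ']
    exact Ideal.mul_mem_mul (hcc _) h1

lemma approx (hc : Coord m y) (a : E) (k : ℕ) :
    ∃ A : MvPolynomial (Fin n) ℝ, a - aeval y A ∈ m ^ k := by
  induction k with
  | zero => exact ⟨0, by simp⟩
  | succ k ih =>
    obtain ⟨A, hA⟩ := ih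
    obtain ⟨Q, -, hQ⟩ := hc.lead hA
    exact ⟨A + Q, by rwa [map_add, ← sub_sub]⟩

lemma inj' (hc : Coord m y) {k : ℕ} {R : MvPolynomial (Fin n) ℝ} (hR : aeval y R ∈ m ^ k) :
    ∀ j < k, homogeneousComponent j R = 0 := by
  intro j
  induction j using Nat.strong_induction_on with
  | _ j ih =>
    intro hj
    by_cases hjd : j ∈ Finset.range (R.totalDegree + 1)
    swap
    · exact homogeneousComponent_eq_zero _ _ (by simpa using hjd)
    refine hc.inj j _ (homogeneousComponent_isHomogeneous _ _) ?_
    have h1 := sum_homogeneousComponent R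
    rw [← Finset.add_sum_erase _ _ hjd] at h1
    rw [eq_sub_of_add_eq h1, map_sub, map_sum]
    refine sub_mem (Ideal.pow_le_pow_right hj hR) (Ideal.sum_mem _ fun i hi => ?_)
    rcases lt_trichotomy i j with h | h | h
    · rw [ih i h (h.trans hj)]; simp
    · exact absurd h (Finset.ne_of_mem_erase hi)
    · exact Ideal.pow_le_pow_right h (hc.aeval_mem (homogeneousComponent_isHomogeneous _ _))

lemma exists_N (hc : Coord m y) {d : ℕ} (P : Fin n → MvPolynomial (Fin n) ℝ)
    (hP : ∀ i, (P i).IsHomogeneous d)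
    (hfin : FiniteDimensional ℝ (E ⧸ Ideal.span (range fun i => aeval y (P i)))) :
    ∃ N, ∀ Q : MvPolynomial (Fin n) ℝ, Q.IsHomogeneous N → Q ∈ Ideal.span (range P) := by
  set J := Ideal.span (range fun i => aeval y (P i)) with hJ
  let π : E →ₗ[ℝ] (E ⧸ J) := (Ideal.Quotient.mkₐ ℝ J).toLinearMap
  let c : ℕ →o (Submodule ℝ (E ⧸ J))ᵒᵈ :=
    ⟨fun k => OrderDual.toDual (((m ^ k).restrictScalars ℝ).map π), by
      intro a b hab
      exact Submodule.map_mono (fun x hx => Ideal.pow_le_pow_right hab hx)⟩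
  obtain ⟨N, hN⟩ := IsArtinian.monotone_stabilizes c
  refine ⟨N, fun Q hQ => ?_⟩
  have h1 : π (aeval y Q) ∈ ((m ^ N).restrictScalars ℝ).map π := ⟨_, hc.aeval_mem hQ, rfl⟩
  have h2 : ((m ^ N).restrictScalars ℝ).map π = ((m ^ (N+1)).restrictScalars ℝ).map π :=
    hN (N+1) (Nat.le_succ _)
  rw [h2] at h1
  obtain ⟨r, hr, hrQ⟩ := h1
  have h3 : aeval y Q - r ∈ J := by
    rw [← Ideal.Quotient.eq]; exact hrQ.symm
  obtain ⟨a, ha⟩ := Ideal.mem_span_range_iff_exists_fun.1 h3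
  choose A hA using fun i => hc.approx (a i) (N+1)
  have h4 : aeval y (Q - ∑ i, A i * P i) ∈ m ^ (N+1) := by
    have : aeval y (Q - ∑ i, A i * P i) = r + ∑ i, (a i - aeval y (A i)) * aeval y (P i) := by
      simp only [map_sub, map_sum, map_mul, sub_mul, Finset.sum_sub_distrib, ha]
      ring
    rw [this]
    exact add_mem hr (Ideal.sum_mem _ fun i _ => Ideal.mul_mem_right _ _ (hA i))
  have h5 := hc.inj' h4 N (Nat.lt_succ_self _)
  rw [map_sub, sub_eq_zero, homogeneousComponent_eq_self hQ] at h5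
  rw [h5]
  exact hc_span P hP (Ideal.mem_span_range_iff_exists_fun.2 ⟨_, rfl⟩) N

variable {d : ℕ} {P : Fin n → MvPolynomial (Fin n) ℝ} {F : Fin n → E}

lemma mulF (hc : Coord m y) (hF : ∀ i, F i - aeval y (P i) ∈ m ^ (d+1)) {k : ℕ}
    {A : MvPolynomial (Fin n) ℝ} (hA : HD d k A) (i : Fin n) :
    aeval y (A * P i) - aeval y A * F i ∈ m ^ (k+1) := by
  rcases hA with rfl | ⟨e, rfl, he⟩
  · simp
  · rw [map_mul, ← mul_sub, add_assoc, pow_add]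
    refine Ideal.mul_mem_mul (hc.aeval_mem he) ?_
    rw [← neg_sub]
    exact neg_mem (hF i)

lemma red (hc : Coord m y) (hP : ∀ i, (P i).IsHomogeneous d)
    (hF : ∀ i, F i - aeval y (P i) ∈ m ^ (d+1)) {k : ℕ}
    {Q : MvPolynomial (Fin n) ℝ} (hQ : Q.IsHomogeneous k) (hQP : Q ∈ Ideal.span (range P)) :
    ∃ j ∈ Ideal.span (range F), aeval y Q - j ∈ m ^ (k+1) := by
  obtain ⟨A, hA, hHD⟩ := homog_span P hP hQ hQP
  refine ⟨∑ i, aeval y (A i) * F i, Ideal.mem_span_range_iff_exists_fun.2 ⟨_, rfl⟩, ?_⟩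
  rw [hA, map_sum, ← Finset.sum_sub_distrib]
  exact Ideal.sum_mem _ fun i _ => hc.mulF hF (hHD i) i

lemma pow_le (hc : Coord m y) (hP : ∀ i, (P i).IsHomogeneous d)
    (hF : ∀ i, F i - aeval y (P i) ∈ m ^ (d+1)) {N : ℕ}
    (hN : ∀ Q : MvPolynomial (Fin n) ℝ, Q.IsHomogeneous N → Q ∈ Ideal.span (range P)) :
    m ^ N ≤ Ideal.span (range F) := by
  refine Submodule.le_of_le_smul_of_le_jacobson_bot (I := m) ?_ hc.jac ?_
  · have : m.FG := by
      rw [← hc.span]; exact Submodule.fg_span (Set.finite_range y)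
    exact Submodule.FG.pow this N
  · intro a ha
    obtain ⟨Q, hQ, haQ⟩ := hc.lead ha
    obtain ⟨j, hj, hjQ⟩ := hc.red hP hF hQ (hN Q hQ)
    rw [smul_eq_mul, ← pow_succ']
    have : a = j + ((a - aeval y Q) + (aeval y Q - j)) := by ring
    rw [this]
    exact Submodule.add_mem_sup hj (add_mem haQ hjQ)

lemma surj (hc : Coord m y) (hP : ∀ i, (P i).IsHomogeneous d)
    (hF : ∀ i, F i - aeval y (P i) ∈ m ^ (d+1)) {N : ℕ}
    (hN : ∀ Q : MvPolynomial (Fin n) ℝ, Q.IsHomogeneous N → Q ∈ Ideal.span (range P))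
    (B : Submodule ℝ (MvPolynomial (Fin n) ℝ))
    (hB : ∀ k, ∀ Q : MvPolynomial (Fin n) ℝ, Q.IsHomogeneous k →
        ∃ b ∈ B, b.IsHomogeneous k ∧ Q - b ∈ Ideal.span (range P)) (k : ℕ) (hk : k ≤ N) :
    ∀ a ∈ m ^ k, ∃ b ∈ B, a - aeval y b ∈ Ideal.span (range F) := by
  induction hk using Nat.decreasingInduction with
  | self =>
    intro a ha
    exact ⟨0, zero_mem _, by simpa using hc.pow_le hP hF hN ha⟩
  | of_succ k hk ih =>
    intro a ha
    obtain ⟨Q, hQ, haQ⟩ := hc.lead ha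
    obtain ⟨b, hb, hbk, hQb⟩ := hB k Q hQ
    obtain ⟨j, hj, hjQ⟩ := hc.red hP hF (hQ.sub hbk) hQb
    obtain ⟨b', hb', h'⟩ := ih _ (add_mem haQ hjQ)
    refine ⟨b + b', add_mem hb hb', ?_⟩
    have : a - aeval y (b + b') =
        ((a - aeval y Q) + (aeval y (Q - b) - j) - aeval y b') + j := by
      simp only [map_add, map_sub]; ring
    rw [this]
    exact add_mem h' hj

lemma injB (hc : Coord m y) (hP : ∀ i, (P i).IsHomogeneous d)
    (hF : ∀ i, F i - aeval y (P i) ∈ m ^ (d+1)) {N : ℕ}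
    (hN : ∀ Q : MvPolynomial (Fin n) ℝ, Q.IsHomogeneous N → Q ∈ Ideal.span (range P))
    (B : Submodule ℝ (MvPolynomial (Fin n) ℝ))
    (hB1 : ∀ k, ∀ b ∈ B, homogeneousComponent k b ∈ B)
    (hB2 : ∀ b ∈ B, b ∈ Ideal.span (range P) → b = 0)
    (b : MvPolynomial (Fin n) ℝ) (hb : b ∈ B) (hbJ : aeval y b ∈ Ideal.span (range F)) :
    b = 0 := by
  have hFd : ∀ i, F i ∈ m ^ d := by
    intro i
    rw [← sub_add_cancel (F i) (aeval y (P i))]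
    exact add_mem (Ideal.pow_le_pow_right (Nat.le_succ _) (hF i)) (hc.aeval_mem (hP i))
  have key : ∀ k, ∃ a : Fin n → E, (∀ i, a i ∈ m ^ k) ∧ aeval y b = ∑ i, a i * F i := by
    intro k
    induction k with
    | zero =>
      obtain ⟨a, ha⟩ := Ideal.mem_span_range_iff_exists_fun.1 hbJ
      exact ⟨a, by simp, ha.symm⟩
    | succ k ih =>
      obtain ⟨a, hak, hab⟩ := ih
      choose A hA haA using fun i => hc.lead (hak i)
      have h1 : aeval y (b - ∑ i, A i * P i) ∈ m ^ (k + d + 1) := by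
        rw [map_sub, map_sum, hab, ← Finset.sum_sub_distrib]
        refine Ideal.sum_mem _ fun i _ => ?_
        have : a i * F i - aeval y (A i * P i) =
          (a i - aeval y (A i)) * F i + aeval y (A i) * (F i - aeval y (P i)) := by
          rw [map_mul]; ring
        rw [this]
        refine add_mem ?_ ?_
        · rw [show k + d + 1 = (k+1) + d by ring, pow_add]
          exact Ideal.mul_mem_mul (haA i) (hFd i)
        · rw [add_assoc, pow_add]
          exact Ideal.mul_mem_mul (hc.aeval_mem (hA i)) (hF i)
      have h2 := hc.inj' h1 (k+d) (Nat.lt_succ_self _)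
      have hh : (∑ i, A i * P i).IsHomogeneous (k+d) :=
        IsHomogeneous.sum _ _ _ fun i _ => (hA i).mul (hP i)
      rw [map_sub, sub_eq_zero, homogeneousComponent_eq_self hh] at h2
      have h3 : ∑ i, A i * P i = 0 := by
        refine hB2 _ ?_ (Ideal.mem_span_range_iff_exists_fun.2 ⟨_, rfl⟩)
        rw [← h2]; exact hB1 _ _ hb
      obtain ⟨C, hC, hCH, hAC⟩ := syzygy P hP hN A hA h3
      refine ⟨fun i => a i - ∑ j, aeval y (C i j) * F j, fun i => ?_, ?_⟩
      · have : a i - ∑ j, aeval y (C i j) * F j = (a i - aeval y (A i)) +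
            ∑ j, (aeval y (C i j * P j) - aeval y (C i j) * F j) := by
          rw [Finset.sum_sub_distrib, ← map_sum, ← hAC i]; ring
        beta_reduce
        rw [this]
        exact add_mem (haA i) (Ideal.sum_mem _ fun j _ => hc.mulF hF (hCH i j) j)
      · simp only [sub_mul, Finset.sum_sub_distrib, ← hab]
        have hx : ∑ i, (∑ j, aeval y (C i j) * F j) * F i
            = - ∑ i, (∑ j, aeval y (C i j) * F j) * F i := by
          simp only [Finset.sum_mul]
          conv_lhs => rw [Finset.sum_comm]
          rw [← Finset.sum_neg_distrib]
          refine Finset.sum_congr rfl fun i _ => ?_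
          rw [← Finset.sum_neg_distrib]
          refine Finset.sum_congr rfl fun j _ => ?_
          rw [hC j i, map_neg]; ring
        have hx0 : ∑ i, (∑ j, aeval y (C i j) * F j) * F i = 0 := by
          set x := ∑ i, (∑ j, aeval y (C i j) * F j) * F i
          have : (2:ℝ) • x = 0 := by
            rw [two_smul]; nth_rewrite 1 [hx]; simp
          simpa using this
        rw [hx0, sub_zero]
  rw [← sum_homogeneousComponent b]
  refine Finset.sum_eq_zero fun j _ => ?_
  obtain ⟨a, ha, hab⟩ := key (j+1)
  refine hc.inj' (k := j+1) ?_ j (Nat.lt_succ_self _)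
  rw [hab]
  exact Ideal.sum_mem _ fun i _ => Ideal.mul_mem_right _ _ (ha i)

theorem rank_eq (hc : Coord m y) (hP : ∀ i, (P i).IsHomogeneous d)
    (hF : ∀ i, F i - aeval y (P i) ∈ m ^ (d+1)) {N : ℕ}
    (hN : ∀ Q : MvPolynomial (Fin n) ℝ, Q.IsHomogeneous N → Q ∈ Ideal.span (range P))
    (B : Submodule ℝ (MvPolynomial (Fin n) ℝ))
    (hB1 : ∀ k, ∀ b ∈ B, homogeneousComponent k b ∈ B)
    (hB2 : ∀ b ∈ B, b ∈ Ideal.span (range P) → b = 0)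
    (hB : ∀ k, ∀ Q : MvPolynomial (Fin n) ℝ, Q.IsHomogeneous k →
        ∃ b ∈ B, b.IsHomogeneous k ∧ Q - b ∈ Ideal.span (range P)) :
    Module.rank ℝ (E ⧸ Ideal.span (range F)) = Module.rank ℝ B := by
  set J := Ideal.span (range F)
  let π : E →ₗ[ℝ] (E ⧸ J) := (Ideal.Quotient.mkₐ ℝ J).toLinearMap
  let T : B →ₗ[ℝ] (E ⧸ J) := π ∘ₗ (aeval y).toLinearMap ∘ₗ B.subtype
  have hT : Function.Bijective T := by
    constructor
    · rw [← LinearMap.ker_eq_bot, LinearMap.ker_eq_bot']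
      rintro ⟨b, hb⟩ h
      have h' : Ideal.Quotient.mk J (aeval y b) = 0 := h
      rw [Ideal.Quotient.eq_zero_iff_mem] at h'
      exact Subtype.ext (hc.injB hP hF hN B hB1 hB2 b hb h')
    · intro q
      obtain ⟨a, rfl⟩ := Ideal.Quotient.mk_surjective q
      obtain ⟨b, hb, h⟩ := hc.surj hP hF hN B hB 0 (Nat.zero_le _) a (by simp)
      refine ⟨⟨b, hb⟩, ?_⟩
      exact ((Ideal.Quotient.eq).2 h).symm
  exact (LinearEquiv.ofBijective T hT).rank_eq.symm

end Coord
end MilnorAux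

namespace MilnorAux
open MvPolynomial

section analysis

lemma contDiff_param {X : Type} [NormedAddCommGroup X] [NormedSpace ℝ X]
    [FiniteDimensional ℝ X] (k : ℕ) :
    ∀ {Y : Type} [NormedAddCommGroup Y] [NormedSpace ℝ Y] [CompleteSpace Y] (h : X → Y)
      (_ : ContDiff ℝ (⊤ : ℕ∞) h) (c : ℝ → ℝ) (_ : Continuous c),
      ContDiff ℝ k (fun x => ∫ t in (0:ℝ)..1, c t • h (t • x)) := by
  induction k with
  | zero =>
    intro Y _ _ _ h hh c hc
    have hcont := hh.continuous
    rw [Nat.cast_zero, contDiff_zero]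
    apply intervalIntegral.continuous_parametric_intervalIntegral_of_continuous'
    fun_prop
  | succ k ih =>
    intro Y _ _ _ h hh c hc
    have hcont := hh.continuous
    have hdcont : Continuous (fderiv ℝ h) := hh.continuous_fderiv (by simp)
    rw [Nat.cast_add, Nat.cast_one, contDiff_succ_iff_hasFDerivAt]
    refine ⟨fun x => ∫ t in (0:ℝ)..1, (c t * t) • fderiv ℝ h (t • x),
      ih (fderiv ℝ h) (hh.fderiv_right (by simp)) (fun t => c t * t) (by fun_prop), fun x => ?_⟩
    have hF' : Continuous (fun p : X × ℝ => (c p.2 * p.2) • fderiv ℝ h (p.2 • p.1)) := by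
      fun_prop
    obtain ⟨M, hM⟩ := ((isCompact_closedBall x 1).prod (isCompact_Icc (a := (0:ℝ)) (b := 1))).exists_bound_of_continuousOn
      hF'.continuousOn
    refine intervalIntegral.hasFDerivAt_integral_of_dominated_of_fderiv_le
      (F := fun x t => c t • h (t • x)) (F' := fun x t => (c t * t) • fderiv ℝ h (t • x))
      (bound := fun _ => M) (s := closedBall x 1) (closedBall_mem_nhds x one_pos) ?_ ?_ ?_ ?_ ?_ ?_
    · refine Eventually.of_forall fun z => Continuous.aestronglyMeasurable ?_
      fun_prop
    · exact Continuous.intervalIntegrable (by fun_prop) _ _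
    · exact Continuous.aestronglyMeasurable (by fun_prop)
    · refine Eventually.of_forall fun t ht z hz => hM (z, t) ⟨hz, ?_⟩
      rw [uIoc_of_le zero_le_one] at ht
      exact ⟨ht.1.le, ht.2⟩
    · exact intervalIntegrable_const
    · refine Eventually.of_forall fun t _ z _ => ?_
      have h1 : HasFDerivAt h (fderiv ℝ h (t • z)) (t • z) :=
        (hh.differentiable (by simp) _).hasFDerivAt
      have h2 : HasFDerivAt (fun z : X => t • z) (t • ContinuousLinearMap.id ℝ X) z :=
        (hasFDerivAt_id z).const_smul t
      have h3 := (h1.comp z h2).const_smul (c t)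
      refine h3.congr_fderiv ?_
      ext w
      simp [mul_smul]

lemma hadamard {X : Type} [NormedAddCommGroup X] [NormedSpace ℝ X]
    [FiniteDimensional ℝ X] (f : X → ℝ) (hf : ContDiff ℝ (⊤ : ℕ∞) f) (h0 : f 0 = 0) :
    ∃ G : X → (X →L[ℝ] ℝ), ContDiff ℝ (⊤ : ℕ∞) G ∧ ∀ x, f x = G x x := by
  have hdcont : Continuous (fderiv ℝ f) := hf.continuous_fderiv (by simp)
  refine ⟨fun x => ∫ t in (0:ℝ)..1, (1:ℝ) • fderiv ℝ f (t • x), ?_, fun x => ?_⟩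
  · rw [contDiff_infty]
    intro k
    exact contDiff_param k (fderiv ℝ f) (hf.fderiv_right (by simp)) (fun _ => 1) continuous_const
  · simp only [one_smul]
    rw [ContinuousLinearMap.intervalIntegral_apply (Continuous.intervalIntegrable (by fun_prop) _ _)]
    have : ∀ t ∈ uIcc (0:ℝ) 1, HasDerivAt (fun t : ℝ => f (t • x)) (fderiv ℝ f (t • x) x) t := by
      intro t _
      have h1 : HasFDerivAt f (fderiv ℝ f (t • x)) (t • x) :=
        (hf.differentiable (by simp) _).hasFDerivAt
      have h2 : HasDerivAt (fun t : ℝ => t • x) x t := by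
        simpa using (hasDerivAt_id t).smul_const x
      exact h1.comp_hasDerivAt t h2
    rw [intervalIntegral.integral_eq_sub_of_hasDerivAt this
      (Continuous.intervalIntegrable (by fun_prop) _ _)]
    simp [h0]

lemma iter_zero_of_isBigO (ρ : ℝ → ℝ) (hρ : ContDiff ℝ (⊤ : ℕ∞) ρ) (k : ℕ)
    (hO : ρ =O[𝓝 0] fun t => t ^ (k+1)) : ∀ j ≤ k, iteratedDeriv j ρ 0 = 0 := by
  intro j
  induction j using Nat.strong_induction_on with
  | _ j ih =>
    intro hj
    have h1 := taylor_isLittleO_univ (x₀ := (0:ℝ)) (n := j) (hρ.of_le (by exact_mod_cast le_top) : ContDiff ℝ j ρ)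
    have h2 : ∀ t, taylorWithinEval ρ j univ 0 t = ((j.factorial : ℝ)⁻¹ * t ^ j) * iteratedDeriv j ρ 0 := by
      intro t
      rw [taylor_within_apply, Finset.sum_range_succ, Finset.sum_eq_zero]
      · simp [iteratedDerivWithin_univ]
      · intro i hi
        rw [iteratedDerivWithin_univ, ih i (Finset.mem_range.1 hi) (by have := Finset.mem_range.1 hi; omega)]
        simp
    simp only [h2, sub_zero] at h1
    have h3 : ρ =o[𝓝 0] fun t : ℝ => t ^ j := by
      refine hO.trans_isLittleO ?_
      exact isLittleO_pow_pow (by omega)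
    have h4 : (fun t : ℝ => ((j.factorial : ℝ)⁻¹ * iteratedDeriv j ρ 0) * t ^ j) =o[𝓝 0] fun t : ℝ => t ^ j := by
      have := h3.sub h1
      refine this.congr_left fun t => ?_
      ring
    have h5 : Tendsto (fun t : ℝ => (((j.factorial : ℝ)⁻¹ * iteratedDeriv j ρ 0) * t ^ j) / t ^ j) (𝓝[≠] 0) (𝓝 0) :=
      (h4.mono nhdsWithin_le_nhds).tendsto_div_nhds_zero
    have h6 : Tendsto (fun t : ℝ => (((j.factorial : ℝ)⁻¹ * iteratedDeriv j ρ 0) * t ^ j) / t ^ j) (𝓝[≠] 0)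
        (𝓝 ((j.factorial : ℝ)⁻¹ * iteratedDeriv j ρ 0)) := by
      refine tendsto_const_nhds.congr' ?_
      filter_upwards [self_mem_nhdsWithin] with t ht
      rw [mul_div_cancel_right₀ _ (pow_ne_zero _ ht)]
    have h7 := tendsto_nhds_unique h6 h5
    have hfac : (j.factorial : ℝ)⁻¹ ≠ 0 := inv_ne_zero (by positivity)
    exact (mul_eq_zero.1 h7).resolve_left hfac

variable {n : ℕ}

lemma eval_smul_homog {k : ℕ} {Q : MvPolynomial (Fin n) ℝ} (hQ : Q.IsHomogeneous k) (t : ℝ)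
    (v : Fin n → ℝ) : eval (t • v) Q = t ^ k * eval v Q := by
  rw [eval_eq, eval_eq, Finset.mul_sum]
  refine Finset.sum_congr rfl fun s hs => ?_
  have hd : s.degree = k := by
    by_contra h
    exact (mem_support_iff.1 hs) (hQ.coeff_eq_zero h)
  simp only [Pi.smul_apply, smul_eq_mul, mul_pow, Finset.prod_mul_distrib]
  rw [Finset.prod_pow_eq_pow_sum]
  have hd' : ∑ i ∈ s.support, s i = k := hd
  rw [hd']
  ring

lemma contDiff_eval (Q : MvPolynomial (Fin n) ℝ) (B : Eucl n ≃L[ℝ] Eucl n) :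
    ContDiff ℝ (⊤ : ℕ∞) (fun x : Eucl n => eval (fun i => B x i) Q) := by
  simp only [eval_eq]
  refine ContDiff.sum fun s _ => contDiff_const.mul (contDiff_prod fun i _ => ContDiff.pow ?_ _)
  exact ((EuclideanSpace.proj i : Eucl n →L[ℝ] ℝ).comp (B : Eucl n →L[ℝ] Eucl n)).contDiff

lemma fderiv_eval (Q : MvPolynomial (Fin n) ℝ) (B : Eucl n ≃L[ℝ] Eucl n) (i : Fin n)
    (x : Eucl n) :
    fderiv ℝ (fun x : Eucl n => eval (fun i => B x i) Q) x (B.symm (EuclideanSpace.single i 1))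
      = eval (fun i => B x i) (pderiv i Q) := by
  have hd : ∀ Q : MvPolynomial (Fin n) ℝ,
      DifferentiableAt ℝ (fun x : Eucl n => eval (fun i => B x i) Q) x :=
    fun Q => (contDiff_eval Q B).differentiable (by simp) x
  induction Q using MvPolynomial.induction_on with
  | C a => simp
  | add p q hp hq =>
    simp only [map_add]
    rw [fderiv_fun_add (hd p) (hd q)]
    simp [hp, hq]
  | mul_X p j hp =>
    simp only [map_mul, eval_X, Derivation.leibniz, map_add, smul_eq_mul, pderiv_X]
    have hl : HasFDerivAt (fun x : Eucl n => B x j)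
      ((EuclideanSpace.proj j : Eucl n →L[ℝ] ℝ).comp (B : Eucl n →L[ℝ] Eucl n)) x :=
      ((EuclideanSpace.proj j : Eucl n →L[ℝ] ℝ).comp (B : Eucl n →L[ℝ] Eucl n)).hasFDerivAt
    rw [fderiv_fun_mul (hd p) hl.differentiableAt, hl.fderiv]
    simp only [ContinuousLinearMap.add_apply, ContinuousLinearMap.smul_apply, hp]
    by_cases hij : j = i
    · subst hij; simp
    · simp [hij, Pi.single_apply]

end analysis
end MilnorAux

namespace MilnorAux
open MvPolynomial

section germs
variable {n : ℕ}

/-- The germ of a smooth function. -/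
def mkG (f : Eucl n → ℝ) (hf : ContDiff ℝ (⊤ : ℕ∞) f) : smoothGerms n := ⟨↑f, f, hf, rfl⟩

lemma exists_rep (a : smoothGerms n) : ∃ f hf, a = mkG f hf := by
  obtain ⟨a, f, hf, rfl⟩ := a
  exact ⟨f, hf, rfl⟩

lemma mkG_eq_iff {f g : Eucl n → ℝ} (hf hg) : mkG f hf = mkG g hg ↔ f =ᶠ[𝓝 0] g := by
  rw [← Filter.Germ.coe_eq]
  exact Subtype.ext_iff

lemma mkG_add {f g : Eucl n → ℝ} (hf hg) : mkG f hf + mkG g hg = mkG (fun x => f x + g x) (hf.add hg) := rfl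
lemma mkG_sub {f g : Eucl n → ℝ} (hf hg) : mkG f hf - mkG g hg = mkG (fun x => f x - g x) (hf.sub hg) := rfl
lemma mkG_mul {f g : Eucl n → ℝ} (hf hg) : mkG f hf * mkG g hg = mkG (fun x => f x * g x) (hf.mul hg) := rfl
lemma mkG_zero : (0 : smoothGerms n) = mkG (fun _ => 0) contDiff_const := rfl
lemma mkG_one : (1 : smoothGerms n) = mkG (fun _ => 1) contDiff_const := rfl
lemma mkG_algebraMap (c : ℝ) :
    algebraMap ℝ (smoothGerms n) c = mkG (fun _ => c) contDiff_const := by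
  rw [Algebra.algebraMap_eq_smul_one]
  apply Subtype.ext
  change c • (1 : Germ (𝓝 (0 : Eucl n)) ℝ) = _
  rw [← Filter.Germ.coe_one, ← Filter.Germ.coe_smul]
  change ((_ : Eucl n → ℝ) : Germ (𝓝 (0 : Eucl n)) ℝ) = ((fun _ => c : Eucl n → ℝ) : Germ (𝓝 (0 : Eucl n)) ℝ)
  congr 1
  funext x
  simp

lemma mkG_sum {ι : Type*} (s : Finset ι) (f : ι → Eucl n → ℝ) (hf : ∀ i, ContDiff ℝ (⊤ : ℕ∞) (f i)) :
    ∑ i ∈ s, mkG (f i) (hf i) = mkG (fun x => ∑ i ∈ s, f i x) (ContDiff.sum fun i _ => hf i) := by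
  classical
  induction s using Finset.induction_on with
  | empty => rfl
  | insert i s hi ih =>
    rw [Finset.sum_insert hi, ih, mkG_add, mkG_eq_iff]
    refine Eventually.of_forall fun x => ?_
    simp [Finset.sum_insert hi]

/-- The maximal ideal of germs vanishing at the origin. -/
def mI (n : ℕ) : Ideal (smoothGerms n) where
  carrier := {a | ∀ f hf, a = mkG f hf → f 0 = 0}
  add_mem' := by
    intro a b ha hb f hf h
    obtain ⟨a, ha', rfl⟩ := exists_rep a
    obtain ⟨b, hb', rfl⟩ := exists_rep b
    rw [mkG_add, mkG_eq_iff] at h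
    rw [← h.self_of_nhds]
    change a 0 + b 0 = 0
    rw [ha _ _ rfl, hb _ _ rfl, add_zero]
  zero_mem' := by
    intro f hf h
    rw [mkG_zero, mkG_eq_iff] at h
    exact h.self_of_nhds.symm
  smul_mem' := by
    intro c a ha f hf h
    obtain ⟨a, ha', rfl⟩ := exists_rep a
    obtain ⟨c, hc', rfl⟩ := exists_rep c
    rw [smul_eq_mul, mkG_mul, mkG_eq_iff] at h
    rw [← h.self_of_nhds]
    change c 0 * a 0 = 0
    rw [ha _ _ rfl, mul_zero]

lemma mem_mI {f : Eucl n → ℝ} (hf) : mkG f hf ∈ mI n ↔ f 0 = 0 := by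
  constructor
  · intro h; exact h f hf rfl
  · intro h g hg hh
    rw [mkG_eq_iff] at hh
    rw [← hh.self_of_nhds, h]

lemma growth (k : ℕ) : ∀ (f : Eucl n → ℝ) (hf : ContDiff ℝ (⊤ : ℕ∞) f), mkG f hf ∈ mI n ^ k →
    f =O[𝓝 0] fun x => ‖x‖ ^ k := by
  induction k with
  | zero =>
    intro f hf _
    simp only [pow_zero]
    exact (hf.continuous.tendsto 0).isBigO_one ℝ
  | succ k ih =>
    have key : ∀ a ∈ mI n ^ (k+1), ∀ (f : Eucl n → ℝ) (hf : ContDiff ℝ (⊤ : ℕ∞) f), a = mkG f hf →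
        f =O[𝓝 0] fun x => ‖x‖ ^ (k+1) := by
      intro a ha
      rw [pow_succ] at ha
      refine Submodule.mul_induction_on ha ?_ ?_
      · intro p hp q hq f hf h
        obtain ⟨p, hp', rfl⟩ := exists_rep p
        obtain ⟨q, hq', rfl⟩ := exists_rep q
        rw [mkG_mul, mkG_eq_iff] at h
        have h1 := ih p hp' hp
        have hq0 := (mem_mI hq').1 hq
        have h2 : q =O[𝓝 0] fun x => ‖x‖ := by
          have := (hq'.differentiable (by simp) 0).isBigO_sub
          simpa [hq0] using this.norm_right
        refine (h1.mul h2).congr' h (Eventually.of_forall fun x => ?_)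
        simp [pow_succ]
      · intro p q hp hq f hf h
        obtain ⟨p, hp', rfl⟩ := exists_rep p
        obtain ⟨q, hq', rfl⟩ := exists_rep q
        rw [mkG_add, mkG_eq_iff] at h
        exact ((hp _ _ rfl).add (hq _ _ rfl)).congr' h EventuallyEq.rfl
    intro f hf h
    exact key _ h f hf rfl

lemma contDiff_coord (B : Eucl n ≃L[ℝ] Eucl n) (i : Fin n) :
    ContDiff ℝ (⊤ : ℕ∞) (fun x : Eucl n => B x i) :=
  ((EuclideanSpace.proj i : Eucl n →L[ℝ] ℝ).comp (B : Eucl n →L[ℝ] Eucl n)).contDiff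

/-- Linear coordinates. -/
def yB (B : Eucl n ≃L[ℝ] Eucl n) (i : Fin n) : smoothGerms n := mkG _ (contDiff_coord B i)

lemma aeval_yB (B : Eucl n ≃L[ℝ] Eucl n) (Q : MvPolynomial (Fin n) ℝ) :
    aeval (yB B) Q = mkG _ (contDiff_eval Q B) := by
  induction Q using MvPolynomial.induction_on with
  | C a =>
    rw [aeval_C, mkG_algebraMap, mkG_eq_iff]
    exact Eventually.of_forall fun x => by simp
  | add p q hp hq =>
    rw [map_add, hp, hq, mkG_add, mkG_eq_iff]
    exact Eventually.of_forall fun x => by simp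
  | mul_X p j hp =>
    rw [map_mul, hp, aeval_X, yB, mkG_mul, mkG_eq_iff]
    exact Eventually.of_forall fun x => by simp

lemma basis_sum (x : Eucl n) : x = ∑ i, x i • EuclideanSpace.single i (1:ℝ) := by
  ext j
  simp [Pi.single_apply]

lemma isUnit_mkG (f : Eucl n → ℝ) (hf) (h1 : f 0 = 1) : IsUnit (mkG f hf) := by
  let χ : ContDiffBump (1:ℝ) := ⟨1/4, 1/2, by norm_num, by norm_num⟩
  let F : Eucl n → ℝ := fun x => χ (f x) * f x + (1 - χ (f x))
  have hχ : ContDiff ℝ (⊤ : ℕ∞) (fun x => χ (f x)) := χ.contDiff.comp hf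
  have hF : ContDiff ℝ (⊤ : ℕ∞) F := (hχ.mul hf).add (contDiff_const.sub hχ)
  have hF0 : ∀ x, F x ≠ 0 := by
    intro x hx
    by_cases hb : f x ∈ ball (1:ℝ) (1/2)
    · rw [mem_ball, Real.dist_eq, abs_lt] at hb
      have a1 := χ.nonneg (x := f x)
      have a2 := χ.le_one (x := f x)
      simp only [F] at hx
      nlinarith
    · have : χ (f x) = 0 := by
        apply χ.zero_of_le_dist
        rw [mem_ball, not_lt] at hb
        exact hb
      simp [F, this] at hx
  refine IsUnit.of_mul_eq_one (mkG _ (hF.inv hF0)) ?_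
  rw [mkG_mul, mkG_one, mkG_eq_iff]
  have : ∀ᶠ x in 𝓝 (0 : Eucl n), f x ∈ ball (1:ℝ) (1/4) := by
    apply hf.continuous.continuousAt
    rw [h1]
    exact ball_mem_nhds _ (by norm_num)
  filter_upwards [this] with x hx
  have h2 : χ (f x) = 1 := χ.one_of_mem_closedBall (ball_subset_closedBall hx)
  have h3 : F x = f x := by simp [F, h2]
  have h4 := hF0 x
  rw [← h3]
  exact mul_inv_cancel₀ h4

lemma coord (B : Eucl n ≃L[ℝ] Eucl n) : Coord (mI n) (yB B) where
  jac := by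
    intro a ha
    rw [Ideal.mem_jacobson_bot]
    intro b
    obtain ⟨c, hc, hcc⟩ := exists_rep (a * b + 1)
    rw [hcc]
    apply isUnit_mkG
    have h1 : a * b ∈ mI n := Ideal.mul_mem_right _ _ ha
    have h2 : a * b = mkG c hc - 1 := by rw [← hcc]; ring
    rw [h2, mkG_one, mkG_sub, mem_mI] at h1
    linarith
  span := by
    apply le_antisymm
    · rw [Ideal.span_le]
      rintro _ ⟨i, rfl⟩
      exact (mem_mI _).2 (by simp)
    · intro a ha
      obtain ⟨f, hf, rfl⟩ := exists_rep a
      rw [mem_mI] at ha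
      obtain ⟨G, hG, hfG⟩ := hadamard f hf ha
      rw [Ideal.mem_span_range_iff_exists_fun]
      refine ⟨fun i => mkG (fun x => G x (B.symm (EuclideanSpace.single i 1)))
        (hG.clm_apply contDiff_const), ?_⟩
      simp only [yB, mkG_mul]
      rw [mkG_sum _ _ (fun i => (hG.clm_apply contDiff_const).mul (contDiff_coord B i)), mkG_eq_iff]
      refine Eventually.of_forall fun x => ?_
      have h1 : x = ∑ i, (B x) i • B.symm (EuclideanSpace.single i 1) := by
        conv_lhs => rw [← B.symm_apply_apply x, basis_sum (B x)]
        simp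
      change ∑ i, _ = _
      rw [hfG x]
      have h2 := congrArg (G x) h1
      rw [map_sum] at h2
      rw [h2]
      simp [mul_comm]
  res := by
    intro a
    obtain ⟨f, hf, rfl⟩ := exists_rep a
    exact ⟨f 0, by rw [mkG_algebraMap, mkG_sub, mem_mI, sub_self]⟩
  inj := by
    intro k Q hQ h
    rw [aeval_yB] at h
    have hO := growth _ _ _ h
    apply MvPolynomial.funext
    intro v
    rw [map_zero]
    let w : Eucl n := B.symm (WithLp.toLp 2 v)
    have hl : Tendsto (fun t : ℝ => t • w) (𝓝 0) (𝓝 0) := by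
      have : Continuous (fun t : ℝ => t • w) := by fun_prop
      simpa using this.tendsto 0
    have h2 := hO.comp_tendsto hl
    have h3 : ((fun x : Eucl n => eval (fun i => B x i) Q) ∘ fun t : ℝ => t • w) =
        fun t => eval v Q * t ^ k := by
      funext t
      have : (fun i => B (t • w) i) = t • v := by
        funext i; simp [w]
      simp only [Function.comp, this, eval_smul_homog hQ, mul_comm]
    rw [h3] at h2
    have h4 : (fun t : ℝ => eval v Q * t ^ k) =o[𝓝 0] fun t : ℝ => t ^ k := by
      refine h2.trans_isLittleO ?_
      have : (fun t : ℝ => t ^ (k+1)) =o[𝓝 0] fun t : ℝ => t ^ k := isLittleO_pow_pow (by omega)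
      refine (IsBigO.of_bound (‖w‖ ^ (k+1)) (Eventually.of_forall fun t => ?_)).trans_isLittleO this
      simp [norm_smul, mul_pow, mul_comm]
    have h5 : Tendsto (fun t : ℝ => (eval v Q * t ^ k) / t ^ k) (𝓝[≠] 0) (𝓝 0) :=
      (h4.mono nhdsWithin_le_nhds).tendsto_div_nhds_zero
    have h6 : Tendsto (fun t : ℝ => (eval v Q * t ^ k) / t ^ k) (𝓝[≠] 0) (𝓝 (eval v Q)) := by
      refine tendsto_const_nhds.congr' ?_
      filter_upwards [self_mem_nhdsWithin] with t ht
      rw [mul_div_cancel_right₀ _ (pow_ne_zero _ ht)]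
    exact tendsto_nhds_unique h6 h5

end germs
end MilnorAux

namespace MilnorAux
open MvPolynomial

section final
variable {n : ℕ}

lemma contDiff_dir {f : Eucl n → ℝ} (hf : ContDiff ℝ (⊤ : ℕ∞) f) (w : Eucl n) :
    ContDiff ℝ (⊤ : ℕ∞) (fun x => fderiv ℝ f x w) :=
  (hf.fderiv_right (by simp)).clm_apply contDiff_const

/-- Germ of a directional derivative. -/
def Dm (f : Eucl n → ℝ) (hf : ContDiff ℝ (⊤ : ℕ∞) f) (w : Eucl n) : smoothGerms n :=
  mkG _ (contDiff_dir hf w)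

lemma Dm_congr {f g : Eucl n → ℝ} (hf hg) (w : Eucl n) (h : f =ᶠ[𝓝 0] g) :
    Dm f hf w = Dm g hg w := by
  rw [Dm, Dm, mkG_eq_iff]
  filter_upwards [h.fderiv (𝕜 := ℝ)] with x hx
  rw [hx]

lemma Dm_pow (w : Eucl n) (k : ℕ) : ∀ a ∈ mI n ^ (k+1), ∀ f hf, a = mkG f hf →
    Dm f hf w ∈ mI n ^ k := by
  induction k with
  | zero => intro a _ f hf _; simp
  | succ k ih =>
    intro a ha
    rw [pow_succ] at ha
    refine Submodule.mul_induction_on ha ?_ ?_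
    · intro p hp q hq f hf h
      obtain ⟨p, hp', rfl⟩ := exists_rep p
      obtain ⟨q, hq', rfl⟩ := exists_rep q
      rw [mkG_mul, mkG_eq_iff] at h
      rw [← Dm_congr (hp'.mul hq') hf w h]
      have h1 : Dm _ (hp'.mul hq') w = mkG p hp' * Dm q hq' w + Dm p hp' w * mkG q hq' := by
        rw [Dm, Dm, Dm, mkG_mul, mkG_mul, mkG_add, mkG_eq_iff]
        refine Eventually.of_forall fun x => ?_
        change fderiv ℝ (fun x => p x * q x) x w = _
        rw [fderiv_fun_mul (hp'.differentiable (by simp) x) (hq'.differentiable (by simp) x)]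
        simp [mul_comm]
      rw [h1]
      refine add_mem (Ideal.mul_mem_right _ _ hp) ?_
      rw [pow_succ]
      exact Ideal.mul_mem_mul (ih _ hp _ _ rfl) hq
    · intro p q hp hq f hf h
      obtain ⟨p, hp', rfl⟩ := exists_rep p
      obtain ⟨q, hq', rfl⟩ := exists_rep q
      rw [mkG_add, mkG_eq_iff] at h
      rw [← Dm_congr (hp'.add hq') hf w h]
      have h1 : Dm _ (hp'.add hq') w = Dm p hp' w + Dm q hq' w := by
        rw [Dm, Dm, Dm, mkG_add, mkG_eq_iff]
        refine Eventually.of_forall fun x => ?_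
        change fderiv ℝ (fun x => p x + q x) x w = _
        rw [fderiv_fun_add (hp'.differentiable (by simp) x) (hq'.differentiable (by simp) x)]
        simp
      rw [h1]
      exact add_mem (hp _ _ rfl) (hq _ _ rfl)

lemma Dm_sub_mem {f g : Eucl n → ℝ} (hf : ContDiff ℝ (⊤ : ℕ∞) f) (hg : ContDiff ℝ (⊤ : ℕ∞) g)
    (w : Eucl n) (k : ℕ) (h : mkG f hf - mkG g hg ∈ mI n ^ (k+1)) :
    Dm f hf w - Dm g hg w ∈ mI n ^ k := by
  have h1 := Dm_pow w k _ h _ _ (mkG_sub hf hg)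
  have h2 : Dm _ (hf.sub hg) w = Dm f hf w - Dm g hg w := by
    rw [Dm, Dm, Dm, mkG_sub, mkG_eq_iff]
    refine Eventually.of_forall fun x => ?_
    change fderiv ℝ (fun x => f x - g x) x w = _
    rw [fderiv_fun_sub (hf.differentiable (by simp) x) (hg.differentiable (by simp) x)]
    simp
  rwa [← h2]

lemma Dm_mem {f : Eucl n → ℝ} (hf : ContDiff ℝ (⊤ : ℕ∞) f) (w : Fin n → Eucl n) (c : Fin n → ℝ) :
    Dm f hf (∑ i, c i • w i) ∈ Ideal.span (range fun i => Dm f hf (w i)) := by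
  rw [Ideal.mem_span_range_iff_exists_fun]
  refine ⟨fun i => mkG (fun _ => c i) contDiff_const, ?_⟩
  simp only [Dm, mkG_mul]
  rw [mkG_sum _ _ (fun i => contDiff_const.mul (contDiff_dir hf (w i))), mkG_eq_iff]
  refine Eventually.of_forall fun x => ?_
  simp

lemma jac_eq {f : Eucl n → ℝ} (hf : ContDiff ℝ (⊤ : ℕ∞) f) (B : Eucl n ≃L[ℝ] Eucl n) :
    jacobianIdeal n f = Ideal.span (range fun i => Dm f hf (B.symm (EuclideanSpace.single i 1))) := by
  have h1 : jacobianIdeal n f = Ideal.span (range fun i => Dm f hf (EuclideanSpace.single i 1)) := by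
    unfold jacobianIdeal
    congr 1
    ext γ
    constructor
    · rintro ⟨i, hi⟩
      exact ⟨i, Subtype.ext hi.symm⟩
    · rintro ⟨i, rfl⟩
      exact ⟨i, rfl⟩
  rw [h1]
  apply le_antisymm
  · rw [Ideal.span_le]
    rintro _ ⟨i, rfl⟩
    have : (EuclideanSpace.single i 1 : Eucl n) =
        ∑ j, (B (EuclideanSpace.single i 1)) j • B.symm (EuclideanSpace.single j 1) := by
      conv_lhs => rw [← B.symm_apply_apply (EuclideanSpace.single i 1),
        basis_sum (B (EuclideanSpace.single i 1))]
      rw [map_sum]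
      simp only [map_smul]
    change Dm f hf (EuclideanSpace.single i 1) ∈ _
    rw [this]
    exact Dm_mem hf _ _
  · rw [Ideal.span_le]
    rintro _ ⟨i, rfl⟩
    change Dm f hf (B.symm (EuclideanSpace.single i 1)) ∈ _
    rw [basis_sum (B.symm (EuclideanSpace.single i 1))]
    exact Dm_mem hf (fun j => EuclideanSpace.single j 1) _

lemma Dm_eval (Q : MvPolynomial (Fin n) ℝ) (B : Eucl n ≃L[ℝ] Eucl n) (i : Fin n) :
    Dm _ (contDiff_eval Q B) (B.symm (EuclideanSpace.single i 1)) = aeval (yB B) (pderiv i Q) := by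
  rw [aeval_yB, Dm, mkG_eq_iff]
  exact Eventually.of_forall fun x => fderiv_eval Q B i x

lemma leading (B : Eucl n ≃L[ℝ] Eucl n) (g : Eucl n → ℝ) (hg : ContDiff ℝ (⊤ : ℕ∞) g) (m : ℕ)
    (γ : (Fin n → ℝ) → ℝ → Eucl n)
    (hγ : ∀ v, Tendsto (fun t : ℝ => t⁻¹ • B (γ v t)) (𝓝[>] 0) (𝓝 (WithLp.toLp 2 v)))
    (L : (Fin n → ℝ) → ℝ)
    (hL : ∀ v, Tendsto (fun t : ℝ => (t ^ m)⁻¹ * g (γ v t)) (𝓝[>] 0) (𝓝 (L v))) :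
    ∃ Q : MvPolynomial (Fin n) ℝ, Q.IsHomogeneous m ∧
      mkG g hg - aeval (yB B) Q ∈ mI n ^ (m+1) ∧ ∀ v, L v = eval v Q := by
  obtain ⟨A, hA⟩ := (coord B).approx (mkG g hg) (m+1)
  have hA0 := hA
  rw [aeval_yB, mkG_sub] at hA0
  have hO := growth _ _ _ hA0
  have ht0 : Tendsto (fun t : ℝ => t) (𝓝[>] 0) (𝓝 0) := nhdsWithin_le_nhds
  have htpow : ∀ e : ℕ, 0 < e → Tendsto (fun t : ℝ => t ^ e) (𝓝[>] 0) (𝓝 0) := by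
    intro e he
    simpa [he.ne'] using ht0.pow e
  have hpos : ∀ᶠ t : ℝ in 𝓝[>] 0, 0 < t := self_mem_nhdsWithin
  have hγeq : ∀ v, ∀ t : ℝ, 0 < t → γ v t = t • B.symm (t⁻¹ • B (γ v t)) := by
    intro v t ht
    rw [map_smul, smul_smul, mul_inv_cancel₀ ht.ne', one_smul, B.symm_apply_apply]
  have hu : ∀ v, Tendsto (fun t : ℝ => B.symm (t⁻¹ • B (γ v t))) (𝓝[>] 0)
      (𝓝 (B.symm (WithLp.toLp 2 v))) := fun v => (B.symm.continuous.tendsto _).comp (hγ v)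
  have hγ0 : ∀ v, Tendsto (γ v) (𝓝[>] 0) (𝓝 0) := by
    intro v
    have := ht0.smul (hu v)
    rw [zero_smul] at this
    refine this.congr' ?_
    filter_upwards [hpos] with t ht
    exact (hγeq v t ht).symm
  have claim : ∀ j ≤ m, (∀ i < j, homogeneousComponent i A = 0) → ∀ v,
      Tendsto (fun t : ℝ => (t ^ j)⁻¹ * g (γ v t)) (𝓝[>] 0)
        (𝓝 (eval v (homogeneousComponent j A))) := by
    intro j hj hz v
    have hr : Tendsto (fun t : ℝ => (t ^ j)⁻¹ * (g (γ v t) - eval (fun i => B (γ v t) i) A))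
        (𝓝[>] 0) (𝓝 0) := by
      have h1 := hO.comp_tendsto (hγ0 v)
      have h2 : Tendsto (fun t : ℝ => (t ^ j)⁻¹ * ‖γ v t‖ ^ (m+1)) (𝓝[>] 0) (𝓝 0) := by
        have := (htpow (m+1-j) (by omega)).mul ((hu v).norm.pow (m+1))
        rw [zero_mul] at this
        refine this.congr' ?_
        filter_upwards [hpos] with t ht
        have hn : ‖γ v t‖ = t * ‖B.symm (t⁻¹ • B (γ v t))‖ := by
          conv_lhs => rw [hγeq v t ht]
          rw [norm_smul, Real.norm_of_nonneg ht.le]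
        rw [hn, mul_pow, ← mul_assoc]
        congr 1
        rw [eq_comm, inv_mul_eq_iff_eq_mul₀ (pow_ne_zero _ ht.ne'), ← pow_add]
        congr 1
        omega
      have h3 := (isBigO_refl (fun t : ℝ => (t ^ j)⁻¹) (𝓝[>] 0)).mul h1
      exact h3.trans_tendsto h2
    have hterm : ∀ i, Tendsto (fun t : ℝ => (t ^ j)⁻¹ * eval (fun i => B (γ v t) i)
        (homogeneousComponent i A)) (𝓝[>] 0)
        (𝓝 (if i = j then eval v (homogeneousComponent i A) else 0)) := by
      intro i
      have hc : Tendsto (fun t : ℝ => eval (fun l => (t⁻¹ • B (γ v t)) l)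
          (homogeneousComponent i A)) (𝓝[>] 0) (𝓝 (eval v (homogeneousComponent i A))) := by
        have h1 := (contDiff_eval (homogeneousComponent i A)
          (ContinuousLinearEquiv.refl ℝ (Eucl n))).continuous.tendsto (WithLp.toLp 2 v)
        exact h1.comp (hγ v)
      have he : ∀ t : ℝ, 0 < t → eval (fun l => B (γ v t) l) (homogeneousComponent i A) =
          t ^ i * eval (fun l => (t⁻¹ • B (γ v t)) l) (homogeneousComponent i A) := by
        intro t ht
        rw [← eval_smul_homog (homogeneousComponent_isHomogeneous i A)]
        congr 2
        funext l
        simp [ht.ne']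
      rcases lt_trichotomy i j with h | h | h
      · rw [hz i h, if_neg h.ne]
        simp
      · subst h
        rw [if_pos rfl]
        refine hc.congr' ?_
        filter_upwards [hpos] with t ht
        rw [he t ht, inv_mul_cancel_left₀ (pow_ne_zero _ ht.ne')]
      · rw [if_neg h.ne']
        have := (htpow (i-j) (by omega)).mul hc
        rw [zero_mul] at this
        refine this.congr' ?_
        filter_upwards [hpos] with t ht
        rw [he t ht, ← mul_assoc]
        congr 1
        rw [eq_comm, inv_mul_eq_iff_eq_mul₀ (pow_ne_zero _ ht.ne'), ← pow_add]
        congr 1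
        omega
    have hs := hr.add (tendsto_finsetSum (Finset.range (A.totalDegree + 1)) fun i _ => hterm i)
    have e1 : (0:ℝ) + ∑ i ∈ Finset.range (A.totalDegree + 1),
        (if i = j then eval v (homogeneousComponent i A) else 0) =
        eval v (homogeneousComponent j A) := by
      rw [zero_add, Finset.sum_ite_eq']
      split_ifs with h
      · rfl
      · rw [homogeneousComponent_eq_zero _ _ (by simpa using h), map_zero]
    rw [e1] at hs
    refine hs.congr fun t => ?_
    rw [← Finset.mul_sum, ← map_sum, sum_homogeneousComponent]
    ring
  have hlow : ∀ j < m, homogeneousComponent j A = 0 := by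
    intro j
    induction j using Nat.strong_induction_on with
    | _ j ih =>
      intro hj
      apply MvPolynomial.funext
      intro v
      rw [map_zero]
      have h1 := claim j hj.le (fun i hi => ih i hi (hi.trans hj)) v
      have h2 := (htpow (m-j) (by omega)).mul (hL v)
      rw [zero_mul] at h2
      refine tendsto_nhds_unique h1 (h2.congr' ?_)
      filter_upwards [hpos] with t ht
      rw [← mul_assoc]
      congr 1
      rw [eq_comm, inv_eq_iff_eq_inv, mul_inv, inv_inv, eq_comm,
        inv_mul_eq_iff_eq_mul₀ (pow_ne_zero _ ht.ne'), ← pow_add]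
      congr 1
      omega
  refine ⟨homogeneousComponent m A, homogeneousComponent_isHomogeneous m A, ?_, fun v =>
    tendsto_nhds_unique (hL v) (claim m le_rfl hlow v)⟩
  have h2 : aeval (yB B) A - aeval (yB B) (homogeneousComponent m A) ∈ mI n ^ (m+1) := by
    have h3 : A - homogeneousComponent m A = ∑ i ∈ Finset.range (A.totalDegree + 1),
        (if i = m then 0 else homogeneousComponent i A) := by
      rw [sub_eq_iff_eq_add]
      conv_lhs => rw [← sum_homogeneousComponent A]
      have : homogeneousComponent m A = ∑ i ∈ Finset.range (A.totalDegree + 1),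
        (if i = m then homogeneousComponent i A else 0) := by
        rw [Finset.sum_ite_eq']
        split_ifs with h
        · rfl
        · rw [homogeneousComponent_eq_zero _ _ (by simpa using h)]
      conv_rhs => rw [this]
      rw [← Finset.sum_add_distrib]
      refine Finset.sum_congr rfl fun i _ => ?_
      split_ifs <;> simp
    rw [← map_sub, h3, map_sum]
    refine Ideal.sum_mem _ fun i _ => ?_
    rcases lt_trichotomy i m with h | h | h
    · rw [if_neg h.ne, hlow i h, map_zero]; exact zero_mem _
    · rw [if_pos h, map_zero]; exact zero_mem _
    · rw [if_neg h.ne']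
      exact Ideal.pow_le_pow_right (by omega)
        ((coord B).aeval_mem (homogeneousComponent_isHomogeneous i A))
  have := add_mem hA h2
  rwa [sub_add_sub_cancel] at this

end final
end MilnorAux

namespace MilnorAux
open MvPolynomial

section final2
variable {n : ℕ}

lemma inPart_eq (f : Eucl n → ℝ) (hf : ContDiff ℝ (⊤ : ℕ∞) f) (m : ℕ)
    (Q : MvPolynomial (Fin n) ℝ) (hQ : Q.IsHomogeneous m)
    (h : mkG f hf - aeval (yB (ContinuousLinearEquiv.refl ℝ (Eucl n))) Q ∈ mI n ^ (m+1)) :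
    inPart f m = fun x : Eucl n => eval (fun i => (ContinuousLinearEquiv.refl ℝ (Eucl n)) x i) Q := by
  funext v
  rw [aeval_yB, mkG_sub] at h
  have hO := growth _ _ _ h
  let l : ℝ →L[ℝ] Eucl n := (ContinuousLinearMap.id ℝ ℝ).smulRight v
  have hl : ∀ t, l t = t • v := fun t => by simp [l]
  set c : ℝ := eval (fun i => (ContinuousLinearEquiv.refl ℝ (Eucl n)) v i) Q with hc
  have hlt : Tendsto l (𝓝 0) (𝓝 0) := by
    simpa using l.continuous.tendsto 0
  have h1 := hO.comp_tendsto hlt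
  have hfl : ContDiff ℝ (⊤ : ℕ∞) (f ∘ l) := hf.comp l.contDiff
  have hpw : ContDiff ℝ (⊤ : ℕ∞) (fun t : ℝ => c * t ^ m) := contDiff_const.mul (contDiff_id.pow m)
  have h2 : (f ∘ l - fun t : ℝ => c * t ^ m) =O[𝓝 0] fun t : ℝ => t ^ (m+1) := by
    refine (h1.congr_left fun t => ?_).trans
      (IsBigO.of_bound (‖v‖ ^ (m+1)) (Eventually.of_forall fun t => ?_))
    · simp only [Function.comp, Pi.sub_apply]
      congr 1
      have : (fun i => (ContinuousLinearEquiv.refl ℝ (Eucl n)) (l t) i) =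
          t • (fun i => (ContinuousLinearEquiv.refl ℝ (Eucl n)) v i) := by
        funext i; simp [hl]
      rw [this, eval_smul_homog hQ, mul_comm]
    · simp [hl, norm_smul, mul_pow, mul_comm]
  have h3 : iteratedDeriv m (f ∘ l - fun t : ℝ => c * t ^ m) 0 = 0 := iter_zero_of_isBigO _ (hfl.sub hpw) m h2 m le_rfl
  have hle : ((m : ℕ) : WithTop ℕ∞) ≤ ((⊤ : ℕ∞) : WithTop ℕ∞) := by exact_mod_cast le_top
  rw [iteratedDeriv_sub (hfl.of_le hle).contDiffAt (hpw.of_le hle).contDiffAt,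
    iteratedDeriv_const_mul_field, iteratedDeriv_fun_pow_zero, iteratedDeriv_eq_iteratedFDeriv,
    l.iteratedFDeriv_comp_right hf 0 hle] at h3
  simp [hl] at h3
  rw [inPart, sub_eq_zero.1 h3, smul_eq_mul, mul_comm c, inv_mul_cancel_left₀]
  positivity

lemma curve_lim (φ : Eucl n → Eucl n) (φ' : Eucl n →L[ℝ] Eucl n) (h0 : φ 0 = 0)
    (h : HasFDerivAt φ φ' 0) (v : Eucl n) :
    Tendsto (fun t : ℝ => t⁻¹ • φ (t • v)) (𝓝[>] 0) (𝓝 (φ' v)) := by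
  have h2 : HasDerivAt (fun t : ℝ => t • v) v 0 := by
    simpa using (hasDerivAt_id (0:ℝ)).smul_const v
  have h1 : HasDerivAt (fun t : ℝ => φ (t • v)) (φ' v) 0 := by
    have h' : HasFDerivAt φ φ' ((0:ℝ) • v) := by simpa using h
    exact h'.comp_hasDerivAt (0:ℝ) h2
  rw [hasDerivAt_iff_tendsto_slope_zero] at h1
  have hsub : Ioi (0:ℝ) ⊆ {0}ᶜ := fun t (ht : 0 < t) => ht.ne'
  have h3 := h1.mono_left (nhdsWithin_mono (0:ℝ) hsub)
  simpa [h0] using h3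

lemma isHomogeneous_pderiv {d : ℕ} {Q : MvPolynomial (Fin n) ℝ} (hQ : Q.IsHomogeneous (d+1))
    (i : Fin n) : (pderiv i Q).IsHomogeneous d := by
  simpa using hQ.pderiv (i := i)

end final2
end MilnorAux

open MilnorAux MvPolynomial

/-- if `f` is a `C^∞` germ of finite order whose initial part has an
algebraically isolated singularity at the origin and `f`, `g` are `R`-`C^1` equivalent,
then `μ(f) = μ(g)`. -/
theorem milnor_invariant_of_C1_equiv {n : ℕ} (f g : Eucl n → ℝ)
    (hf : ContDiff ℝ (⊤ : ℕ∞) f) (hg : ContDiff ℝ (⊤ : ℕ∞) g)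
    (hf0 : f 0 = 0) (hg0 : g 0 = 0)
    (m : ℕ) (hord : HasOrderAt f 0 (m : ℝ))
    (hiso : milnor n (inPart f m) < Cardinal.aleph0)
    (hequiv : ∃ φ : Eucl n → Eucl n, IsCkDiffeoGermAt 1 φ ∧
      ∀ᶠ x in 𝓝 (0 : Eucl n), f x = g (φ x)) :
    milnor n f = milnor n g := by
  obtain ⟨φ, ⟨hφ0, U, V, hU, hV, h0U, h0V, -, hφ, ψ, hψ, hψφ, hφψ⟩, hfg⟩ := hequiv
  have hψ0 : ψ 0 = 0 := by
    have := hψφ 0 h0U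
    rwa [hφ0] at this
  have hφd : HasFDerivAt φ (fderiv ℝ φ 0) 0 :=
    ((hφ.contDiffAt (hU.mem_nhds h0U)).differentiableAt (by simp)).hasFDerivAt
  have hψd : HasFDerivAt ψ (fderiv ℝ ψ 0) 0 :=
    ((hψ.contDiffAt (hV.mem_nhds h0V)).differentiableAt (by simp)).hasFDerivAt
  have c1 : (fderiv ℝ ψ 0).comp (fderiv ℝ φ 0) = ContinuousLinearMap.id ℝ (Eucl n) := by
    have h1 : HasFDerivAt (ψ ∘ φ) ((fderiv ℝ ψ 0).comp (fderiv ℝ φ 0)) 0 :=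
      HasFDerivAt.comp 0 (by rw [hφ0]; exact hψd) hφd
    refine h1.unique ((hasFDerivAt_id (0 : Eucl n)).congr_of_eventuallyEq ?_)
    filter_upwards [hU.mem_nhds h0U] with x hx
    exact hψφ x hx
  have c2 : (fderiv ℝ φ 0).comp (fderiv ℝ ψ 0) = ContinuousLinearMap.id ℝ (Eucl n) := by
    have h1 : HasFDerivAt (φ ∘ ψ) ((fderiv ℝ φ 0).comp (fderiv ℝ ψ 0)) 0 :=
      HasFDerivAt.comp 0 (by rw [hψ0]; exact hφd) hψd
    refine h1.unique ((hasFDerivAt_id (0 : Eucl n)).congr_of_eventuallyEq ?_)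
    filter_upwards [hV.mem_nhds h0V] with x hx
    exact hφψ x hx
  let B : Eucl n ≃L[ℝ] Eucl n := ContinuousLinearEquiv.equivOfInverse (fderiv ℝ ψ 0) (fderiv ℝ φ 0)
    (fun x => by simpa using congrArg (fun T => T x) c2)
    (fun x => by simpa using congrArg (fun T => T x) c1)
  have hBx : ∀ x, B x = fderiv ℝ ψ 0 x := fun x => rfl
  have hlim : ∀ v : Eucl n, Tendsto (fun t : ℝ => t • v) (𝓝[>] 0) (𝓝 0) := by
    intro v
    have : Continuous (fun t : ℝ => t • v) := by fun_prop
    have h2 := this.tendsto 0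
    rw [zero_smul] at h2
    exact h2.mono_left nhdsWithin_le_nhds
  -- limits along rays
  have hex : ∀ v : Fin n → ℝ, ∃ L : ℝ,
      Tendsto (fun t : ℝ => (t ^ m)⁻¹ * f (t • (WithLp.toLp 2 v : Eucl n))) (𝓝[>] 0) (𝓝 L) := by
    intro v
    by_cases hv : (WithLp.toLp 2 v : Eucl n) = 0
    · refine ⟨0, ?_⟩
      rw [hv]
      simp [hf0]
    · obtain ⟨L, hL⟩ := hord.1 _ hv
      refine ⟨L, ?_⟩
      simpa using hL
  choose L hL using hex
  obtain ⟨Q, hQ, hfQ, hLQ⟩ := leading (ContinuousLinearEquiv.refl ℝ (Eucl n)) f hf m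
    (fun v t => t • (WithLp.toLp 2 v : Eucl n)) (by
      intro v
      refine tendsto_const_nhds.congr' ?_
      filter_upwards [self_mem_nhdsWithin] with t ht
      have ht' : t ≠ 0 := ne_of_gt ht
      simp [smul_smul, ht']) L hL
  obtain ⟨Q', hQ', hgQ, hLQ'⟩ := leading B g hg m
    (fun v t => φ (t • (WithLp.toLp 2 v : Eucl n))) (by
      intro v
      have h1 := curve_lim φ _ hφ0 hφd (WithLp.toLp 2 v : Eucl n)
      have h2 := (B.continuous.tendsto _).comp h1
      have h3 : B (fderiv ℝ φ 0 (WithLp.toLp 2 v : Eucl n)) = WithLp.toLp 2 v := by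
        rw [hBx]
        simpa using congrArg (fun T => T (WithLp.toLp 2 v : Eucl n)) c1
      rw [h3] at h2
      refine h2.congr fun t => ?_
      simp only [Function.comp, map_smul]) L (by
      intro v
      refine (hL v).congr' ?_
      filter_upwards [(hlim (WithLp.toLp 2 v : Eucl n)).eventually hfg] with t ht
      rw [ht])
  have hQQ : Q' = Q := MvPolynomial.funext fun v => by rw [← hLQ, ← hLQ']
  subst hQQ
  -- the order is positive
  obtain ⟨d, rfl⟩ : ∃ d, m = d + 1 := by
    cases m with
    | succ d => exact ⟨d, rfl⟩
    | zero =>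
      exfalso
      obtain ⟨v, -, M, hM, hT⟩ := hord.2
      have h1 : Tendsto (fun t : ℝ => f (t • v)) (𝓝[>] 0) (𝓝 (f 0)) :=
        (hf.continuous.tendsto 0).comp (hlim v)
      rw [hf0] at h1
      refine hM (tendsto_nhds_unique (hT.congr fun t => ?_) h1)
      simp
  have hP : ∀ i, (pderiv i Q').IsHomogeneous d := isHomogeneous_pderiv hQ
  have hin := inPart_eq f hf (d+1) Q' hQ hfQ
  have hJ : jacobianIdeal n (inPart f (d+1)) = Ideal.span (range fun i =>
      aeval (yB (ContinuousLinearEquiv.refl ℝ (Eucl n))) (pderiv i Q')) := by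
    rw [hin, jac_eq (contDiff_eval Q' _) (ContinuousLinearEquiv.refl ℝ (Eucl n))]
    simp only [Dm_eval]
  have hfin : FiniteDimensional ℝ (smoothGerms n ⧸ Ideal.span (range fun i =>
      aeval (yB (ContinuousLinearEquiv.refl ℝ (Eucl n))) (pderiv i Q'))) := by
    rw [milnor, hJ] at hiso
    exact Module.rank_lt_aleph0_iff.1 hiso
  obtain ⟨N, hN⟩ := (coord (ContinuousLinearEquiv.refl ℝ (Eucl n))).exists_N
    (fun i => pderiv i Q') hP hfin
  obtain ⟨C, hC1, hC2, hC⟩ := exists_B (fun i => pderiv i Q') hP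
  have main : ∀ (h : Eucl n → ℝ) (hh : ContDiff ℝ (⊤ : ℕ∞) h) (B : Eucl n ≃L[ℝ] Eucl n),
      mkG h hh - aeval (yB B) Q' ∈ mI n ^ (d+1+1) → milnor n h = Module.rank ℝ C := by
    intro h hh B hhQ
    rw [milnor, jac_eq hh B]
    refine (coord B).rank_eq hP (fun i => ?_) hN C hC1 hC2 hC
    rw [← Dm_eval]
    rw [aeval_yB] at hhQ
    exact Dm_sub_mem _ _ _ _ hhQ
  rw [main f hf _ hfQ, main g hg B hgQ]
end
end
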